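/- arXiv:1301.1735 — 3 statements merged into one kernel-verified Lean document; each statement's English description precedes it below -/
import Mathlib

section
/- (27/4) ∫_0^1 t(1−t) [K(√(1−t))]² K(√t) / (1 − t + t²)^{7/4} dt = [Γ(1/4)]⁴ / (8 √(2√3)). -/
open Real MeasureTheory intervalIntegral

/-- Complete elliptic integral of the first kind. -/
noncomputable def ellipticK (k : ℝ) : ℝ :=
  ∫ θ in (0:ℝ)..(π/2), 1 / Real.sqrt (1 - k^2 * Real.sin θ ^ 2)

/-!
Write `Y_ν(s) = P_ν(1 - 2s)` for the Legendre function, so that `K(√s) = (π / 2) Y_{-1/2}(s)`. A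
cubic transformation expresses `Y_{-1/2}(t)` as an algebraic multiple of `Y_{-1/6}(s)` for an
increasing algebraic substitution `s = s(t)` of the unit interval satisfying `s(1 - t) = 1 - s(t)`.
This turns the integral of the theorem into a multiple of `I(-1/6)`, where `I(ν)` is the integral of
`Y_ν(s)² Y_ν(1 - s)` over the unit interval.

To evaluate `I`, note that `Y_ν = Y_{-1-ν}` and that a creative telescoping certificate relates
`I(ν + 1)` to `I(ν - 1)` by a rational factor. Multiplied by a suitable Gamma factor, `I` is
therefore invariant under `ν ↦ -1 - ν` and `ν ↦ 1 - ν`, so it extends from the strip of convergence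
to an entire function of period two. This function grows at most polynomially, hence is constant by
Liouville's theorem. At `ν = -1/6` Gauss's multiplication formula reduces the Gamma factor to powers
of `Γ(1/4)`.
-/

open Set Filter Topology

section PowerSum

variable {E F : Type*} [NormedAddCommGroup E] [NormedSpace ℝ E] [CompleteSpace E]
  [NormedAddCommGroup F] [NormedSpace ℝ F]

/-- The sum of the power series with coefficients `a` in a real Banach space at a real point.
Real scalars act on the coefficients, so that real and complex series share one development. -/
noncomputable def powerSum (a : ℕ → F) (s : ℝ) : F := ∑' j, s ^ j • a j

lemma norm_pow_smul_le {a : F} {b s : ℝ} (hab : ‖a‖ ≤ b) (h0 : 0 ≤ s) (j : ℕ) :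
    ‖s ^ j • a‖ ≤ s ^ j • b := by
  rw [norm_smul, norm_pow, Real.norm_of_nonneg h0, smul_eq_mul]
  gcongr

lemma summable_pow_smul {a : ℕ → E} {C s : ℝ} (ha : ∀ j, ‖a j‖ ≤ C) (h0 : 0 ≤ s) (h1 : s < 1) :
    Summable fun j => s ^ j • a j :=
  .of_norm_bounded ((summable_geometric_of_lt_one h0 h1).mul_right C)
    fun j => norm_pow_smul_le (ha j) h0 j

@[simp]
lemma powerSum_zero_right (a : ℕ → F) : powerSum a 0 = a 0 := by
  rw [powerSum, tsum_eq_single 0 fun j hj => by simp [hj]]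
  simp

lemma norm_powerSum_le {a : ℕ → F} {b : ℕ → ℝ} {C s : ℝ} (hab : ∀ j, ‖a j‖ ≤ b j)
    (hb : ∀ j, ‖b j‖ ≤ C) (h0 : 0 ≤ s) (h1 : s < 1) : ‖powerSum a s‖ ≤ powerSum b s :=
  tsum_of_norm_bounded (summable_pow_smul hb h0 h1).hasSum
    fun j => norm_pow_smul_le (hab j) h0 j

lemma norm_powerSum_le_div {a : ℕ → F} {C s : ℝ} (ha : ∀ j, ‖a j‖ ≤ C) (h0 : 0 ≤ s)
    (h1 : s < 1) : ‖powerSum a s‖ ≤ C / (1 - s) := by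
  refine (norm_powerSum_le ha (fun _ => le_rfl) h0 h1).trans_eq ?_
  simp only [powerSum, smul_eq_mul]
  rw [tsum_mul_right, tsum_geometric_of_lt_one h0 h1, inv_mul_eq_div]

lemma powerSum_eq_add_smul_succ {a : ℕ → E} {C s : ℝ} (ha : ∀ j, ‖a j‖ ≤ C) (h0 : 0 ≤ s)
    (h1 : s < 1) : powerSum a s = a 0 + s • powerSum (fun j => a (j + 1)) s := by
  have hs := summable_pow_smul (fun j => ha (j + 1)) h0 h1
  rw [powerSum, (summable_pow_smul ha h0 h1).tsum_eq_zero_add, powerSum, ← hs.tsum_const_smul]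
  simp [pow_succ', mul_smul]

lemma map_powerSum (T : E →L[ℝ] F) {a : ℕ → E} {C s : ℝ} (ha : ∀ j, ‖a j‖ ≤ C) (h0 : 0 ≤ s)
    (h1 : s < 1) : T (powerSum a s) = powerSum (fun j => T (a j)) s := by
  rw [powerSum, T.map_tsum (summable_pow_smul ha h0 h1)]
  simp [powerSum]

lemma powerSum_add {a b : ℕ → E} {A B s : ℝ} (ha : ∀ j, ‖a j‖ ≤ A) (hb : ∀ j, ‖b j‖ ≤ B)
    (h0 : 0 ≤ s) (h1 : s < 1) :
    powerSum (fun j => a j + b j) s = powerSum a s + powerSum b s := by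
  simp only [powerSum, smul_add]
  exact (summable_pow_smul ha h0 h1).tsum_add (summable_pow_smul hb h0 h1)

lemma hasDerivAt_powerSum {a : ℕ → E} {C s : ℝ} (ha : ∀ j, ‖a j‖ ≤ C) (h0 : 0 ≤ s)
    (h1 : s < 1) :
    HasDerivAt (powerSum a) (powerSum (fun j => ((j : ℝ) + 1) • a (j + 1)) s) s := by
  obtain ⟨r, hsr, hr1⟩ := exists_between h1
  have hr0 : 0 < r := h0.trans_lt hsr
  have summable_bound : Summable fun n : ℕ => n * r ^ (n - 1) * C := by
    refine ((summable_nat_add_iff 1).1 ?_).mul_right C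
    have hr : ‖r‖ < 1 := by rwa [Real.norm_of_nonneg hr0.le]
    refine ((summable_pow_mul_geometric_of_norm_lt_one 1 hr).add
      (summable_geometric_of_lt_one hr0.le hr1)).congr fun n => ?_
    push_cast
    ring
  have deriv_le (n : ℕ) (y : ℝ) (hy : y ∈ Ioo (-r) r) :
      ‖((n : ℝ) * y ^ (n - 1)) • a n‖ ≤ n * r ^ (n - 1) * C := by
    rw [norm_smul, norm_mul, norm_pow, Real.norm_natCast, Real.norm_eq_abs]
    have hyr : |y| ≤ r := abs_le.2 ⟨hy.1.le, hy.2.le⟩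
    gcongr
    exact ha n
  have hs : s ∈ Ioo (-r) r := ⟨by linarith, hsr⟩
  have hderiv := hasDerivAt_tsum_of_isPreconnected summable_bound isOpen_Ioo isPreconnected_Ioo
    (fun n y _ => (hasDerivAt_pow n y).smul_const (a n)) deriv_le hs (summable_pow_smul ha h0 h1) hs
  have hsum : Summable fun n : ℕ => ((n : ℝ) * s ^ (n - 1)) • a n :=
    .of_norm_bounded summable_bound fun n => deriv_le n s hs
  rw [hsum.tsum_eq_zero_add] at hderiv
  refine hderiv.congr_deriv ?_
  simp [powerSum, smul_smul, mul_comm]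

lemma continuousOn_powerSum {a : ℕ → E} {C : ℝ} (ha : ∀ j, ‖a j‖ ≤ C) :
    ContinuousOn (powerSum a) (Ico 0 1) :=
  fun _ hs => (hasDerivAt_powerSum ha hs.1 hs.2).continuousAt.continuousWithinAt

lemma powerSum_const_mul {𝕜 : Type*} [RCLike 𝕜] (c : 𝕜) (a : ℕ → 𝕜) (s : ℝ) :
    powerSum (fun j => c * a j) s = c * powerSum a s := by
  simp only [powerSum, ← mul_smul_comm, tsum_mul_left]

end PowerSum

section Legendre

variable {𝕜 : Type*} [RCLike 𝕜]

/-- The Taylor coefficients at `s = 0` of the Legendre function `P_ν(1 - 2s)`, where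
`l = ν(ν + 1)`. -/
noncomputable def legendreCoeff (l : 𝕜) (j : ℕ) : 𝕜 :=
  ∏ i ∈ Finset.range j, ((i : 𝕜) * (i + 1) - l) / ((i : 𝕜) + 1) ^ 2

/-- The Legendre function `Y(s) = P_ν(1 - 2s)` for `l = ν(ν + 1)`, that is, the solution of
`(s(1 - s)Y')' = -l Y` on `[0, 1)` with `Y(0) = 1`. It depends on `ν` only through `l`. -/
noncomputable def legendreFun (l : 𝕜) (s : ℝ) : 𝕜 := powerSum (legendreCoeff l) s

/-- The Taylor coefficients of `legendreFlux`. -/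
noncomputable def legendreFluxCoeff (l : 𝕜) : ℕ → 𝕜
  | 0 => 0
  | j + 1 => -l * legendreCoeff l j / ((j : 𝕜) + 1)

/-- The flux `s(1 - s)Y'(s)` of the Legendre function `Y = legendreFun l`. -/
noncomputable def legendreFlux (l : 𝕜) (s : ℝ) : 𝕜 := powerSum (legendreFluxCoeff l) s

@[simp]
lemma legendreCoeff_zero (l : 𝕜) : legendreCoeff l 0 = 1 := by simp [legendreCoeff]

lemma legendreCoeff_succ (l : 𝕜) (j : ℕ) :
    legendreCoeff l (j + 1) =
      legendreCoeff l j * (((j : 𝕜) * (j + 1) - l) / ((j : 𝕜) + 1) ^ 2) :=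
  Finset.prod_range_succ ..

lemma norm_natCast_succ (𝕜 : Type*) [RCLike 𝕜] (j : ℕ) : ‖(j : 𝕜) + 1‖ = (j : ℝ) + 1 := by
  exact_mod_cast RCLike.norm_natCast (K := 𝕜) (j + 1)

lemma natCast_succ_smul (j : ℕ) (a : 𝕜) : ((j : ℝ) + 1) • a = ((j : 𝕜) + 1) * a := by
  simp [RCLike.real_smul_eq_coe_mul]

lemma succ_mul_norm_legendreCoeff_succ_le_mul_exp (l : 𝕜) (j : ℕ) :
    ((j : ℝ) + 1) * ‖legendreCoeff l (j + 1)‖ ≤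
      ‖l‖ * exp (‖l‖ * (1 - 1 / ((j : ℝ) + 1))) := by
  induction j with
  | zero => simp [legendreCoeff_succ]
  | succ j ih =>
    have norm_factor : ‖((j + 1 : ℕ) : 𝕜) * (((j + 1 : ℕ) : 𝕜) + 1) - l‖ ≤
        ((j : ℝ) + 1) * (j + 2) + ‖l‖ := by
      refine (norm_sub_le _ _).trans_eq ?_
      rw [norm_mul, norm_natCast_succ, RCLike.norm_natCast]
      push_cast
      ring
    rw [legendreCoeff_succ, norm_mul, norm_div, norm_pow, norm_natCast_succ]
    push_cast at norm_factor ⊢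
    calc ((j : ℝ) + 1 + 1) * (‖legendreCoeff l (j + 1)‖ *
          (‖((j : 𝕜) + 1) * ((j : 𝕜) + 1 + 1) - l‖ / ((j : ℝ) + 1 + 1) ^ 2))
        ≤ ((j : ℝ) + 1 + 1) * (‖legendreCoeff l (j + 1)‖ *
          ((((j : ℝ) + 1) * (j + 2) + ‖l‖) / ((j : ℝ) + 1 + 1) ^ 2)) := by gcongr
      _ = (((j : ℝ) + 1) * ‖legendreCoeff l (j + 1)‖) *
          (‖l‖ / ((j + 1) * (j + 2)) + 1) := by field_simp; ring
      _ ≤ ‖l‖ * exp (‖l‖ * (1 - 1 / ((j : ℝ) + 1))) * exp (‖l‖ / ((j + 1) * (j + 2))) := by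
          gcongr
          exact add_one_le_exp _
      _ = ‖l‖ * exp (‖l‖ * (1 - 1 / ((j : ℝ) + 1 + 1))) := by
          rw [mul_assoc, ← exp_add]
          congr 2
          field_simp
          ring

lemma succ_mul_norm_legendreCoeff_succ_le (l : 𝕜) (j : ℕ) :
    ((j : ℝ) + 1) * ‖legendreCoeff l (j + 1)‖ ≤ ‖l‖ * exp ‖l‖ := by
  refine (succ_mul_norm_legendreCoeff_succ_le_mul_exp l j).trans ?_
  have : 1 - 1 / ((j : ℝ) + 1) ≤ 1 := sub_le_self _ (by positivity)
  gcongr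
  exact mul_le_of_le_one_right (norm_nonneg l) this

lemma norm_legendreCoeff_le (l : 𝕜) (j : ℕ) : ‖legendreCoeff l j‖ ≤ 1 + ‖l‖ * exp ‖l‖ := by
  cases j with
  | zero => simpa using by positivity
  | succ j =>
    have hle := succ_mul_norm_legendreCoeff_succ_le l j
    have : ‖legendreCoeff l (j + 1)‖ ≤ (j + 1) * ‖legendreCoeff l (j + 1)‖ :=
      le_mul_of_one_le_left (norm_nonneg _) (by simp)
    linarith

lemma norm_natCast_smul_legendreCoeff_le (l : 𝕜) (j : ℕ) :
    ‖(j : ℝ) • legendreCoeff l j‖ ≤ ‖l‖ * exp ‖l‖ := by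
  cases j with
  | zero => simpa using by positivity
  | succ j =>
    rw [norm_smul, Real.norm_natCast]
    exact_mod_cast succ_mul_norm_legendreCoeff_succ_le l j

lemma norm_legendreFluxCoeff_le (l : 𝕜) (j : ℕ) :
    ‖legendreFluxCoeff l j‖ ≤ ‖l‖ * (1 + ‖l‖ * exp ‖l‖) := by
  cases j with
  | zero => simpa [legendreFluxCoeff] using by positivity
  | succ j =>
    rw [legendreFluxCoeff, norm_div, norm_mul, norm_neg, norm_natCast_succ]
    refine (div_le_self (by positivity) (by simp)).trans ?_
    gcongr
    exact norm_legendreCoeff_le l j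

lemma legendreFluxCoeff_succ_eq_sub (l : 𝕜) (j : ℕ) :
    legendreFluxCoeff l (j + 1) =
      ((j + 1 : ℕ) : ℝ) • legendreCoeff l (j + 1) - (j : ℝ) • legendreCoeff l j := by
  have : (j : 𝕜) + 1 ≠ 0 := Nat.cast_add_one_ne_zero j
  simp only [legendreFluxCoeff, legendreCoeff_succ, RCLike.real_smul_eq_coe_mul,
    RCLike.ofReal_natCast]
  push_cast
  field_simp
  ring

@[simp]
lemma legendreFun_apply_zero (l : 𝕜) : legendreFun l 0 = 1 := by simp [legendreFun]

@[simp]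
lemma legendreFlux_apply_zero (l : 𝕜) : legendreFlux l 0 = 0 := by
  simp [legendreFlux, legendreFluxCoeff]

lemma legendreFlux_eq_smul (l : 𝕜) {s : ℝ} (h0 : 0 ≤ s) (h1 : s < 1) :
    legendreFlux l s =
      (s * (1 - s)) • powerSum (fun j => ((j : ℝ) + 1) • legendreCoeff l (j + 1)) s := by
  have hbound := norm_natCast_smul_legendreCoeff_le l
  have hshift := powerSum_eq_add_smul_succ hbound h0 h1
  have hadd := powerSum_add (fun j => hbound (j + 1))
    (fun j => (norm_neg ((j : ℝ) • legendreCoeff l j)).trans_le (hbound j)) h0 h1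
  have hneg : powerSum (fun j : ℕ => -((j : ℝ) • legendreCoeff l j)) s =
      -powerSum (fun j : ℕ => (j : ℝ) • legendreCoeff l j) s := by
    simp [powerSum, tsum_neg]
  rw [legendreFlux, powerSum_eq_add_smul_succ (norm_legendreFluxCoeff_le l) h0 h1]
  simp only [legendreFluxCoeff_succ_eq_sub, sub_eq_add_neg]
  rw [hadd, hneg, hshift]
  simp only [legendreFluxCoeff, Nat.cast_zero, zero_smul, zero_add, Nat.cast_add_one]
  module

lemma hasDerivAt_legendreFun_powerSum (l : 𝕜) {s : ℝ} (h0 : 0 ≤ s) (h1 : s < 1) :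
    HasDerivAt (legendreFun l)
      (powerSum (fun j => ((j : ℝ) + 1) • legendreCoeff l (j + 1)) s) s :=
  hasDerivAt_powerSum (norm_legendreCoeff_le l) h0 h1

lemma hasDerivAt_legendreFun (l : 𝕜) {s : ℝ} (h0 : 0 < s) (h1 : s < 1) :
    HasDerivAt (legendreFun l) ((s * (1 - s))⁻¹ • legendreFlux l s) s := by
  convert hasDerivAt_legendreFun_powerSum l h0.le h1 using 1
  rw [legendreFlux_eq_smul l h0.le h1, inv_smul_smul₀ (mul_pos h0 (sub_pos.2 h1)).ne']

lemma hasDerivAt_legendreFlux (l : 𝕜) {s : ℝ} (h0 : 0 ≤ s) (h1 : s < 1) :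
    HasDerivAt (legendreFlux l) (-l * legendreFun l s) s := by
  refine (hasDerivAt_powerSum (norm_legendreFluxCoeff_le l) h0 h1).congr_deriv ?_
  rw [legendreFun, ← powerSum_const_mul]
  congr 1 with j
  have : (j : 𝕜) + 1 ≠ 0 := Nat.cast_add_one_ne_zero j
  rw [natCast_succ_smul, legendreFluxCoeff]
  field_simp

lemma continuousOn_legendreFun (l : 𝕜) : ContinuousOn (legendreFun l) (Ico 0 1) :=
  continuousOn_powerSum (norm_legendreCoeff_le l)

lemma continuousOn_legendreFlux (l : 𝕜) : ContinuousOn (legendreFlux l) (Ico 0 1) :=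
  continuousOn_powerSum (norm_legendreFluxCoeff_le l)

lemma norm_legendreFlux_le (l : 𝕜) {s : ℝ} (h0 : 0 ≤ s) (h1 : s < 1) :
    ‖legendreFlux l s‖ ≤ ‖l‖ * exp ‖l‖ * s := by
  have hs : 0 < 1 - s := sub_pos.2 h1
  have hle := norm_powerSum_le_div (a := fun j => ((j : ℝ) + 1) • legendreCoeff l (j + 1))
    (fun j => by simpa using norm_natCast_smul_legendreCoeff_le l (j + 1)) h0 h1
  rw [legendreFlux_eq_smul l h0 h1, norm_smul, Real.norm_of_nonneg (mul_nonneg h0 hs.le)]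
  calc s * (1 - s) * _ ≤ s * (1 - s) * (‖l‖ * exp ‖l‖ / (1 - s)) := by gcongr
    _ = ‖l‖ * exp ‖l‖ * s := by field_simp

@[simp]
lemma legendreFun_zero (s : ℝ) : legendreFun (0 : 𝕜) s = 1 := by
  have hcoeff (j : ℕ) (hj : j ≠ 0) : legendreCoeff (0 : 𝕜) j = 0 :=
    Finset.prod_eq_zero (Finset.mem_range.2 hj.bot_lt) (by simp)
  rw [legendreFun, powerSum, tsum_eq_single 0 fun j hj => by simp [hcoeff j hj]]
  simp

lemma norm_legendreCoeff_le_legendreCoeff {l : 𝕜} {c : ℝ} (hl : ‖l‖ ≤ c) (j : ℕ) :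
    ‖legendreCoeff l j‖ ≤ legendreCoeff (-c) j := by
  rw [legendreCoeff, norm_prod]
  refine Finset.prod_le_prod (fun _ _ => norm_nonneg _) fun i _ => ?_
  rw [norm_div, norm_pow, norm_natCast_succ]
  gcongr
  refine (norm_sub_le _ _).trans ?_
  rw [norm_mul, norm_natCast_succ, RCLike.norm_natCast, sub_neg_eq_add]
  gcongr

lemma norm_legendreFun_le {l : 𝕜} {c s : ℝ} (hl : ‖l‖ ≤ c) (h0 : 0 ≤ s) (h1 : s < 1) :
    ‖legendreFun l s‖ ≤ legendreFun (-c) s :=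
  norm_powerSum_le (norm_legendreCoeff_le_legendreCoeff hl) (norm_legendreCoeff_le (-c)) h0 h1

lemma ofReal_legendreFun (l : ℝ) {s : ℝ} (h0 : 0 ≤ s) (h1 : s < 1) :
    ((legendreFun l s : ℝ) : ℂ) = legendreFun (l : ℂ) s := by
  rw [legendreFun, legendreFun, ← Complex.ofRealCLM_apply,
    map_powerSum _ (norm_legendreCoeff_le l) h0 h1]
  congr 1 with j
  simp [legendreCoeff]

lemma one_le_legendreFun {l s : ℝ} (hl : l ≤ 0) (h0 : 0 ≤ s) (h1 : s < 1) :
    1 ≤ legendreFun l s := by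
  simpa using norm_legendreFun_le (l := (0 : ℝ)) (c := -l) (by simpa using hl) h0 h1

lemma legendreFlux_nonneg {l s : ℝ} (hl : l ≤ 0) (h0 : 0 ≤ s) : 0 ≤ legendreFlux l s := by
  have hcoeff (i : ℕ) : 0 ≤ legendreCoeff l i :=
    Finset.prod_nonneg fun i _ => div_nonneg (sub_nonneg.2 (hl.trans (by positivity)))
      (by positivity)
  refine tsum_nonneg fun j => smul_nonneg (pow_nonneg h0 j) ?_
  cases j with
  | zero => exact le_rfl
  | succ j => exact div_nonneg (mul_nonneg (neg_nonneg.2 hl) (hcoeff j)) (by positivity)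

lemma legendreCoeff_ladder (ν : 𝕜) (j : ℕ) :
    legendreCoeff ((ν + 1) * (ν + 2)) (j + 1) =
      -((j + 1 + ν) * (j + 2 + ν)) * legendreCoeff (ν * (ν + 1)) j / ((j : 𝕜) + 1) ^ 2 := by
  induction j with
  | zero => simp [legendreCoeff_succ]; ring
  | succ j ih =>
    have h1 : (j : 𝕜) + 1 ≠ 0 := Nat.cast_add_one_ne_zero j
    have h2 : (j : 𝕜) + 1 + 1 ≠ 0 := by exact_mod_cast Nat.cast_add_one_ne_zero (R := 𝕜) (j + 1)
    rw [legendreCoeff_succ, ih, legendreCoeff_succ]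
    push_cast
    field_simp
    ring

lemma legendreFun_ladder {ν : 𝕜} (hν : ν + 1 ≠ 0) {s : ℝ} (h0 : 0 ≤ s) (h1 : s < 1) :
    legendreFun ((ν + 1) * (ν + 2)) s =
      (1 - 2 * s : ℝ) • legendreFun (ν * (ν + 1)) s +
        2 / (ν + 1) * legendreFlux (ν * (ν + 1)) s := by
  set l := ν * (ν + 1)
  have hY := norm_legendreCoeff_le l
  have hD := norm_legendreFluxCoeff_le l
  have hcoeff (j : ℕ) : legendreCoeff ((ν + 1) * (ν + 2)) (j + 1) =
      legendreCoeff l (j + 1) +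
        (-2 * legendreCoeff l j + 2 / (ν + 1) * legendreFluxCoeff l (j + 1)) := by
    have : (j : 𝕜) + 1 ≠ 0 := Nat.cast_add_one_ne_zero j
    rw [legendreCoeff_ladder, legendreCoeff_succ, legendreFluxCoeff]
    simp only [l]
    field_simp
    ring
  have hmul (c : 𝕜) {a : ℕ → 𝕜} {C : ℝ} (ha : ∀ j, ‖a j‖ ≤ C) (j : ℕ) :
      ‖c * a j‖ ≤ ‖c‖ * C := by
    rw [norm_mul]; gcongr; exact ha j
  have hsum := powerSum_add (hmul (-2) hY) (hmul (2 / (ν + 1)) fun j => hD (j + 1)) h0 h1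
  have hsum' := powerSum_add (fun j => hY (j + 1)) (fun j => norm_add_le_of_le
    (hmul (-2) hY j) (hmul (2 / (ν + 1)) (fun j => hD (j + 1)) j)) h0 h1
  rw [hsum, powerSum_const_mul, powerSum_const_mul] at hsum'
  have hYs := powerSum_eq_add_smul_succ hY h0 h1
  have hDs := powerSum_eq_add_smul_succ hD h0 h1
  simp only [legendreFun, legendreFlux]
  rw [powerSum_eq_add_smul_succ (norm_legendreCoeff_le _) h0 h1, funext hcoeff, hsum', hDs]
  simp only [RCLike.real_smul_eq_coe_mul, legendreCoeff_zero, legendreFluxCoeff] at hYs ⊢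
  push_cast
  linear_combination -hYs

lemma legendreFun_ladder_down {ν : 𝕜} (hν : ν ≠ 0) {s : ℝ} (h0 : 0 ≤ s) (h1 : s < 1) :
    legendreFun (ν * (ν - 1)) s =
      (1 - 2 * s : ℝ) • legendreFun (ν * (ν + 1)) s - 2 / ν * legendreFlux (ν * (ν + 1)) s := by
  have hneg : -1 - ν + 1 = -ν := by ring
  have hladder := legendreFun_ladder (ν := -1 - ν) (by rwa [hneg, neg_ne_zero]) h0 h1
  rw [hneg, show -ν * (-1 - ν + 2) = ν * (ν - 1) by ring,
    show (-1 - ν) * -ν = ν * (ν + 1) by ring, div_neg, neg_mul, ← sub_eq_add_neg] at hladder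
  exact hladder

end Legendre

section Growth

lemma hasDerivAt_arccos_one_sub_two_mul {s : ℝ} (h0 : 0 < s) (h1 : s < 1) :
    HasDerivAt (fun s => arccos (1 - 2 * s)) (√(s * (1 - s)))⁻¹ s := by
  have hinner : HasDerivAt (fun s : ℝ => 1 - 2 * s) (-2) s := by
    simpa using ((hasDerivAt_id s).const_mul 2).const_sub 1
  have hsqrt : √(1 - (1 - 2 * s) ^ 2) = 2 * √(s * (1 - s)) := by
    rw [show 1 - (1 - 2 * s) ^ 2 = 2 ^ 2 * (s * (1 - s)) by ring, sqrt_mul (by positivity),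
      sqrt_sq zero_le_two]
  refine ((hasDerivAt_arccos (by linarith) (by linarith)).comp s hinner).congr_deriv ?_
  rw [hsqrt]
  ring

lemma hasDerivAt_exp_neg_mul_arccos (κ : ℝ) {s : ℝ} (h0 : 0 < s) (h1 : s < 1) :
    HasDerivAt (fun s => exp (-(κ * arccos (1 - 2 * s))))
      (-(κ / √(s * (1 - s)) * exp (-(κ * arccos (1 - 2 * s))))) s := by
  refine ((hasDerivAt_arccos_one_sub_two_mul h0 h1).const_mul κ).neg.exp.congr_deriv ?_
  simp only [Pi.neg_apply]
  ring

lemma hasDerivAt_sqrt_mul_one_sub {s : ℝ} (h0 : 0 < s) (h1 : s < 1) :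
    HasDerivAt (fun s : ℝ => √(s * (1 - s))) ((1 - 2 * s) / (2 * √(s * (1 - s)))) s := by
  have hw : HasDerivAt (fun s : ℝ => s * (1 - s)) (1 - 2 * s) s :=
    ((hasDerivAt_id s).mul ((hasDerivAt_id s).const_sub 1)).congr_deriv (by simp; ring)
  exact hw.sqrt (mul_pos h0 (sub_pos.2 h1)).ne'

lemma continuousOn_legendreFlux_div_sqrt (l : ℝ) :
    ContinuousOn (fun s => legendreFlux l s / √(s * (1 - s))) (Ico 0 1) := by
  have hderiv : ContinuousOn
      (powerSum fun j : ℕ => ((j : ℝ) + 1) • legendreCoeff l (j + 1)) (Ico 0 1) :=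
    continuousOn_powerSum fun j => by simpa using norm_natCast_smul_legendreCoeff_le l (j + 1)
  have hsqrt : Continuous fun s : ℝ => √(s * (1 - s)) := by fun_prop
  refine (hsqrt.continuousOn.smul hderiv).congr fun s hs => ?_
  rw [legendreFlux_eq_smul l hs.1 hs.2, smul_eq_mul, mul_div_right_comm, div_sqrt]
  rfl

variable {κ s : ℝ}

lemma hasDerivAt_flux_div_sqrt_add (κ : ℝ) (h0 : 0 < s) (h1 : s < 1) :
    HasDerivAt (fun s => (legendreFlux (-κ ^ 2) s / √(s * (1 - s)) + κ * legendreFun (-κ ^ 2) s) *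
        exp (-(κ * arccos (1 - 2 * s))))
      (-((1 - 2 * s) * legendreFlux (-κ ^ 2) s / (2 * √(s * (1 - s)) ^ 3) *
        exp (-(κ * arccos (1 - 2 * s))))) s := by
  have hr : 0 < √(s * (1 - s)) := sqrt_pos.2 (mul_pos h0 (sub_pos.2 h1))
  refine ((((hasDerivAt_legendreFlux (-κ ^ 2) h0.le h1).div
    (hasDerivAt_sqrt_mul_one_sub h0 h1) hr.ne').add
    ((hasDerivAt_legendreFun (-κ ^ 2) h0 h1).const_mul κ)).mul
    (hasDerivAt_exp_neg_mul_arccos κ h0 h1)).congr_deriv ?_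
  simp only [Pi.add_apply, Pi.div_apply, smul_eq_mul]
  rw [← sq_sqrt (mul_pos h0 (sub_pos.2 h1)).le, sqrt_sq hr.le]
  field_simp
  ring

lemma hasDerivAt_flux_add_sqrt_mul (κ : ℝ) (h0 : 0 < s) (h1 : s < 1) :
    HasDerivAt
      (fun s => (legendreFlux (-κ ^ 2) s + κ * (√(s * (1 - s)) * legendreFun (-κ ^ 2) s)) *
        exp (-(κ * arccos (1 - 2 * s))))
      (-((2 * s - 1) * κ * legendreFun (-κ ^ 2) s / (2 * √(s * (1 - s))) *
        exp (-(κ * arccos (1 - 2 * s))))) s := by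
  have hr : 0 < √(s * (1 - s)) := sqrt_pos.2 (mul_pos h0 (sub_pos.2 h1))
  refine (((hasDerivAt_legendreFlux (-κ ^ 2) h0.le h1).add
    (((hasDerivAt_sqrt_mul_one_sub h0 h1).mul
      (hasDerivAt_legendreFun (-κ ^ 2) h0 h1)).const_mul κ)).mul
    (hasDerivAt_exp_neg_mul_arccos κ h0 h1)).congr_deriv ?_
  simp only [Pi.add_apply, Pi.mul_apply, smul_eq_mul]
  rw [← sq_sqrt (mul_pos h0 (sub_pos.2 h1)).le, sqrt_sq hr.le]
  field_simp
  ring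

lemma flux_div_sqrt_add_le (κ : ℝ) (h0 : 0 ≤ s) (h1 : s ≤ 1 / 2) :
    legendreFlux (-κ ^ 2) s / √(s * (1 - s)) + κ * legendreFun (-κ ^ 2) s ≤
      κ * exp (κ * arccos (1 - 2 * s)) := by
  have anti : AntitoneOn (fun s =>
      (legendreFlux (-κ ^ 2) s / √(s * (1 - s)) + κ * legendreFun (-κ ^ 2) s) *
        exp (-(κ * arccos (1 - 2 * s)))) (Icc 0 (1 / 2)) := by
    have hsub : Icc (0 : ℝ) (1 / 2) ⊆ Ico 0 1 := Icc_subset_Ico_right (by norm_num)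
    have hexp : Continuous fun s => exp (-(κ * arccos (1 - 2 * s))) := by fun_prop
    have hderiv {t : ℝ} (ht : t ∈ Ioo 0 (1 / 2)) :=
      hasDerivAt_flux_div_sqrt_add κ ht.1 (by linarith [ht.2])
    rw [← interior_Icc] at hderiv
    refine antitoneOn_of_hasDerivWithinAt_nonpos (convex_Icc 0 (1 / 2))
      ((((continuousOn_legendreFlux_div_sqrt _).add
        ((continuousOn_legendreFun _).const_mul κ)).mul hexp.continuousOn).mono hsub)
      (fun t ht => (hderiv ht).hasDerivWithinAt) (fun t ht => ?_)
    obtain ⟨ht0, ht1⟩ := interior_subset ht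
    have := legendreFlux_nonneg (neg_nonpos.2 (sq_nonneg κ)) ht0
    have : 0 ≤ 1 - 2 * t := by linarith
    exact neg_nonpos.2 (by positivity)
  have hle := anti ⟨le_rfl, by norm_num⟩ ⟨h0, h1⟩ h0
  simp only [mul_zero, sub_zero, sqrt_zero, div_zero, zero_add, arccos_one, neg_zero,
    exp_zero, legendreFun_apply_zero, mul_one, exp_neg] at hle
  rwa [← div_eq_mul_inv, div_le_iff₀ (exp_pos _)] at hle

lemma legendreFun_neg_sq_le_exp (hκ : 0 < κ) (h0 : 0 ≤ s) (h1 : s ≤ 1 / 2) :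
    legendreFun (-κ ^ 2) s ≤ exp (κ * arccos (1 - 2 * s)) := by
  have hflux : 0 ≤ legendreFlux (-κ ^ 2) s / √(s * (1 - s)) :=
    div_nonneg (legendreFlux_nonneg (neg_nonpos.2 (sq_nonneg κ)) h0) (sqrt_nonneg _)
  have hle := flux_div_sqrt_add_le κ h0 h1
  exact le_of_mul_le_mul_left (by linarith) hκ

lemma legendreFlux_neg_sq_le (hκ : 0 ≤ κ) (h0 : 1 / 2 ≤ s) (h1 : s < 1) :
    legendreFlux (-κ ^ 2) s ≤ κ / 2 * exp (κ * arccos (1 - 2 * s)) := by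
  have hfun {t : ℝ} (ht0 : 0 ≤ t) (ht1 : t < 1) : 0 ≤ legendreFun (-κ ^ 2) t :=
    zero_le_one.trans (one_le_legendreFun (neg_nonpos.2 (sq_nonneg κ)) ht0 ht1)
  have anti : AntitoneOn (fun s =>
      (legendreFlux (-κ ^ 2) s + κ * (√(s * (1 - s)) * legendreFun (-κ ^ 2) s)) *
        exp (-(κ * arccos (1 - 2 * s)))) (Ico (1 / 2) 1) := by
    have hderiv {t : ℝ} (ht : t ∈ Ico (1 / 2) 1) :=
      hasDerivAt_flux_add_sqrt_mul κ (by linarith [ht.1]) ht.2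
    refine antitoneOn_of_hasDerivWithinAt_nonpos (convex_Ico (1 / 2) 1)
      (fun t ht => (hderiv ht).continuousAt.continuousWithinAt)
      (fun t ht => (hderiv (interior_subset ht)).hasDerivWithinAt) (fun t ht => ?_)
    obtain ⟨ht0, ht1⟩ := interior_subset ht
    have := hfun (by linarith) ht1
    have : 0 ≤ 2 * t - 1 := by linarith
    exact neg_nonpos.2 (by positivity)
  have sqrt_half : √((1 / 2 : ℝ) * (1 - 1 / 2)) = 1 / 2 := by
    rw [show (1 / 2 : ℝ) * (1 - 1 / 2) = (1 / 2) ^ 2 by norm_num, sqrt_sq (by norm_num)]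
  have hmid := flux_div_sqrt_add_le κ (by norm_num) (le_refl (1 / 2 : ℝ))
  have hle := anti ⟨le_rfl, by norm_num⟩ ⟨h0, h1⟩ h0
  simp only [sqrt_half] at hmid hle
  have hle' : _ ≤ κ / 2 := hle.trans (by
    rw [exp_neg, ← div_eq_mul_inv, div_le_iff₀ (exp_pos _)]
    linarith)
  rw [exp_neg, ← div_eq_mul_inv, div_le_iff₀ (exp_pos _)] at hle'
  have : 0 ≤ κ * (√(s * (1 - s)) * legendreFun (-κ ^ 2) s) := by
    have := hfun (by linarith) h1
    positivity
  linarith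

lemma inv_mul_legendreFlux_neg_sq_le (hκ : 0 ≤ κ) (h0 : 1 / 2 ≤ s) (h1 : s < 1) :
    (s * (1 - s))⁻¹ * legendreFlux (-κ ^ 2) s ≤
      exp (κ * arccos (1 - 2 * s)) * (κ / (1 - s)) := by
  have hs : 0 < 1 - s := sub_pos.2 h1
  rw [inv_mul_le_iff₀ (mul_pos (by linarith) hs)]
  refine (legendreFlux_neg_sq_le hκ h0 h1).trans ?_
  rw [show s * (1 - s) * (exp (κ * arccos (1 - 2 * s)) * (κ / (1 - s))) =
    s * κ * exp (κ * arccos (1 - 2 * s)) by field_simp]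
  gcongr
  nlinarith

lemma legendreFun_neg_sq_le_exp_mul_log (hκ : 0 < κ) (h0 : 0 ≤ s) (h1 : s < 1) :
    legendreFun (-κ ^ 2) s ≤ exp (κ * arccos (1 - 2 * s)) * (1 - κ * log (1 - s)) := by
  have one_le_log {t : ℝ} (ht0 : 0 ≤ t) (ht1 : t < 1) : 1 ≤ 1 - κ * log (1 - t) := by
    nlinarith [log_nonpos (sub_nonneg.2 ht1.le) (by linarith)]
  have le_of_le_half {t : ℝ} (ht0 : 0 ≤ t) (ht : t ≤ 1 / 2) :
      legendreFun (-κ ^ 2) t ≤ exp (κ * arccos (1 - 2 * t)) * (1 - κ * log (1 - t)) :=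
    (legendreFun_neg_sq_le_exp hκ ht0 ht).trans
      (le_mul_of_one_le_right (exp_pos _).le (one_le_log ht0 (by linarith)))
  rcases le_total s (1 / 2) with hs | hs
  · exact le_of_le_half h0 hs
  have mono : MonotoneOn (fun t => exp (κ * arccos (1 - 2 * t)) * (1 - κ * log (1 - t)) -
      legendreFun (-κ ^ 2) t) (Ico (1 / 2) 1) := by
    have hderiv {t : ℝ} (ht : t ∈ Ico (1 / 2) 1) :=
      have ht0 : 0 < t := by linarith [ht.1]
      have hlog := ((hasDerivAt_id t).const_sub 1).log (sub_pos.2 ht.2).ne'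
      (((hasDerivAt_arccos_one_sub_two_mul ht0 ht.2).const_mul κ).exp.mul
        ((hlog.const_mul κ).const_sub 1)).sub (hasDerivAt_legendreFun (-κ ^ 2) ht0 ht.2)
    refine monotoneOn_of_hasDerivWithinAt_nonneg (convex_Ico (1 / 2) 1)
      (fun t ht => (hderiv ht).continuousAt.continuousWithinAt)
      (fun t ht => (hderiv (interior_subset ht)).hasDerivWithinAt) (fun t ht => ?_)
    obtain ⟨ht0, ht1⟩ := interior_subset ht
    have ht : 0 < t := by linarith
    have hmain := inv_mul_legendreFlux_neg_sq_le hκ.le ht0 ht1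
    have hrest : 0 ≤ exp (κ * arccos (1 - 2 * t)) * (κ * (√(t * (1 - t)))⁻¹) *
        (1 - κ * log (1 - t)) :=
      mul_nonneg (by positivity) (zero_le_one.trans (one_le_log ht.le ht1))
    simp only [id, smul_eq_mul]
    have hterm : exp (κ * arccos (1 - 2 * t)) * -(κ * (-1 / (1 - t))) =
        exp (κ * arccos (1 - 2 * t)) * (κ / (1 - t)) := by ring
    linarith
  have hmono := mono ⟨le_rfl, by norm_num⟩ ⟨hs, h1⟩ hs
  have hhalf := le_of_le_half (by norm_num) le_rfl
  simp only at hmono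
  linarith

lemma one_sub_mul_log_le_rpow {x : ℝ} (hκ : 0 ≤ κ) (h0 : 0 < x) (h1 : x ≤ 1) :
    1 - κ * log x ≤ (1 + 4 * κ) * x ^ (-(1 / 4) : ℝ) := by
  have hlog : -log x ≤ 4 * x ^ (-(1 / 4) : ℝ) := by
    have := log_le_rpow_div (inv_nonneg.2 h0.le) (show (0 : ℝ) < 1 / 4 by norm_num)
    rw [log_inv, inv_rpow h0.le, ← rpow_neg h0.le] at this
    linarith
  have hone : 1 ≤ x ^ (-(1 / 4) : ℝ) := one_le_rpow_of_pos_of_le_one_of_nonpos h0 h1 (by norm_num)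
  nlinarith

lemma norm_legendreFun_le_exp_mul_rpow {𝕜 : Type*} [RCLike 𝕜] {l : 𝕜} (hκ : 0 < κ)
    (hl : ‖l‖ ≤ κ ^ 2) (h0 : 0 ≤ s) (h1 : s < 1) :
    ‖legendreFun l s‖ ≤
      (1 + 4 * κ) * exp (κ * arccos (1 - 2 * s)) * (1 - s) ^ (-(1 / 4) : ℝ) :=
  calc ‖legendreFun l s‖ ≤ legendreFun (-κ ^ 2) s := norm_legendreFun_le hl h0 h1
    _ ≤ exp (κ * arccos (1 - 2 * s)) * (1 - κ * log (1 - s)) :=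
        legendreFun_neg_sq_le_exp_mul_log hκ h0 h1
    _ ≤ exp (κ * arccos (1 - 2 * s)) * ((1 + 4 * κ) * (1 - s) ^ (-(1 / 4) : ℝ)) := by
        gcongr
        exact one_sub_mul_log_le_rpow hκ.le (sub_pos.2 h1) (by linarith)
    _ = _ := by ring

end Growth

section ParametricIntegral

variable {α : Type*} [MeasurableSpace α] {m : Measure α}
  {E : Type*} [NormedAddCommGroup E] [NormedSpace ℂ E]

lemma differentiable_integral_of_norm_le {F : ℂ → α → E} {b : ℝ → α → ℝ}
    (hmeas : ∀ z, AEStronglyMeasurable (F z) m) (hb : ∀ R, Integrable (b R) m)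
    (hle : ∀ᵐ a ∂m, ∀ R z, ‖z‖ ≤ R → ‖F z a‖ ≤ b R a)
    (hdiff : ∀ᵐ a ∂m, Differentiable ℂ fun z => F z a) :
    Differentiable ℂ fun z => ∫ a, F z a ∂m := by
  intro z₀
  have int_F : Integrable (F z₀) m :=
    (hb ‖z₀‖).mono' (hmeas z₀) (hle.mono fun a ha => ha _ _ le_rfl)
  have meas_deriv : AEStronglyMeasurable (fun a => deriv (F · a) z₀) m :=
    aestronglyMeasurable_of_tendsto_ae (𝓝[≠] (0 : ℂ))
      (fun t => ((hmeas (z₀ + t)).sub (hmeas z₀)).const_smul t⁻¹)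
      (hdiff.mono fun a ha => (ha z₀).hasDerivAt.tendsto_slope_zero)
  -- Cauchy's estimate on unit circles bounds the derivative on the unit ball around `z₀`.
  have norm_deriv_le : ∀ᵐ a ∂m, ∀ z ∈ Metric.ball z₀ 1,
      ‖deriv (F · a) z‖ ≤ b (‖z₀‖ + 2) a := by
    filter_upwards [hle, hdiff] with a hle hdiff z hz
    rw [mem_ball_iff_norm] at hz
    refine (Complex.norm_deriv_le_of_forall_mem_sphere_norm_le one_pos hdiff.diffContOnCl
      fun w hw => hle (‖z₀‖ + 2) w ?_).trans_eq (div_one _)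
    rw [mem_sphere_iff_norm] at hw
    calc ‖w‖ = ‖(w - z) + (z - z₀) + z₀‖ := by congr 1; ring
      _ ≤ ‖w - z‖ + ‖z - z₀‖ + ‖z₀‖ := norm_add₃_le
      _ ≤ ‖z₀‖ + 2 := by linarith
  exact (hasDerivAt_integral_of_dominated_loc_of_deriv_le (Metric.ball_mem_nhds z₀ one_pos)
    (.of_forall hmeas) int_F meas_deriv norm_deriv_le (hb _)
    (hdiff.mono fun a ha z _ => (ha z).hasDerivAt)).2.differentiableAt

end ParametricIntegral

section LegendreCubeIntegral

lemma differentiable_legendreCoeff (j : ℕ) : Differentiable ℂ fun l : ℂ => legendreCoeff l j := by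
  unfold legendreCoeff
  fun_prop

lemma differentiable_legendreFun {s : ℝ} (h0 : 0 ≤ s) (h1 : s < 1) :
    Differentiable ℂ fun l : ℂ => legendreFun l s := by
  intro l₀
  let R := ‖l₀‖ + 1
  have differentiableOn_ball :
      DifferentiableOn ℂ (fun l : ℂ => legendreFun l s) (Metric.ball 0 R) := by
    unfold legendreFun powerSum
    refine Complex.differentiableOn_tsum_of_summable_norm
      (u := fun j => s ^ j • (1 + R * exp R))
      ((summable_geometric_of_lt_one h0 h1).mul_right _)
      (fun j => ((differentiable_legendreCoeff j).fun_const_smul _).differentiableOn)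
      Metric.isOpen_ball fun j l hl => norm_pow_smul_le ?_ h0 j
    rw [mem_ball_zero_iff] at hl
    grw [norm_legendreCoeff_le, exp_le_exp.2 hl.le, hl]
  exact differentiableOn_ball.differentiableAt (Metric.isOpen_ball.mem_nhds (by simp [R]))

/-- The weight dominating the integrands of `legendreCubeIntegral`. -/
noncomputable def betaWeight (s : ℝ) : ℝ := (1 - s) ^ (-(1 / 2) : ℝ) * s ^ (-(1 / 4) : ℝ)

lemma betaWeight_nonneg {s : ℝ} (hs : s ∈ Ioo (0 : ℝ) 1) : 0 ≤ betaWeight s :=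
  mul_nonneg (rpow_nonneg (sub_nonneg.2 hs.2.le) _) (rpow_nonneg hs.1.le _)

lemma integrableOn_betaWeight : IntegrableOn betaWeight (Ioo 0 1) := by
  have h := Complex.betaIntegral_convergent (u := ((3 / 4 : ℝ) : ℂ)) (v := ((1 / 2 : ℝ) : ℂ))
    (by rw [Complex.ofReal_re]; norm_num) (by rw [Complex.ofReal_re]; norm_num)
  rw [intervalIntegrable_iff_integrableOn_Ioo_of_le zero_le_one] at h
  refine IntegrableOn.congr_fun h.norm (fun s hs => ?_) measurableSet_Ioo
  have h1 : (1 : ℂ) - s = ((1 - s : ℝ) : ℂ) := by push_cast; ring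
  simp only [betaWeight, h1]
  rw [norm_mul, Complex.norm_cpow_eq_rpow_re_of_pos hs.1,
    Complex.norm_cpow_eq_rpow_re_of_pos (sub_pos.2 hs.2), mul_comm]
  simp only [Complex.sub_re, Complex.ofReal_re, Complex.one_re]
  norm_num

/-- The integral of `P_ν(1 - 2s)² P_ν(2s - 1)` over the unit interval, as a function of
`l = ν (ν + 1)`. -/
noncomputable def legendreCubeIntegral (l : ℂ) : ℂ :=
  ∫ s in Ioo (0 : ℝ) 1, legendreFun l s ^ 2 * legendreFun l (1 - s)

variable {l : ℂ}

lemma continuousOn_legendreFun_sq_mul_reflect :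
    ContinuousOn (fun s : ℝ => legendreFun l s ^ 2 * legendreFun l (1 - s)) (Ioo 0 1) :=
  (((continuousOn_legendreFun l).mono Ioo_subset_Ico_self).pow 2).mul <|
    (continuousOn_legendreFun l).comp (by fun_prop)
      fun s hs => ⟨(sub_pos.2 hs.2).le, sub_lt_self 1 hs.1⟩

lemma norm_legendreFun_reflect_le {κ s : ℝ} (hκ : 0 < κ) (hl : ‖l‖ ≤ κ ^ 2)
    (hs : s ∈ Ioo (0 : ℝ) 1) : ‖legendreFun l (1 - s)‖ ≤
      (1 + 4 * κ) * exp (κ * (π - arccos (1 - 2 * s))) * s ^ (-(1 / 4) : ℝ) := by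
  have h := norm_legendreFun_le_exp_mul_rpow hκ hl (sub_pos.2 hs.2).le (sub_lt_self 1 hs.1)
  rwa [sub_sub_cancel, show 1 - 2 * (1 - s) = -(1 - 2 * s) by ring, arccos_neg] at h

lemma norm_legendreFun_sq_mul_reflect_le {κ s : ℝ} (hκ : 0 < κ) (hl : ‖l‖ ≤ κ ^ 2)
    (hs : s ∈ Ioo (0 : ℝ) 1) : ‖legendreFun l s ^ 2 * legendreFun l (1 - s)‖ ≤
      (1 + 4 * κ) ^ 3 * exp (2 * π * κ) * betaWeight s := by
  have h1s := sub_pos.2 hs.2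
  have rpow_sq : ((1 - s) ^ (-(1 / 4) : ℝ)) ^ 2 = (1 - s) ^ (-(1 / 2) : ℝ) := by
    rw [← rpow_natCast, ← rpow_mul h1s.le]
    norm_num
  set θ := arccos (1 - 2 * s)
  have exp_le : exp (κ * θ) ^ 2 * exp (κ * (π - θ)) ≤ exp (2 * π * κ) := by
    rw [← exp_nat_mul, ← exp_add, exp_le_exp]
    push_cast
    nlinarith [arccos_le_pi (1 - 2 * s)]
  rw [norm_mul, norm_pow]
  calc ‖legendreFun l s‖ ^ 2 * ‖legendreFun l (1 - s)‖
      ≤ ((1 + 4 * κ) * exp (κ * θ) * (1 - s) ^ (-(1 / 4) : ℝ)) ^ 2 *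
          ((1 + 4 * κ) * exp (κ * (π - θ)) * s ^ (-(1 / 4) : ℝ)) := by
        gcongr
        · exact norm_legendreFun_le_exp_mul_rpow hκ hl hs.1.le hs.2
        · exact norm_legendreFun_reflect_le hκ hl hs
    _ = (1 + 4 * κ) ^ 3 * (exp (κ * θ) ^ 2 * exp (κ * (π - θ))) * betaWeight s := by
        rw [betaWeight, ← rpow_sq]
        ring
    _ ≤ _ := by
        have := betaWeight_nonneg hs
        gcongr

lemma norm_legendreFun_sq_mul_reflect_le_of_norm_le {R s : ℝ} (hl : ‖l‖ ≤ R)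
    (hs : s ∈ Ioo (0 : ℝ) 1) : ‖legendreFun l s ^ 2 * legendreFun l (1 - s)‖ ≤
      (1 + 4 * (1 + R)) ^ 3 * exp (2 * π * (1 + R)) * betaWeight s := by
  have hR : 0 ≤ R := (norm_nonneg l).trans hl
  exact norm_legendreFun_sq_mul_reflect_le (by positivity) (by nlinarith) hs

lemma integrableOn_legendreFun_sq_mul_reflect :
    IntegrableOn (fun s : ℝ => legendreFun l s ^ 2 * legendreFun l (1 - s)) (Ioo 0 1) :=
  (integrableOn_betaWeight.const_mul _).mono'
    (continuousOn_legendreFun_sq_mul_reflect.aestronglyMeasurable measurableSet_Ioo)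
    (ae_restrict_of_forall_mem measurableSet_Ioo fun _ =>
      norm_legendreFun_sq_mul_reflect_le_of_norm_le le_rfl)

lemma exists_norm_legendreCubeIntegral_le : ∃ C, 0 ≤ C ∧ ∀ {κ : ℝ} {l : ℂ}, 0 < κ →
    ‖l‖ ≤ κ ^ 2 → ‖legendreCubeIntegral l‖ ≤ C * (1 + 4 * κ) ^ 3 * exp (2 * π * κ) := by
  refine ⟨∫ s in Ioo (0 : ℝ) 1, betaWeight s,
    setIntegral_nonneg measurableSet_Ioo fun _ => betaWeight_nonneg, fun hκ hl => ?_⟩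
  rw [mul_assoc, mul_comm, ← MeasureTheory.integral_const_mul]
  exact norm_integral_le_of_norm_le (integrableOn_betaWeight.const_mul _)
    (ae_restrict_of_forall_mem measurableSet_Ioo fun _ =>
      norm_legendreFun_sq_mul_reflect_le hκ hl)

lemma differentiable_legendreCubeIntegral : Differentiable ℂ legendreCubeIntegral :=
  differentiable_integral_of_norm_le
    (fun _ => continuousOn_legendreFun_sq_mul_reflect.aestronglyMeasurable measurableSet_Ioo)
    (fun _ => integrableOn_betaWeight.const_mul _)
    (ae_restrict_of_forall_mem measurableSet_Ioo fun _ hs _ _ hl =>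
      norm_legendreFun_sq_mul_reflect_le_of_norm_le hl hs)
    (ae_restrict_of_forall_mem measurableSet_Ioo fun _ hs =>
      ((differentiable_legendreFun hs.1.le hs.2).pow 2).mul
        (differentiable_legendreFun (sub_pos.2 hs.2).le (sub_lt_self 1 hs.1)))

lemma legendreCubeIntegral_zero : legendreCubeIntegral 0 = 1 := by
  simp [legendreCubeIntegral]

end LegendreCubeIntegral

section Certificate

variable {l : ℂ} {s : ℝ}

lemma hasDerivAt_legendreFun_reflect (l : ℂ) (h0 : 0 < s) (h1 : s < 1) :
    HasDerivAt (fun t : ℝ => legendreFun l (1 - t))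
      (-legendreFlux l (1 - s) / (s * (1 - s))) s := by
  refine ((hasDerivAt_legendreFun l (sub_pos.2 h1) (sub_lt_self 1 h0)).comp_const_sub
    1 s).congr_deriv ?_
  rw [sub_sub_cancel, Complex.real_smul]
  push_cast
  ring

lemma hasDerivAt_legendreFlux_reflect (l : ℂ) (h0 : 0 < s) (h1 : s < 1) :
    HasDerivAt (fun t : ℝ => legendreFlux l (1 - t)) (l * legendreFun l (1 - s)) s :=
  ((hasDerivAt_legendreFlux l (sub_pos.2 h1).le (sub_lt_self 1 h0)).comp_const_sub
    1 s).congr_deriv (by ring)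

/-- Antiderivative, up to the factor `-2 (2μ + 1)`, of the combination of the integrands at `μ + 1`
and `μ - 1` in `legendreCubeIntegral_recurrence`, for `l = μ (μ + 1)`. It is a Zeilberger-type
certificate: a combination of the cubic monomials in the two Legendre functions and their fluxes,
whose coefficients are found by linear algebra. -/
noncomputable def legendreCubeCertificate (l : ℂ) (s : ℝ) : ℂ :=
  s * (1 - s) * (6 * l + 2 + (3 * l + 2) * (1 - 2 * s) ^ 2) *
      (legendreFun l s ^ 2 * legendreFun l (1 - s))
    + 4 * (s * (1 - s)) * (1 - 2 * s) *
      (2 * (legendreFlux l s * legendreFun l s * legendreFun l (1 - s))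
        - legendreFun l s ^ 2 * legendreFlux l (1 - s))
    + 12 * (s * (1 - s)) *
      (legendreFlux l s ^ 2 * legendreFun l (1 - s)
        - 2 * (legendreFlux l s * legendreFun l s * legendreFlux l (1 - s)))
    - 2 / l * (1 - 2 * s) * (legendreFlux l s ^ 2 * legendreFlux l (1 - s))

lemma hasDerivAt_legendreCubeCertificate (hl : l ≠ 0) (h0 : 0 < s) (h1 : s < 1) :
    HasDerivAt (legendreCubeCertificate l)
      ((9 * l + 4) * (1 - 2 * s) ^ 3 * (legendreFun l s ^ 2 * legendreFun l (1 - s))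
        + (9 * l + 8) * (1 - 2 * s) ^ 2 *
          (2 * (legendreFlux l s * legendreFun l s * legendreFun l (1 - s))
            - legendreFun l s ^ 2 * legendreFlux l (1 - s))
        + 18 * (1 - 2 * s) *
          (legendreFlux l s ^ 2 * legendreFun l (1 - s)
            - 2 * (legendreFlux l s * legendreFun l s * legendreFlux l (1 - s)))
        + (4 / l - 36) * (legendreFlux l s ^ 2 * legendreFlux l (1 - s))) s := by
  have hs : HasDerivAt (fun t : ℝ => (t : ℂ)) 1 s := (hasDerivAt_id s).ofReal_comp
  have hw := hs.fun_mul (hs.const_sub 1)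
  have hx := (hs.const_mul 2).const_sub 1
  have hf := hasDerivAt_legendreFun l h0 h1
  have hD := hasDerivAt_legendreFlux l h0.le h1
  have hg := hasDerivAt_legendreFun_reflect l h0 h1
  have hG := hasDerivAt_legendreFlux_reflect l h0 h1
  have hC := ((((hw.fun_mul (((hx.fun_pow 2).const_mul (3 * l + 2)).const_add (6 * l + 2))).fun_mul
      ((hf.fun_pow 2).fun_mul hg)).fun_add
    (((hw.const_mul 4).fun_mul hx).fun_mul
      ((((hD.fun_mul hf).fun_mul hg).const_mul 2).fun_sub ((hf.fun_pow 2).fun_mul hG)))).fun_add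
    ((hw.const_mul 12).fun_mul
      (((hD.fun_pow 2).fun_mul hg).fun_sub (((hD.fun_mul hf).fun_mul hG).const_mul 2)))).fun_sub
    ((hx.const_mul (2 / l)).fun_mul ((hD.fun_pow 2).fun_mul hG))
  refine HasDerivAt.congr_deriv (f := legendreCubeCertificate l) hC ?_
  have hs0 : (s : ℂ) ≠ 0 := by exact_mod_cast h0.ne'
  have hs1 : (1 - s : ℂ) ≠ 0 := by exact_mod_cast (sub_pos.2 h1).ne'
  simp only [Complex.real_smul]
  push_cast
  field_simp
  ring

lemma hasDerivAt_legendreCubeCertificate_ladder {μ : ℂ} (hμ : μ ≠ 0) (hμ1 : μ + 1 ≠ 0)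
    (h0 : 0 < s) (h1 : s < 1) :
    HasDerivAt (fun t => -2 * (2 * μ + 1) * legendreCubeCertificate (μ * (μ + 1)) t)
      ((μ + 1) ^ 2 * (3 * μ + 2) * (3 * μ + 4) *
          (legendreFun ((μ + 1) * (μ + 2)) s ^ 2 * legendreFun ((μ + 1) * (μ + 2)) (1 - s))
        - μ ^ 2 * (3 * μ - 1) * (3 * μ + 1) *
          (legendreFun (μ * (μ - 1)) s ^ 2 * legendreFun (μ * (μ - 1)) (1 - s))) s := by
  refine ((hasDerivAt_legendreCubeCertificate (mul_ne_zero hμ hμ1) h0 h1).const_mul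
    _).congr_deriv ?_
  have h0' := sub_pos.2 h1
  have h1' := sub_lt_self 1 h0
  rw [legendreFun_ladder hμ1 h0.le h1, legendreFun_ladder hμ1 h0'.le h1',
    legendreFun_ladder_down hμ h0.le h1, legendreFun_ladder_down hμ h0'.le h1']
  simp only [Complex.real_smul]
  push_cast
  field_simp
  ring

lemma norm_legendreFun_le_mul_rpow (l : ℂ) : ∃ K, 0 ≤ K ∧ ∀ s, 0 ≤ s → s < 1 →
    ‖legendreFun l s‖ ≤ K * (1 - s) ^ (-(1 / 4) : ℝ) := by
  let κ := 1 + ‖l‖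
  have hκ : 0 < κ := by positivity
  refine ⟨(1 + 4 * κ) * exp (κ * π), by positivity, fun s h0 h1 => ?_⟩
  have := rpow_nonneg (sub_pos.2 h1).le (-(1 / 4))
  grw [norm_legendreFun_le_exp_mul_rpow hκ _ h0 h1, arccos_le_pi]
  nlinarith [norm_nonneg l]

lemma mul_rpow_neg_pow {x : ℝ} (hx : 0 < x) (a : ℝ) (n : ℕ) :
    x * (x ^ (-a)) ^ n = x ^ (1 - n * a) := by
  rw [← rpow_natCast, ← rpow_mul hx.le, sub_eq_add_neg, rpow_add hx, rpow_one]
  ring_nf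

lemma tendsto_legendreFun_pow_mul_reflect (l : ℂ) {m n : ℕ} (hm : m < 4) (hn : n < 4) {e : ℝ}
    (he : e = 0 ∨ e = 1) :
    Tendsto (fun s : ℝ => (s * (1 - s) : ℂ) * (legendreFun l s ^ m * legendreFun l (1 - s) ^ n))
      (𝓝[Ioo 0 1] e) (𝓝 0) := by
  obtain ⟨K, hK, hle⟩ := norm_legendreFun_le_mul_rpow l
  have exponent_pos {k : ℕ} (hk : k < 4) : 0 < 1 - k * (1 / 4 : ℝ) := by
    have : (k : ℝ) < 4 := by exact_mod_cast hk
    linarith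
  let b : ℝ → ℝ := fun s => K ^ (m + n) *
    (s ^ (1 - n * (1 / 4 : ℝ)) * (1 - s) ^ (1 - m * (1 / 4 : ℝ)))
  have tendsto_b : Tendsto b (𝓝[Ioo 0 1] e) (𝓝 0) := by
    have hb : Continuous b := ((continuous_rpow_const (exponent_pos hn).le).mul
      ((continuous_const.sub continuous_id).rpow_const fun _ =>
        .inr (exponent_pos hm).le)).const_mul _
    have hbe : b e = 0 := by
      simp only [b]
      rcases he with rfl | rfl
      · rw [zero_rpow (exponent_pos hn).ne', zero_mul, mul_zero]
      · rw [sub_self, zero_rpow (exponent_pos hm).ne', mul_zero, mul_zero]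
    exact hbe ▸ (hb.tendsto e).mono_left nhdsWithin_le_nhds
  refine squeeze_zero_norm' ?_ tendsto_b
  filter_upwards [self_mem_nhdsWithin] with s ⟨h0, h1⟩
  have h1' := sub_pos.2 h1
  have norm_weight : ‖(s * (1 - s) : ℂ)‖ = s * (1 - s) := by
    rw [← Complex.ofReal_one, ← Complex.ofReal_sub, ← Complex.ofReal_mul,
      Complex.norm_of_nonneg (by positivity)]
  have hg := hle (1 - s) h1'.le (sub_lt_self 1 h0)
  rw [sub_sub_cancel] at hg
  rw [norm_mul, norm_weight, norm_mul, norm_pow, norm_pow]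
  calc s * (1 - s) * (‖legendreFun l s‖ ^ m * ‖legendreFun l (1 - s)‖ ^ n)
      ≤ s * (1 - s) * ((K * (1 - s) ^ (-(1 / 4) : ℝ)) ^ m * (K * s ^ (-(1 / 4) : ℝ)) ^ n) := by
        gcongr
        exact hle s h0.le h1
    _ = K ^ (m + n) * ((s * (s ^ (-(1 / 4) : ℝ)) ^ n) *
          ((1 - s) * ((1 - s) ^ (-(1 / 4) : ℝ)) ^ m)) := by ring
    _ = b s := by rw [mul_rpow_neg_pow h0, mul_rpow_neg_pow h1']

lemma isBoundedUnder_norm_legendreFlux (l : ℂ) (e : ℝ) :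
    IsBoundedUnder (· ≤ ·) (𝓝[Ioo 0 1] e) ((‖·‖) ∘ legendreFlux l) := by
  refine isBoundedUnder_of_eventually_le (a := ‖l‖ * exp ‖l‖) ?_
  filter_upwards [self_mem_nhdsWithin] with s ⟨h0, h1⟩
  exact (norm_legendreFlux_le l h0.le h1).trans (mul_le_of_le_one_right (by positivity) h1.le)

lemma isBoundedUnder_norm_legendreFlux_reflect (l : ℂ) (e : ℝ) :
    IsBoundedUnder (· ≤ ·) (𝓝[Ioo 0 1] e) ((‖·‖) ∘ fun s => legendreFlux l (1 - s)) := by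
  refine isBoundedUnder_of_eventually_le (a := ‖l‖ * exp ‖l‖) ?_
  filter_upwards [self_mem_nhdsWithin] with s ⟨h0, h1⟩
  exact (norm_legendreFlux_le l (sub_pos.2 h1).le (sub_lt_self 1 h0)).trans
    (mul_le_of_le_one_right (by positivity) (sub_lt_self 1 h0).le)

lemma tendsto_legendreFlux_mul_reflect (l : ℂ) {e : ℝ} (he : e = 0 ∨ e = 1) :
    Tendsto (fun s => legendreFlux l s * legendreFlux l (1 - s)) (𝓝[Ioo 0 1] e) (𝓝 0) := by
  let b : ℝ → ℝ := fun s => ‖l‖ * exp ‖l‖ * s * (‖l‖ * exp ‖l‖ * (1 - s))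
  have tendsto_b : Tendsto b (𝓝[Ioo 0 1] e) (𝓝 0) := by
    have hbe : b e = 0 := by rcases he with rfl | rfl <;> simp [b]
    have hb : Continuous b := by fun_prop
    exact hbe ▸ (hb.tendsto e).mono_left nhdsWithin_le_nhds
  refine squeeze_zero_norm' ?_ tendsto_b
  filter_upwards [self_mem_nhdsWithin] with s ⟨h0, h1⟩
  rw [norm_mul]
  have := sub_pos.2 h1
  grw [norm_legendreFlux_le l h0.le h1, norm_legendreFlux_le l this.le (sub_lt_self 1 h0)]

lemma tendsto_legendreCubeCertificate (l : ℂ) {e : ℝ} (he : e = 0 ∨ e = 1) :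
    Tendsto (legendreCubeCertificate l) (𝓝[Ioo 0 1] e) (𝓝 0) := by
  have hw {m n : ℕ} (hm : m < 4) (hn : n < 4) :=
    tendsto_legendreFun_pow_mul_reflect l (m := m) (n := n) hm hn he
  have hD := isBoundedUnder_norm_legendreFlux l e
  have hG := isBoundedUnder_norm_legendreFlux_reflect l e
  have hx : Tendsto (fun s : ℝ => (1 - 2 * s : ℂ)) (𝓝[Ioo 0 1] e) (𝓝 (1 - 2 * e)) :=
    Continuous.tendsto (by fun_prop) e |>.mono_left nhdsWithin_le_nhds
  have hffg := hw (m := 2) (n := 1) (by norm_num) (by norm_num)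
  have hDfg := (hw (m := 1) (n := 1) (by norm_num) (by norm_num)).zero_mul_isBoundedUnder_le hD
  have hffG := (hw (m := 2) (n := 0) (by norm_num) (by norm_num)).zero_mul_isBoundedUnder_le hG
  have hDDg := ((hw (m := 0) (n := 1) (by norm_num)
    (by norm_num)).zero_mul_isBoundedUnder_le hD).zero_mul_isBoundedUnder_le hD
  have hDfG := ((hw (m := 1) (n := 0) (by norm_num)
    (by norm_num)).zero_mul_isBoundedUnder_le hD).zero_mul_isBoundedUnder_le hG
  have hDDG := (tendsto_legendreFlux_mul_reflect l he).zero_mul_isBoundedUnder_le hD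
  have hC := (((((hx.pow 2).const_mul (3 * l + 2)).const_add (6 * l + 2)).mul hffg).add
    ((hx.const_mul 4).mul ((hDfg.const_mul 2).sub hffG))).add
    ((hDDg.sub (hDfG.const_mul 2)).const_mul 12) |>.sub ((hx.const_mul (2 / l)).mul hDDG)
  simp only [mul_zero, add_zero, sub_zero] at hC
  refine hC.congr fun s => ?_
  rw [legendreCubeCertificate]
  ring

lemma legendreCubeIntegral_recurrence {μ : ℂ} (hμ : μ ≠ 0) (hμ1 : μ + 1 ≠ 0) :
    (μ + 1) ^ 2 * (3 * μ + 2) * (3 * μ + 4) * legendreCubeIntegral ((μ + 1) * (μ + 2)) =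
      μ ^ 2 * (3 * μ - 1) * (3 * μ + 1) * legendreCubeIntegral (μ * (μ - 1)) := by
  have int_up := integrableOn_legendreFun_sq_mul_reflect (l := (μ + 1) * (μ + 2)) |>.const_mul
    ((μ + 1) ^ 2 * (3 * μ + 2) * (3 * μ + 4))
  have int_down := integrableOn_legendreFun_sq_mul_reflect (l := μ * (μ - 1)) |>.const_mul
    (μ ^ 2 * (3 * μ - 1) * (3 * μ + 1))
  have tendsto_ends {e : ℝ} (he : e = 0 ∨ e = 1) := (tendsto_legendreCubeCertificate
    (μ * (μ + 1)) he).const_mul (-2 * (2 * μ + 1))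
  have h := integral_eq_sub_of_hasDerivAt_of_tendsto zero_lt_one
    (fun s hs => hasDerivAt_legendreCubeCertificate_ladder hμ hμ1 hs.1 hs.2)
    ((intervalIntegrable_iff_integrableOn_Ioo_of_le zero_le_one).2 (int_up.sub int_down))
    (nhdsWithin_Ioo_eq_nhdsGT (zero_lt_one' ℝ) ▸ tendsto_ends (.inl rfl))
    (nhdsWithin_Ioo_eq_nhdsLT (zero_lt_one' ℝ) ▸ tendsto_ends (.inr rfl))
  rw [integral_of_le zero_le_one, integral_Ioc_eq_integral_Ioo,
    MeasureTheory.integral_sub int_up int_down, MeasureTheory.integral_const_mul,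
    MeasureTheory.integral_const_mul, sub_self] at h
  exact sub_eq_zero.1 h

end Certificate

section PeriodicLiouville

variable {E : Type*} [NormedAddCommGroup E] [NormedSpace ℂ E]

lemma norm_deriv_le_of_norm_le_pow {f : ℂ → E} {C : ℝ} {m : ℕ} (hf : Differentiable ℂ f)
    (hC : 0 ≤ C) (hle : ∀ z, ‖f z‖ ≤ C * (1 + ‖z‖) ^ (m + 1)) (z : ℂ) :
    ‖deriv f z‖ ≤ C * 2 ^ (m + 1) * (1 + ‖z‖) ^ m := by
  have hR : 0 < 1 + ‖z‖ := by positivity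
  refine (Complex.norm_deriv_le_of_forall_mem_sphere_norm_le
    (C := C * (2 * (1 + ‖z‖)) ^ (m + 1)) hR hf.diffContOnCl fun w hw => ?_).trans_eq ?_
  · have : ‖w‖ ≤ 1 + 2 * ‖z‖ := by
      have := norm_le_norm_sub_add w z
      rw [mem_sphere_iff_norm] at hw
      linarith
    grw [hle w, this]
    gcongr
    linarith
  · rw [mul_pow, pow_succ (1 + ‖z‖)]
    field_simp

lemma eq_of_periodic_of_norm_le_pow [CompleteSpace E] {c : ℂ} (hc : c ≠ 0) {m : ℕ} :
    ∀ {f : ℂ → E} {C : ℝ}, Differentiable ℂ f → f.Periodic c → 0 ≤ C →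
      (∀ z, ‖f z‖ ≤ C * (1 + ‖z‖) ^ m) → ∀ z w, f z = f w := by
  induction m with
  | zero =>
    intro f C hf _ _ hle
    refine hf.apply_eq_apply_of_bounded (isBounded_iff_forall_norm_le.2 ⟨C, ?_⟩)
    rintro _ ⟨z, rfl⟩
    simpa using hle z
  | succ m ih =>
    intro f C hf hper hC hle
    have deriv_const := ih (hf.contDiff.differentiable_deriv_two) (fun z => by
        rw [← deriv_comp_add_const, funext hper])
      (by positivity) (norm_deriv_le_of_norm_le_pow hf hC hle)
    -- An affine function with a nonzero period is constant.
    have sub_linear_const : ∀ z w, f z - z • deriv f 0 = f w - w • deriv f 0 := by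
      refine is_const_of_deriv_eq_zero (by fun_prop) fun z => ?_
      rw [((hf z).hasDerivAt.fun_sub ((hasDerivAt_id' z).smul_const (deriv f 0))).deriv,
        deriv_const z 0, one_smul, sub_self]
    have smul_deriv : c • deriv f 0 = 0 := by
      have h := sub_linear_const c 0
      rw [← zero_add c, hper 0, zero_add, zero_smul] at h
      simpa using h
    intro z w
    simpa [(smul_eq_zero.1 smul_deriv).resolve_left hc] using sub_linear_const z w

end PeriodicLiouville

section ReflectFold

variable {E : Type*} {f : ℂ → E} {r : ℝ}

/-- A function on a strip `|re z| < r` with `1 / 2 < r`, extended to the plane by repeated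
reflection in the points `n + 1 / 2`: the translate of the strip around `k` is folded back by
`z ↦ (-1) ^ k (z - k)`. -/
noncomputable def reflectFold (f : ℂ → E) (z : ℂ) : E :=
  f ((-1) ^ round z.re * (z - (round z.re : ℤ)))

lemma abs_re_neg_one_zpow_mul (k : ℤ) (z : ℂ) : |((-1) ^ k * z).re| = |z.re| := by
  rcases k.even_or_odd with hk | hk <;> simp [hk.neg_one_zpow]

lemma abs_im_neg_one_zpow_mul (k : ℤ) (z : ℂ) : |((-1) ^ k * z).im| = |z.im| := by
  rcases k.even_or_odd with hk | hk <;> simp [hk.neg_one_zpow]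

lemma apply_fold_add_one
    (hsymm : ∀ ε : ℂ, ε = 1 ∨ ε = -1 → ∀ z, |z.re| < r → |(ε - z).re| < r → f (ε - z) = f z)
    {k : ℤ} {z : ℂ} (hk : |z.re - k| < r) (hk' : |z.re - (k + 1)| < r) :
    f ((-1) ^ (k + 1) * (z - (k + 1))) = f ((-1) ^ k * (z - k)) := by
  have reflect : (-1) ^ (k + 1) * (z - (k + 1)) = (-1) ^ k - (-1) ^ k * (z - k) := by
    rw [zpow_add_one₀ (by norm_num)]
    ring
  rw [reflect]
  refine hsymm _ ?_ _ ?_ ?_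
  · exact k.even_or_odd.imp Even.neg_one_zpow Odd.neg_one_zpow
  · rw [abs_re_neg_one_zpow_mul]
    simpa using hk
  · rw [← reflect, abs_re_neg_one_zpow_mul]
    simpa using hk'

lemma reflectFold_eq (hr : r ∈ Ioc (1 / 2 : ℝ) (3 / 2))
    (hsymm : ∀ ε : ℂ, ε = 1 ∨ ε = -1 → ∀ z, |z.re| < r → |(ε - z).re| < r → f (ε - z) = f z)
    {k : ℤ} {z : ℂ} (hk : |z.re - k| < r) : reflectFold f z = f ((-1) ^ k * (z - k)) := by
  have hround : |z.re - round z.re| < r := (abs_sub_round z.re).trans_lt hr.1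
  have abs_sub_lt : |((k - round z.re : ℤ) : ℝ)| < 2 := by
    have := abs_sub_le (k : ℝ) z.re (round z.re)
    rw [abs_sub_comm (k : ℝ) z.re] at this
    push_cast
    linarith [abs_sub_round z.re, hr.2]
  have adjacent : k = round z.re ∨ k = round z.re + 1 ∨ round z.re = k + 1 := by
    have : |k - round z.re| < 2 := by exact_mod_cast abs_sub_lt
    grind
  rcases adjacent with rfl | rfl | h
  · rfl
  · push_cast at hk ⊢
    exact (apply_fold_add_one hsymm hround hk).symm
  · rw [reflectFold, h]
    rw [h] at hround
    push_cast at hround ⊢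
    exact apply_fold_add_one hsymm hk hround

lemma periodic_reflectFold (f : ℂ → E) : (reflectFold f).Periodic 2 := fun z => by
  have hround : round (z + 2).re = round z.re + 2 := by
    simp
  rw [reflectFold, reflectFold, hround, zpow_add₀ (by norm_num)]
  push_cast
  ring_nf

variable [NormedAddCommGroup E]

lemma norm_reflectFold_le {C : ℝ} {m : ℕ} (hC : 0 ≤ C)
    (hle : ∀ z : ℂ, |z.re| ≤ 1 / 2 → ‖f z‖ ≤ C * (1 + |z.im|) ^ m) (z : ℂ) :
    ‖reflectFold f z‖ ≤ C * (1 + ‖z‖) ^ m := by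
  refine (hle _ ?_).trans ?_
  · rw [abs_re_neg_one_zpow_mul]
    simpa using abs_sub_round z.re
  · rw [abs_im_neg_one_zpow_mul]
    have : |(z - (round z.re : ℤ)).im| ≤ ‖z‖ := by simpa using Complex.abs_im_le_norm z
    gcongr

variable [NormedSpace ℂ E]

lemma differentiable_reflectFold (hr : r ∈ Ioc (1 / 2 : ℝ) (3 / 2))
    (hf : ∀ z : ℂ, |z.re| < r → DifferentiableAt ℂ f z)
    (hsymm : ∀ ε : ℂ, ε = 1 ∨ ε = -1 → ∀ z, |z.re| < r → |(ε - z).re| < r → f (ε - z) = f z) :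
    Differentiable ℂ (reflectFold f) := by
  intro z
  set k := round z.re
  have hk : |z.re - k| < r := (abs_sub_round z.re).trans_lt hr.1
  have eventually_near : ∀ᶠ w : ℂ in 𝓝 z, |w.re - k| < r :=
    (isOpen_lt (by fun_prop) continuous_const).mem_nhds hk
  have fold_eq : reflectFold f =ᶠ[𝓝 z] fun w => f ((-1) ^ k * (w - k)) :=
    eventually_near.mono fun w hw => reflectFold_eq hr hsymm hw
  refine DifferentiableAt.congr_of_eventuallyEq (DifferentiableAt.comp z
    (hf ((-1) ^ k * (z - k)) ?_) (by fun_prop)) fold_eq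
  rw [abs_re_neg_one_zpow_mul]
  simpa using hk

lemma eq_of_reflection_symm_of_norm_le [CompleteSpace E] {C : ℝ} {m : ℕ}
    (hr : r ∈ Ioc (1 / 2 : ℝ) (3 / 2)) (hf : ∀ z : ℂ, |z.re| < r → DifferentiableAt ℂ f z)
    (hsymm : ∀ ε : ℂ, ε = 1 ∨ ε = -1 → ∀ z, |z.re| < r → |(ε - z).re| < r → f (ε - z) = f z)
    (hC : 0 ≤ C) (hle : ∀ z : ℂ, |z.re| ≤ 1 / 2 → ‖f z‖ ≤ C * (1 + |z.im|) ^ m) {z w : ℂ}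
    (hz : |z.re| < r) (hw : |w.re| < r) : f z = f w := by
  have fold_zero {u : ℂ} (hu : |u.re| < r) : reflectFold f u = f u := by
    simpa using reflectFold_eq hr hsymm (k := 0) (z := u) (by simpa using hu)
  rw [← fold_zero hz, ← fold_zero hw]
  exact eq_of_periodic_of_norm_le_pow two_ne_zero (differentiable_reflectFold hr hf hsymm)
    (periodic_reflectFold f) hC (norm_reflectFold_le hC hle) z w

end ReflectFold

section GammaBounds

lemma exists_norm_Gamma_le_mul_norm_Gamma_add {δ s : ℝ} (hδ : 0 < δ) (hs : 0 < s) :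
    ∃ K : ℝ, 0 ≤ K ∧
      ∀ z : ℂ, δ ≤ z.re → ‖Complex.Gamma z‖ ≤ K * ‖Complex.Gamma (z + s)‖ := by
  have betaIntegrable := Complex.betaIntegral_convergent (u := (δ : ℂ)) (v := (s : ℂ))
    (by simpa using hδ) (by simpa using hs)
  rw [intervalIntegrable_iff_integrableOn_Ioo_of_le zero_le_one] at betaIntegrable
  have Gamma_pos : 0 < ‖Complex.Gamma s‖ :=
    norm_pos_iff.2 (Complex.Gamma_ne_zero_of_re_pos (by simpa using hs))
  refine ⟨(∫ x in Ioo (0 : ℝ) 1, ‖(x : ℂ) ^ ((δ : ℂ) - 1) * (1 - (x : ℂ)) ^ ((s : ℂ) - 1)‖) /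
    ‖Complex.Gamma s‖, by positivity, fun z hz => ?_⟩
  have norm_beta_le : ‖Complex.betaIntegral z s‖ ≤
      ∫ x in Ioo (0 : ℝ) 1, ‖(x : ℂ) ^ ((δ : ℂ) - 1) * (1 - (x : ℂ)) ^ ((s : ℂ) - 1)‖ := by
    rw [Complex.betaIntegral, intervalIntegral.integral_of_le zero_le_one,
      integral_Ioc_eq_integral_Ioo]
    refine norm_integral_le_of_norm_le betaIntegrable.norm
      (ae_restrict_of_forall_mem measurableSet_Ioo fun x hx => ?_)
    rw [norm_mul, norm_mul, Complex.norm_cpow_eq_rpow_re_of_pos hx.1,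
      Complex.norm_cpow_eq_rpow_re_of_pos hx.1]
    gcongr ?_ * _
    exact Real.rpow_le_rpow_of_exponent_ge hx.1 hx.2.le (by simpa using hz)
  have Gamma_mul : ‖Complex.Gamma z‖ * ‖Complex.Gamma s‖ =
      ‖Complex.Gamma (z + s)‖ * ‖Complex.betaIntegral z s‖ := by
    rw [← norm_mul, ← norm_mul,
      Complex.Gamma_mul_Gamma_eq_betaIntegral (hδ.trans_le hz) (by simpa using hs)]
  rw [div_mul_eq_mul_div, le_div_iff₀ Gamma_pos, Gamma_mul, mul_comm]
  gcongr

lemma exp_abs_im_le_four_mul_norm_sin {z : ℂ} (h : 1 ≤ |z.im|) :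
    Real.exp |z.im| ≤ 4 * ‖Complex.sin z‖ := by
  wlog h0 : 0 ≤ z.im generalizing z
  · simpa using this (z := -z) (by simpa using h) (by simpa using (not_le.1 h0).le)
  rw [abs_of_nonneg h0] at h ⊢
  have sub_le : Real.exp z.im - Real.exp (-z.im) ≤ 2 * ‖Complex.sin z‖ := by
    have := norm_sub_norm_le (Complex.exp (-z * Complex.I)) (Complex.exp (z * Complex.I))
    have two_mul_norm : 2 * ‖Complex.sin z‖ = ‖2 * Complex.sin z‖ := by simp
    rw [two_mul_norm, Complex.two_sin, norm_mul, Complex.norm_I, mul_one]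
    simpa [Complex.norm_exp] using this
  have two_mul_le : 2 * Real.exp (-z.im) ≤ Real.exp z.im := by
    have : Real.exp z.im = Real.exp (2 * z.im) * Real.exp (-z.im) := by
      rw [← Real.exp_add]
      ring_nf
    rw [this]
    gcongr
    linarith [Real.add_one_le_exp (2 * z.im)]
  linarith

lemma norm_Gamma_mul_norm_Gamma_one_sub_le {z : ℂ} (h : 1 ≤ π * |z.im|) :
    ‖Complex.Gamma z‖ * ‖Complex.Gamma (1 - z)‖ ≤ 4 * π * Real.exp (-(π * |z.im|)) := by
  have abs_im : |(π * z).im| = π * |z.im| := by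
    rw [Complex.im_ofReal_mul, abs_mul, abs_of_pos Real.pi_pos]
  have exp_le := exp_abs_im_le_four_mul_norm_sin (z := π * z) (by rwa [abs_im])
  rw [abs_im] at exp_le
  have sin_pos : 0 < ‖Complex.sin (π * z)‖ := by linarith [Real.exp_pos (π * |z.im|)]
  rw [← norm_mul, Complex.Gamma_mul_Gamma_one_sub, norm_div, Complex.norm_real,
    Real.norm_of_nonneg Real.pi_pos.le, Real.exp_neg, ← div_eq_mul_inv,
    div_le_div_iff₀ sin_pos (Real.exp_pos _)]
  nlinarith [Real.pi_pos]

end GammaBounds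

section NormalizedIntegral

/-- The Gamma factor which turns the recurrence for `legendreCubeIntegral` into invariance under
the reflections `ν ↦ -1 - ν` and `ν ↦ 1 - ν`. -/
noncomputable def legendreCubeGammaFactor (ν : ℂ) : ℂ :=
  Complex.Gamma ((1 - ν) / 2) ^ 2 * Complex.Gamma (1 + ν / 2) ^ 2 *
    (Complex.Gamma (3 * (1 + ν) / 2) * Complex.Gamma (1 - 3 * ν / 2)) *
    (Complex.Gamma ((1 + ν) / 2))⁻¹ * (Complex.Gamma (1 - ν / 2))⁻¹

/-- The integral of `P_ν(1 - 2s)² P_ν(2s - 1)` over `(0, 1)` times its Gamma factor. -/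
noncomputable def normalizedLegendreCube (ν : ℂ) : ℂ :=
  legendreCubeIntegral (ν * (ν + 1)) * legendreCubeGammaFactor ν

variable {ν : ℂ}

lemma differentiableAt_Gamma_of_re_pos {z : ℂ} (hz : 0 < z.re) :
    DifferentiableAt ℂ Complex.Gamma z :=
  Complex.differentiableAt_Gamma z fun m hm => by
    rw [hm, Complex.neg_re, Complex.natCast_re] at hz
    linarith [m.cast_nonneg (α := ℝ)]

lemma differentiableAt_legendreCubeGammaFactor (h : |ν.re| < 2 / 3) :
    DifferentiableAt ℂ legendreCubeGammaFactor ν := by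
  obtain ⟨h1, h2⟩ := abs_lt.1 h
  have comp_re_pos {g : ℂ → ℂ} (hg : DifferentiableAt ℂ g ν) (hpos : 0 < (g ν).re) :
      DifferentiableAt ℂ (fun ν => Complex.Gamma (g ν)) ν :=
    (differentiableAt_Gamma_of_re_pos hpos).comp ν hg
  have comp_inv {g : ℂ → ℂ} (hg : DifferentiableAt ℂ g ν) :
      DifferentiableAt ℂ (fun ν => (Complex.Gamma (g ν))⁻¹) ν :=
    (Complex.differentiable_one_div_Gamma (g ν)).comp ν hg
  refine (((DifferentiableAt.mul ?_ ?_).mul (.mul ?_ ?_)).mul ?_).mul ?_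
  · exact (comp_re_pos (by fun_prop) (by simp; linarith)).pow 2
  · exact (comp_re_pos (by fun_prop) (by simp; linarith)).pow 2
  · exact comp_re_pos (by fun_prop) (by simp; linarith)
  · exact comp_re_pos (by fun_prop) (by simp; linarith)
  · exact comp_inv (by fun_prop)
  · exact comp_inv (by fun_prop)

lemma differentiableAt_normalizedLegendreCube (h : |ν.re| < 2 / 3) :
    DifferentiableAt ℂ normalizedLegendreCube ν :=
  ((differentiable_legendreCubeIntegral _).comp ν (by fun_prop)).mul
    (differentiableAt_legendreCubeGammaFactor h)

lemma normalizedLegendreCube_neg_one_sub (h0 : ν ≠ 0) (h1 : 1 + ν ≠ 0) :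
    normalizedLegendreCube (-1 - ν) = normalizedLegendreCube ν := by
  rw [normalizedLegendreCube, normalizedLegendreCube, legendreCubeGammaFactor,
    legendreCubeGammaFactor, show (-1 - ν) * (-1 - ν + 1) = ν * (ν + 1) by ring,
    show (1 - (-1 - ν)) / 2 = 1 + ν / 2 by ring, show 1 + (-1 - ν) / 2 = (1 - ν) / 2 by ring,
    show 3 * (1 + (-1 - ν)) / 2 = -3 * ν / 2 by ring,
    show 1 - 3 * (-1 - ν) / 2 = 3 * (1 + ν) / 2 + 1 by ring,
    show (1 + (-1 - ν)) / 2 = -ν / 2 by ring, show 1 - (-1 - ν) / 2 = (1 + ν) / 2 + 1 by ring,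
    show 1 - 3 * ν / 2 = -3 * ν / 2 + 1 by ring, show 1 - ν / 2 = -ν / 2 + 1 by ring,
    Complex.Gamma_add_one (3 * (1 + ν) / 2) (by simpa using h1),
    Complex.Gamma_add_one ((1 + ν) / 2) (by simpa using h1),
    Complex.Gamma_add_one (-3 * ν / 2) (by simpa using h0),
    Complex.Gamma_add_one (-ν / 2) (by simpa using h0), mul_inv, mul_inv]
  generalize (Complex.Gamma ((1 + ν) / 2))⁻¹ = A
  generalize (Complex.Gamma (-ν / 2))⁻¹ = B
  field_simp

lemma normalizedLegendreCube_one_sub (h1 : 1 / 3 < ν.re) (h2 : ν.re < 2 / 3) :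
    normalizedLegendreCube (1 - ν) = normalizedLegendreCube ν := by
  have ne_zero_of_re {z : ℂ} (hz : z.re ≠ 0) : z ≠ 0 := by
    rintro rfl
    exact hz rfl
  have recurrence := legendreCubeIntegral_recurrence (μ := ν - 1)
    (ne_zero_of_re (by simp; linarith)) (ne_zero_of_re (by simp; linarith))
  rw [show (ν - 1 + 1) * (ν - 1 + 2) = ν * (ν + 1) by ring,
    show (ν - 1) * (ν - 1 - 1) = (1 - ν) * (1 - ν + 1) by ring] at recurrence
  rw [normalizedLegendreCube, normalizedLegendreCube, legendreCubeGammaFactor,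
    legendreCubeGammaFactor, show (1 - (1 - ν)) / 2 = ν / 2 by ring,
    show 1 + (1 - ν) / 2 = (1 - ν) / 2 + 1 by ring,
    show 3 * (1 + (1 - ν)) / 2 = (1 - 3 * ν / 2) + 1 + 1 by ring,
    show 1 - 3 * (1 - ν) / 2 = 3 * ν / 2 - 1 / 2 by ring,
    show (1 + (1 - ν)) / 2 = 1 - ν / 2 by ring, show 1 - (1 - ν) / 2 = (1 + ν) / 2 by ring,
    show 3 * (1 + ν) / 2 = (3 * ν / 2 - 1 / 2) + 1 + 1 by ring,
    show 1 + ν / 2 = ν / 2 + 1 by ring,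
    Complex.Gamma_add_one ((1 - ν) / 2) (ne_zero_of_re (by simp; linarith)),
    Complex.Gamma_add_one (ν / 2) (ne_zero_of_re (by simp; linarith)),
    Complex.Gamma_add_one (1 - 3 * ν / 2 + 1) (ne_zero_of_re (by simp; linarith)),
    Complex.Gamma_add_one (1 - 3 * ν / 2) (ne_zero_of_re (by simp; linarith)),
    Complex.Gamma_add_one (3 * ν / 2 - 1 / 2 + 1) (ne_zero_of_re (by simp; linarith)),
    Complex.Gamma_add_one (3 * ν / 2 - 1 / 2) (ne_zero_of_re (by simp; linarith))]
  linear_combination (-1 / 16) * Complex.Gamma (ν / 2) ^ 2 * Complex.Gamma ((1 - ν) / 2) ^ 2 *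
    Complex.Gamma (1 - 3 * ν / 2) * Complex.Gamma (3 * ν / 2 - 1 / 2) *
    (Complex.Gamma ((1 + ν) / 2))⁻¹ * (Complex.Gamma (1 - ν / 2))⁻¹ * recurrence

lemma normalizedLegendreCube_zero : normalizedLegendreCube 0 = π / 2 := by
  have Gamma_half_sq : Complex.Gamma (1 / 2) ^ 2 = π := by
    rw [Complex.Gamma_one_half_eq, ← Complex.cpow_nat_mul]
    norm_num
  have Gamma_three_half : Complex.Gamma (3 / 2) = 1 / 2 * Complex.Gamma (1 / 2) := by
    rw [← Complex.Gamma_add_one (1 / 2) (by norm_num)]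
    norm_num
  simp only [normalizedLegendreCube, legendreCubeGammaFactor, zero_mul, legendreCubeIntegral_zero,
    sub_zero, zero_div, add_zero, mul_zero, mul_one, one_mul, one_pow, inv_one,
    Complex.Gamma_one, Gamma_three_half]
  field_simp
  exact Gamma_half_sq

end NormalizedIntegral

section NormalizedGrowth

variable {ν : ℂ}

lemma norm_le_of_abs_re_le (hre : |ν.re| ≤ 1 / 2) : ‖ν‖ ≤ 1 / 2 + |ν.im| := by
  grw [Complex.norm_le_abs_re_add_abs_im, hre]

lemma exists_norm_legendreCubeIntegral_strip_le : ∃ C : ℝ, 0 ≤ C ∧ ∀ ν : ℂ, |ν.re| ≤ 1 / 2 →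
    ‖legendreCubeIntegral (ν * (ν + 1))‖ ≤ C * (1 + |ν.im|) ^ 3 * Real.exp (2 * π * |ν.im|) := by
  obtain ⟨C, hC, bound⟩ := exists_norm_legendreCubeIntegral_le
  refine ⟨C * 9 ^ 3 * Real.exp (4 * π), by positivity, fun ν hre => ?_⟩
  have hν := norm_le_of_abs_re_le hre
  have norm_le : ‖ν * (ν + 1)‖ ≤ (|ν.im| + 2) ^ 2 := by
    grw [norm_mul, norm_add_le, norm_one, hν]
    nlinarith [abs_nonneg ν.im]
  have le_nine_mul : 1 + 4 * (|ν.im| + 2) ≤ 9 * (1 + |ν.im|) := by linarith [abs_nonneg ν.im]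
  have exp_eq : Real.exp (2 * π * (|ν.im| + 2)) = Real.exp (4 * π) * Real.exp (2 * π * |ν.im|) := by
    rw [← Real.exp_add]
    ring_nf
  grw [bound (by positivity) norm_le, le_nine_mul, exp_eq]
  exact le_of_eq (by ring)

lemma exists_norm_Gamma_half_sub_le : ∃ K : ℝ, 0 ≤ K ∧ ∀ ν : ℂ, |ν.re| ≤ 1 / 2 →
    ‖Complex.Gamma ((1 - ν) / 2)‖ ≤ K * ‖Complex.Gamma (1 - ν / 2)‖ := by
  obtain ⟨K, hK, bound⟩ := exists_norm_Gamma_le_mul_norm_Gamma_add (δ := 1 / 4) (s := 1 / 2)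
    (by norm_num) (by norm_num)
  refine ⟨K, hK, fun ν hre => ?_⟩
  convert bound ((1 - ν) / 2) (by simp; linarith [abs_le.1 hre]) using 4
  push_cast
  ring

lemma exists_norm_Gamma_one_add_half_le : ∃ K : ℝ, 0 ≤ K ∧ ∀ ν : ℂ, |ν.re| ≤ 1 / 2 →
    ‖Complex.Gamma (1 + ν / 2)‖ ≤ K * (1 + |ν.im|) * ‖Complex.Gamma ((1 + ν) / 2)‖ := by
  obtain ⟨K, hK, bound⟩ := exists_norm_Gamma_le_mul_norm_Gamma_add (δ := 3 / 4) (s := 1 / 2)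
    (by norm_num) (by norm_num)
  refine ⟨K, hK, fun ν hre => ?_⟩
  have re_bounds := abs_le.1 hre
  have ne_zero : (1 + ν) / 2 ≠ 0 := fun h => by
    have := congrArg Complex.re h
    simp at this
    linarith
  have norm_le : ‖(1 + ν) / 2‖ ≤ 1 + |ν.im| := by
    grw [norm_div, norm_add_le, norm_le_of_abs_re_le hre]
    norm_num
    linarith [abs_nonneg ν.im]
  have := bound (1 + ν / 2) (by simp; linarith)
  rw [show 1 + ν / 2 + ((1 / 2 : ℝ) : ℂ) = (1 + ν) / 2 + 1 by push_cast; ring,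
    Complex.Gamma_add_one _ ne_zero, norm_mul] at this
  grw [this, norm_le, mul_assoc]

lemma norm_Gamma_half_sub_mul_norm_Gamma_half_add_le (him : 1 ≤ |ν.im|) :
    ‖Complex.Gamma ((1 - ν) / 2)‖ * ‖Complex.Gamma ((1 + ν) / 2)‖ ≤
      4 * π * Real.exp (-(π / 2 * |ν.im|)) := by
  have abs_im : |((1 + ν) / 2).im| = |ν.im| / 2 := by simp [abs_div]
  have := norm_Gamma_mul_norm_Gamma_one_sub_le (z := (1 + ν) / 2)
    (by rw [abs_im]; nlinarith [Real.pi_gt_three])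
  rw [abs_im, show 1 - (1 + ν) / 2 = (1 - ν) / 2 by ring] at this
  convert this using 1 <;> ring_nf

lemma exists_norm_Gamma_add_one_mul_norm_Gamma_sub_le {δ : ℝ} (hδ : 0 < δ) : ∃ K : ℝ, 0 ≤ K ∧
    ∀ z : ℂ, z.re ≤ 3 / 2 - δ → 1 ≤ π * |z.im| →
      ‖Complex.Gamma (z + 1)‖ * ‖Complex.Gamma (3 / 2 - z)‖ ≤
        K * (‖z‖ * ‖1 - z‖ * ‖2 - z‖) * Real.exp (-(π * |z.im|)) := by
  obtain ⟨K, hK, bound⟩ := exists_norm_Gamma_le_mul_norm_Gamma_add hδ (s := 3 / 2) (by norm_num)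
  refine ⟨4 * π * K, by positivity, fun z hre him => ?_⟩
  have ne_zero_of_im {w : ℂ} (hw : |w.im| = |z.im|) : w ≠ 0 := by
    rintro rfl
    simp only [← hw, Complex.zero_im, abs_zero, mul_zero] at him
    linarith
  have right_le := bound (3 / 2 - z) (by simp; linarith)
  rw [show 3 / 2 - z + ((3 / 2 : ℝ) : ℂ) = 1 - z + 1 + 1 by push_cast; ring,
    Complex.Gamma_add_one _ (ne_zero_of_im (by simp)),
    Complex.Gamma_add_one _ (ne_zero_of_im (by simp)), norm_mul, norm_mul,
    show 1 - z + 1 = 2 - z by ring] at right_le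
  rw [Complex.Gamma_add_one _ (ne_zero_of_im rfl), norm_mul]
  grw [right_le]
  calc
    _ = K * (‖z‖ * ‖1 - z‖ * ‖2 - z‖) * (‖Complex.Gamma z‖ * ‖Complex.Gamma (1 - z)‖) := by ring
    _ ≤ K * (‖z‖ * ‖1 - z‖ * ‖2 - z‖) * (4 * π * Real.exp (-(π * |z.im|))) := by
      grw [norm_Gamma_mul_norm_Gamma_one_sub_le him]
    _ = _ := by ring

lemma exists_norm_Gamma_mul_norm_Gamma_triple_le : ∃ K : ℝ, 0 ≤ K ∧
    ∀ ν : ℂ, |ν.re| ≤ 1 / 2 → 1 ≤ |ν.im| →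
      ‖Complex.Gamma (3 * (1 + ν) / 2)‖ * ‖Complex.Gamma (1 - 3 * ν / 2)‖ ≤
        K * (1 + |ν.im|) ^ 3 * Real.exp (-(3 * π / 2 * |ν.im|)) := by
  obtain ⟨K, hK, bound⟩ := exists_norm_Gamma_add_one_mul_norm_Gamma_sub_le (δ := 1 / 4)
    (by norm_num)
  refine ⟨12 * K, by positivity, fun ν hre him => ?_⟩
  set z := 1 / 2 + 3 / 2 * ν with hz
  have abs_im : |z.im| = 3 / 2 * |ν.im| := by
    rw [show z.im = 3 / 2 * ν.im by simp [hz], abs_mul, abs_of_pos (by norm_num)]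
  have norm_three_half_mul_le : ‖3 / 2 * ν‖ ≤ 3 / 2 * (1 / 2 + |ν.im|) := by
    grw [norm_mul, norm_le_of_abs_re_le hre]
    norm_num
  have norm_le : ‖z‖ ≤ 2 * (1 + |ν.im|) := by
    grw [hz, norm_add_le, norm_three_half_mul_le]
    norm_num
    linarith
  have norm_one_sub_le : ‖1 - z‖ ≤ 2 * (1 + |ν.im|) := by
    grw [hz, show 1 - (1 / 2 + 3 / 2 * ν) = 1 / 2 - 3 / 2 * ν by ring, norm_sub_le,
      norm_three_half_mul_le]
    norm_num
    linarith
  have norm_two_sub_le : ‖2 - z‖ ≤ 3 * (1 + |ν.im|) := by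
    grw [show 2 - z = 1 + (1 - z) by ring, norm_add_le, norm_one_sub_le, norm_one]
    linarith
  rw [show 3 * (1 + ν) / 2 = z + 1 by rw [hz]; ring,
    show 1 - 3 * ν / 2 = 3 / 2 - z by rw [hz]; ring]
  grw [bound z (by simp [hz]; linarith [abs_le.1 hre])
    (by rw [abs_im]; nlinarith [Real.pi_gt_three]), norm_le, norm_one_sub_le, norm_two_sub_le,
    abs_im]
  refine le_of_eq ?_
  ring_nf

lemma exists_norm_legendreCubeGammaFactor_le : ∃ C : ℝ, 0 ≤ C ∧
    ∀ ν : ℂ, |ν.re| ≤ 1 / 2 → 1 ≤ |ν.im| → ‖legendreCubeGammaFactor ν‖ ≤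
      C * (1 + |ν.im|) ^ 5 * Real.exp (-(2 * π * |ν.im|)) := by
  obtain ⟨K₁, hK₁, half_sub_le⟩ := exists_norm_Gamma_half_sub_le
  obtain ⟨K₂, _, one_add_half_le⟩ := exists_norm_Gamma_one_add_half_le
  obtain ⟨K₃, hK₃, triple_le⟩ := exists_norm_Gamma_mul_norm_Gamma_triple_le
  refine ⟨4 * π * K₁ * K₂ ^ 2 * K₃, by positivity, fun ν hre him => ?_⟩
  have re_bounds := abs_le.1 hre
  have half_add_pos : 0 < ‖Complex.Gamma ((1 + ν) / 2)‖ :=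
    norm_pos_iff.2 (Complex.Gamma_ne_zero_of_re_pos (by simp; linarith))
  have one_sub_pos : 0 < ‖Complex.Gamma (1 - ν / 2)‖ :=
    norm_pos_iff.2 (Complex.Gamma_ne_zero_of_re_pos (by simp; linarith))
  simp only [legendreCubeGammaFactor, norm_mul, norm_pow, norm_inv]
  rw [sq ‖Complex.Gamma ((1 - ν) / 2)‖]
  calc
    _ ≤ ‖Complex.Gamma ((1 - ν) / 2)‖ * (K₁ * ‖Complex.Gamma (1 - ν / 2)‖) *
          (K₂ * (1 + |ν.im|) * ‖Complex.Gamma ((1 + ν) / 2)‖) ^ 2 *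
          (K₃ * (1 + |ν.im|) ^ 3 * Real.exp (-(3 * π / 2 * |ν.im|))) *
          ‖Complex.Gamma ((1 + ν) / 2)‖⁻¹ * ‖Complex.Gamma (1 - ν / 2)‖⁻¹ := by
      gcongr ‖_‖ * ?_ * ?_ ^ 2 * ?_ * _ * _
      exacts [half_sub_le ν hre, one_add_half_le ν hre, triple_le ν hre him]
    _ = K₁ * K₂ ^ 2 * K₃ * (1 + |ν.im|) ^ 5 *
          (‖Complex.Gamma ((1 - ν) / 2)‖ * ‖Complex.Gamma ((1 + ν) / 2)‖) *
          Real.exp (-(3 * π / 2 * |ν.im|)) := by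
      generalize ‖Complex.Gamma (1 - ν / 2)‖ = g at one_sub_pos ⊢
      field_simp
    _ ≤ K₁ * K₂ ^ 2 * K₃ * (1 + |ν.im|) ^ 5 * (4 * π * Real.exp (-(π / 2 * |ν.im|))) *
          Real.exp (-(3 * π / 2 * |ν.im|)) := by
      gcongr _ * ?_ * _
      exact norm_Gamma_half_sub_mul_norm_Gamma_half_add_le him
    _ = 4 * π * K₁ * K₂ ^ 2 * K₃ * (1 + |ν.im|) ^ 5 *
          (Real.exp (-(π / 2 * |ν.im|)) * Real.exp (-(3 * π / 2 * |ν.im|))) := by ring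
    _ = _ := by rw [← Real.exp_add]; ring_nf

lemma exists_norm_normalizedLegendreCube_le : ∃ C : ℝ, 0 ≤ C ∧ ∀ ν : ℂ, |ν.re| ≤ 1 / 2 →
    ‖normalizedLegendreCube ν‖ ≤ C * (1 + |ν.im|) ^ 8 := by
  obtain ⟨C₁, hC₁, integral_le⟩ := exists_norm_legendreCubeIntegral_strip_le
  obtain ⟨C₂, hC₂, factor_le⟩ := exists_norm_legendreCubeGammaFactor_le
  have isCompact_near : IsCompact (Metric.closedBall (0 : ℂ) 2 ∩ {ν : ℂ | |ν.re| ≤ 1 / 2}) :=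
    (isCompact_closedBall _ _).inter_right (isClosed_le (by fun_prop) continuous_const)
  obtain ⟨B, near_le⟩ := isCompact_near.exists_bound_of_continuousOn (f := normalizedLegendreCube)
    fun ν hν => (differentiableAt_normalizedLegendreCube
      (hν.2.trans_lt (by norm_num))).continuousAt.continuousWithinAt
  refine ⟨max B (C₁ * C₂), le_max_of_le_right (by positivity), fun ν hre => ?_⟩
  rcases le_total |ν.im| 1 with him | him
  · have one_le : 1 ≤ (1 + |ν.im|) ^ 8 := one_le_pow₀ (by linarith [abs_nonneg ν.im])
    have norm_le := near_le ν ⟨by simpa using (norm_le_of_abs_re_le hre).trans (by linarith), hre⟩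
    exact (norm_le.trans (le_max_left _ _)).trans
      (le_mul_of_one_le_right (le_max_of_le_right (by positivity)) one_le)
  · have exp_mul_exp : Real.exp (2 * π * |ν.im|) * Real.exp (-(2 * π * |ν.im|)) = 1 := by
      rw [← Real.exp_add, add_neg_cancel, Real.exp_zero]
    rw [normalizedLegendreCube]
    grw [norm_mul, integral_le ν hre, factor_le ν hre him, ← le_max_right B (C₁ * C₂)]
    refine le_of_eq ?_
    linear_combination C₁ * C₂ * (1 + |ν.im|) ^ 8 * exp_mul_exp

lemma normalizedLegendreCube_eq (hν : |ν.re| < 2 / 3) : normalizedLegendreCube ν = π / 2 := by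
  obtain ⟨C, hC, bound⟩ := exists_norm_normalizedLegendreCube_le
  rw [← normalizedLegendreCube_zero]
  refine eq_of_reflection_symm_of_norm_le ⟨by norm_num, by norm_num⟩
    (fun _ => differentiableAt_normalizedLegendreCube) ?_ hC bound hν (by norm_num)
  rintro _ (rfl | rfl) z hz hz'
  · simp only [Complex.sub_re, Complex.one_re, abs_lt] at hz hz'
    exact normalizedLegendreCube_one_sub (by linarith) (by linarith)
  · simp only [Complex.sub_re, Complex.neg_re, Complex.one_re, abs_lt] at hz hz'
    refine normalizedLegendreCube_neg_one_sub ?_ fun h => ?_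
    · rintro rfl
      norm_num at hz'
    · have := congrArg Complex.re h
      simp at this
      linarith

end NormalizedGrowth

section GaussMultiplication

lemma convexOn_log_Gamma_add_div {a c : ℝ} (ha : 0 ≤ a) (hc : 0 < c) :
    ConvexOn ℝ (Ioi 0) fun s => Real.log (Real.Gamma ((s + a) / c)) := by
  refine ⟨convex_Ioi 0, fun x hx y hy p q hp hq hpq => ?_⟩
  rw [mem_Ioi] at hx hy
  have := Real.convexOn_log_Gamma.2 (x := (x + a) / c) (y := (y + a) / c)
    (by simp only [mem_Ioi]; positivity) (by simp only [mem_Ioi]; positivity) hp hq hpq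
  simp only [smul_eq_mul, Function.comp_apply] at this ⊢
  convert this using 3
  linear_combination (-a / c) * hpq

/-- The function which the Bohr–Mollerup theorem identifies with `Γ` to give Gauss's multiplication
formula with `m + 1` factors. -/
noncomputable def gaussGammaProd (m : ℕ) (s : ℝ) : ℝ :=
  (m + 1) ^ (s - 1) * (∏ k ∈ Finset.range (m + 1), Real.Gamma ((s + k) / (m + 1))) /
    ∏ k ∈ Finset.range m, Real.Gamma ((k + 1) / (m + 1))

variable (m : ℕ)

lemma prod_Gamma_pos {s : ℝ} (hs : 0 < s) (n : ℕ) :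
    0 < ∏ k ∈ Finset.range n, Real.Gamma ((s + k) / (m + 1)) :=
  Finset.prod_pos fun _ _ => Real.Gamma_pos_of_pos (by positivity)

lemma prod_Gamma_succ_pos : 0 < ∏ k ∈ Finset.range m, Real.Gamma ((k + 1) / (m + 1)) :=
  Finset.prod_pos fun _ _ => Real.Gamma_pos_of_pos (by positivity)

lemma convexOn_log_gaussGammaProd : ConvexOn ℝ (Ioi 0) (Real.log ∘ gaussGammaProd m) := by
  have convexOn_linear : ConvexOn ℝ (Ioi 0) fun s : ℝ => Real.log (m + 1) * s :=
    (convexOn_id (convex_Ioi 0)).smul (Real.log_nonneg (by simp))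
  have convexOn_sum : ConvexOn ℝ (Ioi 0)
      (∑ k ∈ Finset.range (m + 1), fun s : ℝ => Real.log (Real.Gamma ((s + k) / (m + 1)))) :=
    Finset.sum_induction _ (ConvexOn ℝ (Ioi 0)) (fun _ _ => ConvexOn.add)
      (convexOn_const 0 (convex_Ioi 0)) fun k _ =>
        convexOn_log_Gamma_add_div k.cast_nonneg (by positivity)
  refine ((convexOn_linear.add convexOn_sum).add_const (-Real.log (m + 1) -
    Real.log (∏ k ∈ Finset.range m, Real.Gamma ((k + 1) / (m + 1))))).congr fun s hs => ?_
  rw [Function.comp_apply, gaussGammaProd,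
    Real.log_div (by have := prod_Gamma_pos m hs (m + 1); positivity) (prod_Gamma_succ_pos m).ne',
    Real.log_mul (by positivity) (prod_Gamma_pos m hs _).ne', Real.log_rpow (by positivity),
    Real.log_prod (s := Finset.range (m + 1)) fun k _ => ?_]
  · simp only [Pi.add_apply, Finset.sum_apply]
    ring
  · rw [mem_Ioi] at hs
    exact (Real.Gamma_pos_of_pos (by positivity)).ne'

lemma gaussGammaProd_add_one {y : ℝ} (hy : 0 < y) :
    gaussGammaProd m (y + 1) = y * gaussGammaProd m y := by
  have Gamma_last : Real.Gamma ((y + 1 + m) / (m + 1)) =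
      y / (m + 1) * Real.Gamma ((y + (0 : ℕ)) / (m + 1)) := by
    rw [Nat.cast_zero, add_zero, ← Real.Gamma_add_one (by positivity)]
    congr 1
    field_simp
    ring
  have shift (k : ℕ) : (y + 1 + k) / (m + 1) = (y + (k + 1 : ℕ)) / (m + 1) := by
    push_cast
    ring
  have rpow_shift : ((m : ℝ) + 1) ^ (y + 1 - 1) = (m + 1) ^ (y - 1) * (m + 1) := by
    rw [← Real.rpow_add_one (by positivity)]
    ring_nf
  rw [gaussGammaProd, gaussGammaProd, Finset.prod_range_succ, Finset.prod_range_succ', Gamma_last,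
    rpow_shift]
  simp only [shift]
  field_simp

lemma gaussGammaProd_one : gaussGammaProd m 1 = 1 := by
  have := (prod_Gamma_succ_pos m).ne'
  rw [gaussGammaProd, Finset.prod_range_succ, add_comm (1 : ℝ) m, div_self (by positivity)]
  simp [add_comm (1 : ℝ), this]

lemma Gamma_mul_prod_Gamma {s : ℝ} (hs : 0 < s) :
    Real.Gamma s * ∏ k ∈ Finset.range m, Real.Gamma ((k + 1) / (m + 1)) =
      (m + 1) ^ (s - 1) * ∏ k ∈ Finset.range (m + 1), Real.Gamma ((s + k) / (m + 1)) := by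
  have gaussGammaProd_pos {y : ℝ} (hy : 0 < y) : 0 < gaussGammaProd m y := by
    have := prod_Gamma_pos m hy (m + 1)
    have := prod_Gamma_succ_pos m
    rw [gaussGammaProd]
    positivity
  rw [← Real.eq_Gamma_of_log_convex (convexOn_log_gaussGammaProd m) (gaussGammaProd_add_one m)
    gaussGammaProd_pos (gaussGammaProd_one m) hs, gaussGammaProd,
    div_mul_cancel₀ _ (prod_Gamma_succ_pos m).ne']

end GaussMultiplication

section SpecialValue

lemma three_rpow_neg_three_div_four : (3 : ℝ) ^ (-(3 / 4) : ℝ) = √2 / (√3 * √(2 * √3)) := by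
  have sqrt_eq : √3 = (3 : ℝ) ^ (1 / 2 : ℝ) := Real.sqrt_eq_rpow 3
  have sqrt_sqrt_eq : √√3 = (3 : ℝ) ^ (1 / 4 : ℝ) := by
    rw [sqrt_eq, Real.sqrt_eq_rpow, ← Real.rpow_mul (by norm_num)]
    norm_num
  rw [Real.sqrt_mul (by norm_num), mul_left_comm, sqrt_sqrt_eq, sqrt_eq,
    ← Real.rpow_add (by norm_num), div_mul_cancel_left₀ (by positivity),
    ← Real.rpow_neg (by norm_num)]
  norm_num

lemma Gamma_one_div_twelve_mul_Gamma_five_div_twelve :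
    Real.Gamma (1 / 12) * Real.Gamma (5 / 12) = √(2 * √3) * Real.Gamma (1 / 4) ^ 2 := by
  have triplication := Gamma_mul_prod_Gamma 2 (s := 1 / 4) (by norm_num)
  norm_num [Finset.prod_range_succ] at triplication
  have reflection_third := Real.Gamma_mul_Gamma_one_sub (1 / 3)
  rw [show (1 : ℝ) - 1 / 3 = 2 / 3 by norm_num, show π * (1 / 3) = π / 3 by ring,
    Real.sin_pi_div_three] at reflection_third
  have reflection_fourth := Real.Gamma_mul_Gamma_one_sub (1 / 4)
  rw [show (1 : ℝ) - 1 / 4 = 3 / 4 by norm_num, show π * (1 / 4) = π / 4 by ring,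
    Real.sin_pi_div_four] at reflection_fourth
  rw [reflection_third, three_rpow_neg_three_div_four] at triplication
  field_simp at triplication reflection_fourth
  rw [mul_comm √3] at triplication
  refine mul_left_cancel₀ (mul_pos two_pos Real.pi_pos).ne' ?_
  linear_combination (-Real.Gamma (1 / 4)) * triplication -
    Real.Gamma (1 / 12) * Real.Gamma (5 / 12) * reflection_fourth

lemma Gamma_seven_div_twelve_mul_Gamma_eleven_div_twelve :
    Real.Gamma (7 / 12) * Real.Gamma (11 / 12) * (√(2 * √3) * Real.Gamma (1 / 4) ^ 2) =
      4 * π ^ 2 := by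
  have reflection₁ := Real.Gamma_mul_Gamma_one_sub (1 / 12)
  have reflection₅ := Real.Gamma_mul_Gamma_one_sub (5 / 12)
  rw [show (1 : ℝ) - 1 / 12 = 11 / 12 by norm_num] at reflection₁
  rw [show (1 : ℝ) - 5 / 12 = 7 / 12 by norm_num,
    show π * (5 / 12) = π / 2 - π * (1 / 12) by ring, Real.sin_pi_div_two_sub] at reflection₅
  have sin_mul_cos : Real.sin (π * (1 / 12)) * Real.cos (π * (1 / 12)) = 1 / 4 := by
    have := Real.sin_two_mul (π * (1 / 12))
    rw [show 2 * (π * (1 / 12)) = π / 6 by ring, Real.sin_pi_div_six] at this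
    linarith
  rw [← Gamma_one_div_twelve_mul_Gamma_five_div_twelve]
  calc
    _ = Real.Gamma (1 / 12) * Real.Gamma (11 / 12) *
        (Real.Gamma (5 / 12) * Real.Gamma (7 / 12)) := by ring
    _ = 4 * π ^ 2 := by
      rw [reflection₁, reflection₅, div_mul_div_comm, sin_mul_cos]
      ring

lemma legendreCubeGammaFactor_neg_one_div_six : legendreCubeGammaFactor (-1 / 6) =
    (12 * π ^ 4 / (√(2 * √3) ^ 3 * Real.Gamma (1 / 4) ^ 4) : ℝ) := by
  have Gamma_succ₁ : Real.Gamma (13 / 12) = 1 / 12 * Real.Gamma (1 / 12) := by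
    rw [← Real.Gamma_add_one (by norm_num)]
    norm_num
  have Gamma_succ₃ : Real.Gamma (5 / 4) = 1 / 4 * Real.Gamma (1 / 4) := by
    rw [← Real.Gamma_add_one (by norm_num)]
    norm_num
  have ofReal_factor : legendreCubeGammaFactor (-1 / 6) =
      ((Real.Gamma (7 / 12) * Real.Gamma (11 / 12)) ^ 2 * Real.Gamma (5 / 4) ^ 2 /
        (Real.Gamma (5 / 12) * Real.Gamma (13 / 12)) : ℝ) := by
    push_cast [← Complex.Gamma_ofReal]
    norm_num [legendreCubeGammaFactor]
    ring
  rw [ofReal_factor, Gamma_succ₁, Gamma_succ₃,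
    eq_div_of_mul_eq (by positivity) Gamma_seven_div_twelve_mul_Gamma_eleven_div_twelve,
    mul_left_comm, mul_comm (Real.Gamma (5 / 12)), Gamma_one_div_twelve_mul_Gamma_five_div_twelve]
  congr 1
  field_simp

lemma legendreCubeIntegral_neg_five_div_thirtysix : legendreCubeIntegral (-5 / 36) =
    (√(2 * √3) ^ 3 * Real.Gamma (1 / 4) ^ 4 / (24 * π ^ 3) : ℝ) := by
  have value := normalizedLegendreCube_eq (ν := -1 / 6) (by norm_num [abs_div])
  rw [normalizedLegendreCube, legendreCubeGammaFactor_neg_one_div_six,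
    show (-1 / 6 : ℂ) * (-1 / 6 + 1) = -5 / 36 by norm_num] at value
  rw [eq_div_of_mul_eq (Complex.ofReal_ne_zero.2 (by positivity)) value]
  norm_cast
  field_simp
  norm_num

end SpecialValue

section EllipticK

lemma ring_choose_succ_mul {R : Type*} [Field R] [CharZero R] (a : R) (n : ℕ) :
    Ring.choose a (n + 1) * (n + 1) = Ring.choose a n * (a - n) := by
  rw [Ring.choose_eq_smul, Ring.choose_eq_smul, descPochhammer_succ_right, Polynomial.smeval_mul,
    Polynomial.smeval_sub]
  simp only [Nat.factorial_succ, Nat.cast_mul, Nat.cast_add_one, Polynomial.smeval_X, pow_one,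
    Polynomial.smeval_natCast, pow_zero, nsmul_eq_mul, mul_one, smul_eq_mul]
  field_simp

lemma centralBinom_div_four_pow_succ (n : ℕ) :
    ((n + 1).centralBinom / 4 ^ (n + 1) : ℝ) =
      n.centralBinom / 4 ^ n * ((2 * n + 1) / (2 * n + 2)) := by
  have succ_mul : ((n : ℝ) + 1) * (n + 1).centralBinom = 2 * (2 * n + 1) * n.centralBinom := by
    exact_mod_cast Nat.succ_mul_centralBinom_succ n
  rw [pow_succ, div_mul_div_comm, div_eq_div_iff (by positivity) (by positivity)]
  linear_combination 2 * 4 ^ n * succ_mul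

lemma centralBinom_div_four_pow_le_one (n : ℕ) : (n.centralBinom / 4 ^ n : ℝ) ≤ 1 :=
  div_le_one_of_le₀ (by exact_mod_cast Nat.centralBinom_le_four_pow n) (by positivity)

lemma ring_choose_neg_half (n : ℕ) :
    Ring.choose (-1 / 2 : ℝ) n = (-1) ^ n * (n.centralBinom / 4 ^ n) := by
  induction n with
  | zero => simp
  | succ n ih =>
    rw [eq_div_of_mul_eq n.cast_add_one_ne_zero (ring_choose_succ_mul (-1 / 2 : ℝ) n), ih,
      centralBinom_div_four_pow_succ, pow_succ]
    field_simp
    ring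

lemma hasSum_one_div_sqrt_one_sub {x : ℝ} (h0 : 0 ≤ x) (h1 : x < 1) :
    HasSum (fun n : ℕ => (n.centralBinom / 4 ^ n : ℝ) * x ^ n) (1 / √(1 - x)) := by
  have hasSum_binomial := (Real.one_add_rpow_hasFPowerSeriesOnBall_zero (a := -1 / 2)).hasSum
    (y := -x) (by simpa [Metric.mem_eball, edist_dist, abs_of_nonneg h0] using h1)
  simp only [binomialSeries_apply, ring_choose_neg_half, smul_eq_mul, List.ofFn_const,
    List.prod_replicate, zero_add] at hasSum_binomial
  have rpow_eq : (1 + -x) ^ (-1 / 2 : ℝ) = 1 / √(1 - x) := by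
    rw [← sub_eq_add_neg, neg_div, Real.rpow_neg (by linarith), ← Real.sqrt_eq_rpow, one_div]
  rw [rpow_eq] at hasSum_binomial
  refine hasSum_binomial.congr_fun fun n => ?_
  have neg_one_pow_mul_self : (-1 : ℝ) ^ n * (-1) ^ n = 1 := by simp [← mul_pow]
  rw [neg_pow x]
  linear_combination -(n.centralBinom / 4 ^ n : ℝ) * x ^ n * neg_one_pow_mul_self

lemma integral_sin_pow_two_mul (n : ℕ) :
    ∫ θ in (0 : ℝ)..(π / 2), Real.sin θ ^ (2 * n) = π / 2 * (n.centralBinom / 4 ^ n) := by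
  induction n with
  | zero => simp
  | succ n ih =>
    rw [mul_add_one, integral_sin_pow, ih, centralBinom_div_four_pow_succ]
    push_cast
    simp
    ring

lemma legendreCoeff_neg_one_div_four (n : ℕ) :
    legendreCoeff (-1 / 4 : ℝ) n = (n.centralBinom / 4 ^ n) ^ 2 := by
  induction n with
  | zero => simp
  | succ n ih =>
    rw [legendreCoeff_succ, ih, centralBinom_div_four_pow_succ]
    field_simp
    ring

lemma hasSum_ellipticK_sqrt {t : ℝ} (h0 : 0 ≤ t) (h1 : t < 1) :
    HasSum (fun n : ℕ => ∫ θ in (0 : ℝ)..(π / 2),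
      (n.centralBinom / 4 ^ n : ℝ) * (t * Real.sin θ ^ 2) ^ n) (ellipticK (√t)) := by
  have sin_sq_nonneg (θ : ℝ) : 0 ≤ t * Real.sin θ ^ 2 := by positivity
  have sin_sq_le (θ : ℝ) : t * Real.sin θ ^ 2 ≤ t :=
    mul_le_of_le_one_right h0 (Real.sin_sq_le_one θ)
  rw [ellipticK, Real.sq_sqrt h0]
  refine intervalIntegral.hasSum_integral_of_dominated_convergence (fun n _ => t ^ n)
    (fun n => ?_) (fun n => .of_forall fun θ _ => ?_)
    (.of_forall fun _ _ => summable_geometric_of_lt_one h0 h1) (by simp)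
    (.of_forall fun θ _ =>
      hasSum_one_div_sqrt_one_sub (sin_sq_nonneg θ) ((sin_sq_le θ).trans_lt h1))
  · exact Continuous.aestronglyMeasurable (by fun_prop)
  · have := sin_sq_nonneg θ
    rw [Real.norm_of_nonneg (by positivity)]
    grw [centralBinom_div_four_pow_le_one, sin_sq_le, one_mul]

lemma integral_centralBinom_mul_sin_pow (t : ℝ) (n : ℕ) :
    ∫ θ in (0 : ℝ)..(π / 2), (n.centralBinom / 4 ^ n : ℝ) * (t * Real.sin θ ^ 2) ^ n =
      π / 2 * (t ^ n • legendreCoeff (-1 / 4 : ℝ) n) := by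
  simp only [mul_pow, ← pow_mul]
  rw [intervalIntegral.integral_const_mul, intervalIntegral.integral_const_mul,
    integral_sin_pow_two_mul, legendreCoeff_neg_one_div_four, smul_eq_mul]
  ring

lemma ellipticK_sqrt {t : ℝ} (h0 : 0 ≤ t) (h1 : t < 1) :
    ellipticK (√t) = π / 2 * legendreFun (-1 / 4 : ℝ) t := by
  have hasSum_K := hasSum_ellipticK_sqrt h0 h1
  simp only [integral_centralBinom_mul_sin_pow] at hasSum_K
  have hasSum_legendreFun : HasSum (fun n => t ^ n • legendreCoeff (-1 / 4 : ℝ) n)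
      (legendreFun (-1 / 4 : ℝ) t) :=
    (summable_pow_smul (norm_legendreCoeff_le _) h0 h1).hasSum
  exact hasSum_K.unique (hasSum_legendreFun.mul_left _)

end EllipticK

section CubicTransformation

/-- The multiplier `(1 - t + t²)^{1/4}` of the cubic transformation of `legendreFun (-1/4)`. -/
noncomputable def cubicMultiplier (t : ℝ) : ℝ := (1 - t + t ^ 2) ^ (1 / 4 : ℝ)

/-- The modular substitution `s = cubicModulus t` of the cubic transformation, an increasing
bijection of `(0, 1)` under which `legendreFun (-5/36) s` becomes `legendreFun (-1/4) t` up to the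
factor `cubicMultiplier t`. -/
noncomputable def cubicModulus (t : ℝ) : ℝ :=
  1 / 2 - (2 - 3 * t - 3 * t ^ 2 + 2 * t ^ 3) / (4 * cubicMultiplier t ^ 6)

lemma one_sub_add_sq_pos (t : ℝ) : 0 < 1 - t + t ^ 2 := by nlinarith [sq_nonneg (t - 1 / 2)]

lemma cubicMultiplier_pos (t : ℝ) : 0 < cubicMultiplier t :=
  Real.rpow_pos_of_pos (one_sub_add_sq_pos t) _

lemma cubicMultiplier_pow (t : ℝ) (n : ℕ) :
    cubicMultiplier t ^ n = (1 - t + t ^ 2) ^ (n / 4 : ℝ) := by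
  rw [cubicMultiplier, ← Real.rpow_mul_natCast (one_sub_add_sq_pos t).le, div_mul_eq_mul_div,
    one_mul]

lemma cubicMultiplier_pow_four (t : ℝ) : cubicMultiplier t ^ 4 = 1 - t + t ^ 2 := by
  simp [cubicMultiplier_pow]

lemma cubicMultiplier_one_sub (t : ℝ) : cubicMultiplier (1 - t) = cubicMultiplier t := by
  rw [cubicMultiplier, cubicMultiplier]
  ring_nf

@[simp]
lemma cubicMultiplier_zero : cubicMultiplier 0 = 1 := by simp [cubicMultiplier]

lemma hasDerivAt_cubicMultiplier (t : ℝ) :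
    HasDerivAt cubicMultiplier ((2 * t - 1) / (4 * cubicMultiplier t ^ 3)) t := by
  have hasDerivAt_base : HasDerivAt (fun t : ℝ => 1 - t + t ^ 2) (2 * t - 1) t :=
    (((hasDerivAt_id' t).const_sub 1).fun_add (hasDerivAt_pow 2 t)).congr_deriv
      (by push_cast; ring)
  refine (hasDerivAt_base.rpow_const (p := 1 / 4)
    (.inl (one_sub_add_sq_pos t).ne')).congr_deriv ?_
  have rpow_sub_one : (1 - t + t ^ 2) ^ (1 / 4 - 1 : ℝ) = (cubicMultiplier t ^ 3)⁻¹ := by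
    rw [cubicMultiplier_pow, ← Real.rpow_neg (one_sub_add_sq_pos t).le]
    norm_num
  rw [rpow_sub_one]
  field_simp

lemma continuous_cubicMultiplier : Continuous cubicMultiplier :=
  continuous_iff_continuousAt.2 fun t => (hasDerivAt_cubicMultiplier t).continuousAt

lemma hasDerivAt_cubicModulus (t : ℝ) :
    HasDerivAt cubicModulus (27 / 8 * (t * (1 - t)) / cubicMultiplier t ^ 10) t := by
  have pow_four := cubicMultiplier_pow_four t
  have multiplier_pos := cubicMultiplier_pos t
  have hasDerivAt_num : HasDerivAt (fun t : ℝ => 2 - 3 * t - 3 * t ^ 2 + 2 * t ^ 3)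
      (-3 - 6 * t + 6 * t ^ 2) t :=
    (((((hasDerivAt_id' t).const_mul 3).const_sub 2).fun_sub
      ((hasDerivAt_pow 2 t).const_mul 3)).fun_add ((hasDerivAt_pow 3 t).const_mul 2)).congr_deriv
      (by push_cast; ring)
  have hasDerivAt_den := ((hasDerivAt_cubicMultiplier t).fun_pow 6).const_mul 4
  refine ((hasDerivAt_num.fun_div hasDerivAt_den (by positivity)).const_sub (1 / 2)).congr_deriv ?_
  push_cast
  field_simp
  rw [pow_four]
  ring

lemma cubicModulus_mul_one_sub (t : ℝ) :
    cubicModulus t * (1 - cubicModulus t) =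
      27 * (t * (1 - t)) ^ 2 / (16 * cubicMultiplier t ^ 12) := by
  have multiplier_pos := cubicMultiplier_pos t
  have pow_twelve : cubicMultiplier t ^ 12 = (1 - t + t ^ 2) ^ 3 := by
    rw [← cubicMultiplier_pow_four, ← pow_mul]
  calc cubicModulus t * (1 - cubicModulus t)
      = (4 * cubicMultiplier t ^ 12 - (2 - 3 * t - 3 * t ^ 2 + 2 * t ^ 3) ^ 2) /
          (16 * cubicMultiplier t ^ 12) := by
        rw [cubicModulus]
        field_simp
        ring
    _ = 27 * (t * (1 - t)) ^ 2 / (16 * cubicMultiplier t ^ 12) := by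
        congr 1
        rw [pow_twelve]
        ring

lemma cubicModulus_one_sub (t : ℝ) : cubicModulus (1 - t) = 1 - cubicModulus t := by
  rw [cubicModulus, cubicModulus, cubicMultiplier_one_sub]
  ring

@[simp]
lemma cubicModulus_zero : cubicModulus 0 = 0 := by
  rw [cubicModulus, cubicMultiplier_zero]
  norm_num

@[simp]
lemma cubicModulus_one : cubicModulus 1 = 1 := by simpa using cubicModulus_one_sub 0

lemma continuous_cubicModulus : Continuous cubicModulus :=
  continuous_iff_continuousAt.2 fun t => (hasDerivAt_cubicModulus t).continuousAt

lemma strictMonoOn_cubicModulus : StrictMonoOn cubicModulus (Icc 0 1) := by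
  refine strictMonoOn_of_deriv_pos (convex_Icc 0 1) continuous_cubicModulus.continuousOn
    fun t ht => ?_
  rw [interior_Icc] at ht
  have t_pos := ht.1
  have one_sub_pos := sub_pos.2 ht.2
  have multiplier_pos := cubicMultiplier_pos t
  rw [(hasDerivAt_cubicModulus t).deriv]
  positivity

lemma mapsTo_cubicModulus_Ioo : MapsTo cubicModulus (Ioo 0 1) (Ioo 0 1) := fun t ht => by
  have ht' := Ioo_subset_Icc_self ht
  constructor
  · simpa using strictMonoOn_cubicModulus (left_mem_Icc.2 zero_le_one) ht' ht.1
  · simpa using strictMonoOn_cubicModulus ht' (right_mem_Icc.2 zero_le_one) ht.2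

lemma mapsTo_cubicModulus_Ico : MapsTo cubicModulus (Ico 0 1) (Ico 0 1) := fun t ht => by
  rcases ht.1.eq_or_lt with rfl | t_pos
  · simp
  · exact Ioo_subset_Ico_self (mapsTo_cubicModulus_Ioo ⟨t_pos, ht.2⟩)

lemma image_cubicModulus_Ioo : cubicModulus '' Ioo 0 1 = Ioo 0 1 := by
  refine mapsTo_cubicModulus_Ioo.image_subset.antisymm ?_
  simpa using intermediate_value_Ioo zero_le_one continuous_cubicModulus.continuousOn

/-- The pullback of `legendreFun (-5/36)` along the cubic transformation. -/
noncomputable def cubicLegendreFun (t : ℝ) : ℝ :=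
  legendreFun (-5 / 36 : ℝ) (cubicModulus t) / cubicMultiplier t

/-- The flux `t(1 - t)y'(t)` of `y = cubicLegendreFun`. -/
noncomputable def cubicLegendreFlux (t : ℝ) : ℝ :=
  t * (1 - t) * (1 - 2 * t) / (4 * cubicMultiplier t ^ 5) *
      legendreFun (-5 / 36 : ℝ) (cubicModulus t) +
    2 * cubicMultiplier t * legendreFlux (-5 / 36 : ℝ) (cubicModulus t)

lemma hasDerivAt_legendreFun_cubicModulus (l : ℝ) {t : ℝ} (ht : t ∈ Ioo 0 1) :
    HasDerivAt (fun t => legendreFun l (cubicModulus t))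
      (2 * cubicMultiplier t ^ 2 / (t * (1 - t)) * legendreFlux l (cubicModulus t)) t := by
  obtain ⟨pos, lt_one⟩ := mapsTo_cubicModulus_Ioo ht
  refine ((hasDerivAt_legendreFun l pos lt_one).comp t
    (hasDerivAt_cubicModulus t)).congr_deriv ?_
  have t_pos := ht.1
  have one_sub_pos := sub_pos.2 ht.2
  have multiplier_pos := cubicMultiplier_pos t
  rw [cubicModulus_mul_one_sub, smul_eq_mul]
  field_simp
  ring

lemma hasDerivAt_legendreFlux_cubicModulus (l : ℝ) {t : ℝ} (ht : t ∈ Ioo 0 1) :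
    HasDerivAt (fun t => legendreFlux l (cubicModulus t))
      (-l * legendreFun l (cubicModulus t) *
        (27 / 8 * (t * (1 - t)) / cubicMultiplier t ^ 10)) t :=
  have mem := mapsTo_cubicModulus_Ioo ht
  (hasDerivAt_legendreFlux l mem.1.le mem.2).comp t (hasDerivAt_cubicModulus t)

lemma hasDerivAt_cubicLegendreFun {t : ℝ} (ht : t ∈ Ioo 0 1) :
    HasDerivAt cubicLegendreFun (cubicLegendreFlux t / (t * (1 - t))) t := by
  have multiplier_pos := cubicMultiplier_pos t
  refine ((hasDerivAt_legendreFun_cubicModulus _ ht).fun_div (hasDerivAt_cubicMultiplier t)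
    multiplier_pos.ne').congr_deriv ?_
  have t_pos := ht.1
  have one_sub_pos := sub_pos.2 ht.2
  rw [cubicLegendreFlux]
  field_simp
  ring

lemma hasDerivAt_cubicLegendreFlux {t : ℝ} (ht : t ∈ Ioo 0 1) :
    HasDerivAt cubicLegendreFlux (cubicLegendreFun t / 4) t := by
  have multiplier_pos := cubicMultiplier_pos t
  have hasDerivAt_num : HasDerivAt (fun t : ℝ => t * (1 - t) * (1 - 2 * t))
      (1 - 6 * t + 6 * t ^ 2) t :=
    (((hasDerivAt_id' t).fun_mul ((hasDerivAt_id' t).const_sub 1)).fun_mul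
      (((hasDerivAt_id' t).const_mul 2).const_sub 1)).congr_deriv (by ring)
  have hasDerivAt_den := ((hasDerivAt_cubicMultiplier t).fun_pow 5).const_mul 4
  refine (((hasDerivAt_num.fun_div hasDerivAt_den (by positivity)).fun_mul
    (hasDerivAt_legendreFun_cubicModulus _ ht)).fun_add
    (((hasDerivAt_cubicMultiplier t).const_mul 2).fun_mul
      (hasDerivAt_legendreFlux_cubicModulus _ ht))).congr_deriv ?_
  have t_pos := ht.1
  have one_sub_pos := sub_pos.2 ht.2
  have pow_four := cubicMultiplier_pow_four t
  have pow_eight : cubicMultiplier t ^ 8 = (1 - t + t ^ 2) ^ 2 := by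
    rw [← pow_four, ← pow_mul]
  rw [cubicLegendreFun]
  push_cast
  field_simp
  rw [pow_eight, pow_four]
  ring

lemma continuousOn_cubicLegendreFun : ContinuousOn cubicLegendreFun (Ico 0 1) :=
  ((continuousOn_legendreFun _).comp continuous_cubicModulus.continuousOn
    mapsTo_cubicModulus_Ico).div continuous_cubicMultiplier.continuousOn
    fun t _ => (cubicMultiplier_pos t).ne'

lemma continuousOn_cubicLegendreFlux : ContinuousOn cubicLegendreFlux (Ico 0 1) := by
  have multiplier := continuous_cubicMultiplier
  have modulus := continuous_cubicModulus.continuousOn (s := Ico 0 1)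
  have coeff : Continuous fun t => t * (1 - t) * (1 - 2 * t) / (4 * cubicMultiplier t ^ 5) :=
    Continuous.div (by fun_prop) (by fun_prop) fun t => by
      have := cubicMultiplier_pos t
      positivity
  exact (coeff.continuousOn.mul
    ((continuousOn_legendreFun _).comp modulus mapsTo_cubicModulus_Ico)).add
    ((multiplier.const_mul 2).continuousOn.mul
      ((continuousOn_legendreFlux _).comp modulus mapsTo_cubicModulus_Ico))

section Uniqueness

lemma eq_apply_zero_of_hasDerivAt_zero {f : ℝ → ℝ} (hf : ContinuousOn f (Ico 0 1))
    (hf' : ∀ s ∈ Ioo (0 : ℝ) 1, HasDerivAt f 0 s) {s : ℝ} (hs : s ∈ Ico (0 : ℝ) 1) :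
    f s = f 0 := by
  rcases hs.1.eq_or_lt with rfl | s_pos
  · rfl
  obtain ⟨_, _, slope_eq⟩ := exists_hasDerivAt_eq_slope f (fun _ => 0) s_pos
    (hf.mono fun x hx => ⟨hx.1, hx.2.trans_lt hs.2⟩) fun x hx => hf' x ⟨hx.1, hx.2.trans hs.2⟩
  have sub_ne_zero : s - 0 ≠ 0 := by simpa using s_pos.ne'
  exact sub_eq_zero.1 ((div_eq_zero_iff.1 slope_eq.symm).resolve_right sub_ne_zero)

variable {l : ℝ} {y p : ℝ → ℝ}

lemma wronskian_legendreFun_eq_zero (hy : ContinuousOn y (Ico 0 1)) (hp : ContinuousOn p (Ico 0 1))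
    (hy' : ∀ s ∈ Ioo (0 : ℝ) 1, HasDerivAt y (p s / (s * (1 - s))) s)
    (hp' : ∀ s ∈ Ioo (0 : ℝ) 1, HasDerivAt p (-l * y s) s) (p_zero : p 0 = 0)
    {s : ℝ} (hs : s ∈ Ico (0 : ℝ) 1) :
    y s * legendreFlux l s - legendreFun l s * p s = 0 := by
  have wronskian_const := eq_apply_zero_of_hasDerivAt_zero
    (f := fun s => y s * legendreFlux l s - legendreFun l s * p s)
    ((hy.mul (continuousOn_legendreFlux l)).sub ((continuousOn_legendreFun l).mul hp))
    (fun s hs => (((hy' s hs).fun_mul (hasDerivAt_legendreFlux l hs.1.le hs.2)).fun_sub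
      ((hasDerivAt_legendreFun l hs.1 hs.2).fun_mul (hp' s hs))).congr_deriv
        (by rw [smul_eq_mul]; ring)) hs
  simpa [p_zero] using wronskian_const

lemma eq_mul_legendreFun (hy : ContinuousOn y (Ico 0 1)) (hp : ContinuousOn p (Ico 0 1))
    (hy' : ∀ s ∈ Ioo (0 : ℝ) 1, HasDerivAt y (p s / (s * (1 - s))) s)
    (hp' : ∀ s ∈ Ioo (0 : ℝ) 1, HasDerivAt p (-l * y s) s) (p_zero : p 0 = 0)
    (hl : l ≤ 0) {s : ℝ} (hs : s ∈ Ico (0 : ℝ) 1) :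
    y s = y 0 * legendreFun l s := by
  have legendreFun_ne_zero {s : ℝ} (hs : s ∈ Ico (0 : ℝ) 1) : legendreFun l s ≠ 0 :=
    (zero_lt_one.trans_le (one_le_legendreFun hl hs.1 hs.2)).ne'
  have quotient_const := eq_apply_zero_of_hasDerivAt_zero (f := fun s => y s / legendreFun l s)
    (hy.div (continuousOn_legendreFun l) fun _ => legendreFun_ne_zero)
    (fun s hs => ((hy' s hs).fun_div (hasDerivAt_legendreFun l hs.1 hs.2)
      (legendreFun_ne_zero (Ioo_subset_Ico_self hs))).congr_deriv (div_eq_zero_iff.2 (.inl (by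
        have wronskian := wronskian_legendreFun_eq_zero hy hp hy' hp' p_zero
          (Ioo_subset_Ico_self hs)
        rw [smul_eq_mul]
        linear_combination -(s * (1 - s))⁻¹ * wronskian)))) hs
  rw [legendreFun_apply_zero, div_one] at quotient_const
  exact (div_eq_iff (legendreFun_ne_zero hs)).1 quotient_const

end Uniqueness

lemma cubicLegendreFun_eq {t : ℝ} (ht : t ∈ Ico 0 1) :
    cubicLegendreFun t = legendreFun (-1 / 4 : ℝ) t := by
  have eq_mul := eq_mul_legendreFun (l := -1 / 4) continuousOn_cubicLegendreFun
    continuousOn_cubicLegendreFlux (fun _ => hasDerivAt_cubicLegendreFun)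
    (fun _ hs => (hasDerivAt_cubicLegendreFlux hs).congr_deriv (by ring))
    (by simp [cubicLegendreFlux]) (by norm_num) ht
  simpa [cubicLegendreFun] using eq_mul

end CubicTransformation

section ChangeOfVariables

lemma ofReal_integral_legendreFun_sq_mul_reflect (l : ℝ) :
    ((∫ s in Ioo (0 : ℝ) 1, legendreFun l s ^ 2 * legendreFun l (1 - s) : ℝ) : ℂ) =
      legendreCubeIntegral l := by
  rw [← integral_complex_ofReal, legendreCubeIntegral]
  refine setIntegral_congr_fun measurableSet_Ioo fun s hs => ?_
  push_cast
  rw [ofReal_legendreFun l hs.1.le hs.2,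
    ofReal_legendreFun l (sub_nonneg.2 hs.2.le) (sub_lt_self 1 hs.1)]

lemma integral_Ioo_comp_one_sub (f : ℝ → ℝ) :
    ∫ s in Ioo (0 : ℝ) 1, f (1 - s) = ∫ s in Ioo (0 : ℝ) 1, f s := by
  simp only [← integral_Ioc_eq_integral_Ioo, ← intervalIntegral.integral_of_le zero_le_one]
  simp

lemma integral_legendreFun_reflect_sq_mul :
    ∫ s in Ioo (0 : ℝ) 1, legendreFun (-5 / 36 : ℝ) (1 - s) ^ 2 * legendreFun (-5 / 36 : ℝ) s =
      √(2 * √3) ^ 3 * Real.Gamma (1 / 4) ^ 4 / (24 * π ^ 3) := by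
  rw [← Complex.ofReal_inj, ← legendreCubeIntegral_neg_five_div_thirtysix,
    ← integral_Ioo_comp_one_sub]
  simpa using ofReal_integral_legendreFun_sq_mul_reflect (-5 / 36)

lemma integral_comp_cubicModulus (f : ℝ → ℝ) :
    ∫ t in Ioo (0 : ℝ) 1, t * (1 - t) / cubicMultiplier t ^ 10 * f (cubicModulus t) =
      8 / 27 * ∫ s in Ioo (0 : ℝ) 1, f s := by
  have change_of_variables := integral_image_eq_integral_abs_deriv_smul measurableSet_Ioo
    (fun t _ => (hasDerivAt_cubicModulus t).hasDerivWithinAt)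
    (strictMonoOn_cubicModulus.injOn.mono Ioo_subset_Icc_self) f
  rw [image_cubicModulus_Ioo] at change_of_variables
  rw [change_of_variables, ← MeasureTheory.integral_const_mul]
  refine setIntegral_congr_fun measurableSet_Ioo fun t ht => ?_
  have t_pos := ht.1
  have one_sub_pos := sub_pos.2 ht.2
  have multiplier_pos := cubicMultiplier_pos t
  rw [abs_of_pos (by positivity), smul_eq_mul]
  ring

lemma ellipticK_sqrt_eq_cubicModulus {t : ℝ} (ht : t ∈ Ico 0 1) :
    ellipticK (√t) =
      π / 2 * (legendreFun (-5 / 36 : ℝ) (cubicModulus t) / cubicMultiplier t) := by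
  rw [ellipticK_sqrt ht.1 ht.2, ← cubicLegendreFun_eq ht, cubicLegendreFun]

lemma ellipticK_integrand_eq {t : ℝ} (ht : t ∈ Ioo 0 1) :
    t * (1 - t) * ellipticK (√(1 - t)) ^ 2 * ellipticK (√t) / (1 - t + t ^ 2) ^ (7 / 4 : ℝ) =
      (π / 2) ^ 3 * (t * (1 - t) / cubicMultiplier t ^ 10 *
        (legendreFun (-5 / 36 : ℝ) (1 - cubicModulus t) ^ 2 *
          legendreFun (-5 / 36 : ℝ) (cubicModulus t))) := by
  have rpow_eq : (1 - t + t ^ 2) ^ (7 / 4 : ℝ) = cubicMultiplier t ^ 7 :=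
    (cubicMultiplier_pow t 7).symm
  rw [rpow_eq, ellipticK_sqrt_eq_cubicModulus (Ioo_subset_Ico_self ht),
    ellipticK_sqrt_eq_cubicModulus ⟨sub_nonneg.2 ht.2.le, sub_lt_self 1 ht.1⟩,
    cubicModulus_one_sub, cubicMultiplier_one_sub]
  have multiplier_pos := cubicMultiplier_pos t
  field_simp

lemma sqrt_two_mul_sqrt_three_pow_four : √(2 * √3) ^ 4 = 12 := by
  rw [show 4 = 2 * 2 from rfl, pow_mul, Real.sq_sqrt (by positivity), mul_pow,
    Real.sq_sqrt (by positivity)]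
  norm_num

end ChangeOfVariables

theorem stmt_9 :
    (27/4) * ∫ t in (0:ℝ)..1,
        t * (1-t) * (ellipticK (Real.sqrt (1-t)))^2 * ellipticK (Real.sqrt t)
          / (1 - t + t^2) ^ ((7:ℝ)/4)
      = (Real.Gamma (1/4))^4 / (8 * Real.sqrt (2 * Real.sqrt 3)) := by
  rw [intervalIntegral.integral_of_le zero_le_one, integral_Ioc_eq_integral_Ioo,
    setIntegral_congr_fun measurableSet_Ioo fun _ => ellipticK_integrand_eq,
    MeasureTheory.integral_const_mul,
    integral_comp_cubicModulus fun s =>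
      legendreFun (-5 / 36 : ℝ) (1 - s) ^ 2 * legendreFun (-5 / 36 : ℝ) s,
    integral_legendreFun_reflect_sq_mul]
  field_simp
  linear_combination 64 * sqrt_two_mul_sqrt_three_pow_four
end

section
/- Beltrami transformation: for every k with 0 < k < 1, K(k) = (2/π) ∫_0^1 K(√(1−κ²)) / (1 − k² κ²) dκ. -/
open Real MeasureTheory intervalIntegral

/-!
Write `K(√(1 - κ²))` as the integral of `1 / √(cos² θ + κ² sin² θ)` over `0 ≤ θ ≤ π / 2` and
exchange the integrals over `κ` and `θ`. For fixed `θ`, the substitution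
`u = κ / √(cos² θ + κ² sin² θ)` maps `[0, 1]` onto itself and turns the integrand into the rational
function `1 / ((1 - u²) sin² θ + (1 - m u²) cos² θ)`, where `m = k²`. Exchanging the integrals
again, the one over `θ` is elementary and equals `π / (2 √(1 - u²) √(1 - m u²))`; then put
`u = sin φ`. Both integrands blow up at a corner of the rectangle of integration, but they are
nonnegative, so Tonelli's theorem applies.
-/

section Tonelli

variable {α β : Type*} [MeasurableSpace α] [MeasurableSpace β] {μ : Measure α} {ν : Measure β}
  [SFinite ν] {f : α → β → ℝ}

lemma integrable_uncurry_iff_integrable_integral_of_nonneg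
    (hf : AEStronglyMeasurable f.uncurry (μ.prod ν)) (h_nonneg : 0 ≤ᵐ[μ.prod ν] f.uncurry)
    (h_int : ∀ᵐ x ∂μ, Integrable (f x) ν) :
    Integrable f.uncurry (μ.prod ν) ↔ Integrable (fun x ↦ ∫ y, f x y ∂ν) μ := by
  refine (integrable_prod_iff hf).trans ((and_iff_right h_int).trans (integrable_congr ?_))
  filter_upwards [Measure.ae_ae_of_ae_prod h_nonneg] with x hx
  exact integral_congr_ae (hx.mono fun y hy ↦ norm_of_nonneg hy)

-- If `f` is not integrable on the product, both iterated integrals take the junk value `0`.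
lemma integral_integral_swap_of_nonneg [SFinite μ]
    (hf : AEStronglyMeasurable f.uncurry (μ.prod ν)) (h_nonneg : 0 ≤ᵐ[μ.prod ν] f.uncurry)
    (h_int_right : ∀ᵐ x ∂μ, Integrable (f x) ν)
    (h_int_left : ∀ᵐ y ∂ν, Integrable (fun x ↦ f x y) μ) :
    ∫ x, ∫ y, f x y ∂ν ∂μ = ∫ y, ∫ x, f x y ∂μ ∂ν := by
  by_cases h_prod : Integrable f.uncurry (μ.prod ν)
  · exact integral_integral_swap h_prod
  have h_right : ¬ Integrable (fun x ↦ ∫ y, f x y ∂ν) μ :=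
    (integrable_uncurry_iff_integrable_integral_of_nonneg hf h_nonneg h_int_right).not.1 h_prod
  have h_left : ¬ Integrable (fun y ↦ ∫ x, f x y ∂μ) ν :=
    (integrable_uncurry_iff_integrable_integral_of_nonneg (f := fun y x ↦ f x y) hf.prod_swap
      (Measure.measurePreserving_swap.quasiMeasurePreserving.ae h_nonneg) h_int_left).not.1
      (integrable_swap_iff.not.2 h_prod)
  rw [integral_undef h_right, integral_undef h_left]

end Tonelli

lemma intervalIntegral_intervalIntegral_swap_of_nonneg {f : ℝ → ℝ → ℝ} {a b c d : ℝ}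
    (hab : a ≤ b) (hcd : c ≤ d) (hf : Measurable f.uncurry)
    (h_nonneg : ∀ x ∈ Set.Ioo a b, ∀ y ∈ Set.Ioo c d, 0 ≤ f x y)
    (h_int_right : ∀ x ∈ Set.Ioo a b, IntervalIntegrable (f x) volume c d)
    (h_int_left : ∀ y ∈ Set.Ioo c d, IntervalIntegrable (fun x ↦ f x y) volume a b) :
    ∫ x in a..b, ∫ y in c..d, f x y = ∫ y in c..d, ∫ x in a..b, f x y := by
  simp only [integral_of_le hab, integral_of_le hcd, integral_Ioc_eq_integral_Ioo]
  refine integral_integral_swap_of_nonneg hf.aestronglyMeasurable ?_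
    (ae_restrict_of_forall_mem measurableSet_Ioo fun x hx ↦
      (intervalIntegrable_iff_integrableOn_Ioo_of_le hcd).1 (h_int_right x hx))
    (ae_restrict_of_forall_mem measurableSet_Ioo fun y hy ↦
      (intervalIntegrable_iff_integrableOn_Ioo_of_le hab).1 (h_int_left y hy))
  rw [Measure.prod_restrict]
  exact ae_restrict_of_forall_mem (measurableSet_Ioo.prod measurableSet_Ioo)
    fun p hp ↦ h_nonneg p.1 hp.1 p.2 hp.2

lemma cos_pos_of_mem_Ioo_zero_pi_div_two {θ : ℝ} (hθ : θ ∈ Set.Ioo 0 (π / 2)) : 0 < cos θ :=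
  cos_pos_of_mem_Ioo ⟨(neg_lt_zero.2 pi_div_two_pos).trans hθ.1, hθ.2⟩

lemma mul_sin_sq_add_mul_cos_sq_pos {a b : ℝ} (ha : 0 < a) (hb : 0 < b) (θ : ℝ) :
    0 < a * sin θ ^ 2 + b * cos θ ^ 2 := by
  calc 0 < min a b := lt_min ha hb
    _ = min a b * sin θ ^ 2 + min a b * cos θ ^ 2 := by
      rw [← mul_add, sin_sq_add_cos_sq, mul_one]
    _ ≤ a * sin θ ^ 2 + b * cos θ ^ 2 := by
      gcongr
      exacts [min_le_left a b, min_le_right a b]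

lemma hasDerivAt_arctan_mul_tan_div {a b θ : ℝ} (ha : a ≠ 0) (hb : b ≠ 0) (hθ : cos θ ≠ 0) :
    HasDerivAt (fun t ↦ arctan (a / b * tan t) / (a * b))
      (1 / (a ^ 2 * sin θ ^ 2 + b ^ 2 * cos θ ^ 2)) θ := by
  refine ((((hasDerivAt_tan hθ).const_mul (a / b)).arctan).div_const (a * b)).congr_deriv ?_
  have h_sq : 1 + (a / b * tan θ) ^ 2
      = (a ^ 2 * sin θ ^ 2 + b ^ 2 * cos θ ^ 2) / (b ^ 2 * cos θ ^ 2) := by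
    rw [tan_eq_sin_div_cos]
    field_simp
    ring
  rw [h_sq]
  field_simp

lemma integral_one_div_mul_sin_sq_add_mul_cos_sq {a b : ℝ} (ha : 0 < a) (hb : 0 < b) :
    ∫ θ in (0:ℝ)..(π / 2), 1 / (a * sin θ ^ 2 + b * cos θ ^ 2) = π / 2 * (1 / (√a * √b)) := by
  have h_cont : Continuous fun θ ↦ 1 / (a * sin θ ^ 2 + b * cos θ ^ 2) :=
    continuous_const.div (by fun_prop) fun θ ↦ (mul_sin_sq_add_mul_cos_sq_pos ha hb θ).ne'
  have h_deriv : ∀ θ ∈ Set.Ioo 0 (π / 2), HasDerivAt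
      (fun t ↦ arctan (√a / √b * tan t) / (√a * √b)) (1 / (a * sin θ ^ 2 + b * cos θ ^ 2)) θ := by
    intro θ hθ
    have h_cos : cos θ ≠ 0 := (cos_pos_of_mem_Ioo_zero_pi_div_two hθ).ne'
    simpa only [sq_sqrt ha.le, sq_sqrt hb.le] using
      hasDerivAt_arctan_mul_tan_div (sqrt_ne_zero'.2 ha) (sqrt_ne_zero'.2 hb) h_cos
  have h_zero : ContinuousAt (fun t ↦ arctan (√a / √b * tan t) / (√a * √b)) 0 :=
    (hasDerivAt_arctan_mul_tan_div (sqrt_ne_zero'.2 ha) (sqrt_ne_zero'.2 hb)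
      (cos_zero.trans_ne one_ne_zero)).continuousAt
  -- `tan (π / 2)` has the junk value `0`, so only the left limit of the antiderivative is usable.
  have h_pi_div_two : Filter.Tendsto (fun t ↦ arctan (√a / √b * tan t) / (√a * √b))
      (nhdsWithin (π / 2) (Set.Iio (π / 2))) (nhds (π / 2 / (√a * √b))) :=
    ((tendsto_arctan_atTop.mono_right nhdsWithin_le_nhds).comp
      (tendsto_tan_pi_div_two.const_mul_atTop
        (div_pos (sqrt_pos.2 ha) (sqrt_pos.2 hb)))).div_const _
  rw [integral_eq_sub_of_hasDerivAt_of_tendsto pi_div_two_pos h_deriv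
    (h_cont.intervalIntegrable _ _) (h_zero.tendsto.mono_left nhdsWithin_le_nhds) h_pi_div_two,
    tan_zero, mul_zero, arctan_zero, zero_div, sub_zero, mul_one_div]

lemma hasDerivAt_div_sqrt_add_mul_sq {a b x : ℝ} (h : 0 < a + b * x ^ 2) :
    HasDerivAt (fun t ↦ t / √(a + b * t ^ 2)) (a / ((a + b * x ^ 2) * √(a + b * x ^ 2))) x := by
  have h_radicand : HasDerivAt (fun t ↦ a + b * t ^ 2) (b * (2 * x)) x := by
    simpa using ((hasDerivAt_pow 2 x).const_mul b).const_add a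
  refine ((hasDerivAt_id x).div (h_radicand.sqrt h.ne') (sqrt_pos.2 h).ne').congr_deriv ?_
  have h_sq := sq_sqrt h.le
  have := sqrt_pos.2 h
  simp only [id]
  field_simp
  rw [h_sq]
  ring

lemma integral_one_div_sqrt_add_mul_sq_div_one_sub_mul_sq {a b : ℝ} (ha : 0 < a) (hb : 0 ≤ b)
    (m x y : ℝ) :
    ∫ κ in x..y, 1 / √(a + b * κ ^ 2) / (1 - m * κ ^ 2) =
      ∫ u in (x / √(a + b * x ^ 2))..(y / √(a + b * y ^ 2)), 1 / (1 - (b + m * a) * u ^ 2) := by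
  have h_pos (κ : ℝ) : 0 < a + b * κ ^ 2 := by positivity
  have h_deriv (κ : ℝ) := hasDerivAt_div_sqrt_add_mul_sq (h_pos κ)
  rw [← integral_comp_mul_deriv_of_deriv_nonneg
    (fun κ _ ↦ (h_deriv κ).continuousAt.continuousWithinAt) (fun κ _ ↦ h_deriv κ)
    (fun κ _ ↦ by have := h_pos κ; positivity)]
  refine integral_congr fun κ _ ↦ ?_
  have h_ne := (h_pos κ).ne'
  have h_denom : 1 - (b + m * a) * (κ / √(a + b * κ ^ 2)) ^ 2
      = a * (1 - m * κ ^ 2) / (a + b * κ ^ 2) := by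
    rw [div_pow, sq_sqrt (h_pos κ).le]
    field_simp
    ring
  simp only [Function.comp, h_denom]
  field_simp

lemma integral_comp_sin_mul_cos (g : ℝ → ℝ) :
    ∫ φ in (0:ℝ)..(π / 2), g (sin φ) * cos φ = ∫ u in (0:ℝ)..1, g u := by
  have h_deriv_nonneg : ∀ φ ∈ Set.Ioo (min 0 (π / 2)) (max 0 (π / 2)), 0 ≤ cos φ := by
    rw [min_eq_left pi_div_two_pos.le, max_eq_right pi_div_two_pos.le]
    exact fun φ hφ ↦ (cos_pos_of_mem_Ioo_zero_pi_div_two hφ).le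
  simpa only [Function.comp_apply, sin_zero, sin_pi_div_two] using
    integral_comp_mul_deriv_of_deriv_nonneg (g := g) continuous_sin.continuousOn
      (fun φ _ ↦ hasDerivAt_sin φ) h_deriv_nonneg

lemma integral_one_div_sqrt_one_sub_sq_mul (g : ℝ → ℝ) :
    ∫ u in (0:ℝ)..1, 1 / (√(1 - u ^ 2) * g u) = ∫ φ in (0:ℝ)..(π / 2), 1 / g (sin φ) := by
  rw [← integral_comp_sin_mul_cos]
  refine integral_congr_Ioo_of_le pi_div_two_pos.le fun φ hφ ↦ ?_
  have h_cos := cos_pos_of_mem_Ioo_zero_pi_div_two hφ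
  simp only [← cos_sq', sqrt_sq h_cos.le]
  field_simp

lemma one_sub_mul_sq_pos {m x : ℝ} (hm : m < 1) (hx : x ^ 2 ≤ 1) : 0 < 1 - m * x ^ 2 := by
  rcases le_total m 0 with hm_nonpos | hm_nonneg <;> nlinarith [sq_nonneg x]

lemma ellipticK_sqrt_one_sub_sq {κ : ℝ} (hκ : κ ^ 2 ≤ 1) :
    ellipticK √(1 - κ ^ 2) =
      ∫ θ in (0:ℝ)..(π / 2), 1 / √(cos θ ^ 2 + sin θ ^ 2 * κ ^ 2) := by
  refine integral_congr fun θ _ ↦ ?_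
  have h_radicand : 1 - √(1 - κ ^ 2) ^ 2 * sin θ ^ 2 = cos θ ^ 2 + sin θ ^ 2 * κ ^ 2 := by
    rw [sq_sqrt (sub_nonneg.2 hκ), cos_sq']
    ring
  simp only [h_radicand]

section Beltrami

variable {m : ℝ}

lemma integral_ellipticK_div_one_sub_mul_sq (hm : m < 1) :
    ∫ κ in (0:ℝ)..1, ellipticK √(1 - κ ^ 2) / (1 - m * κ ^ 2) =
      ∫ θ in (0:ℝ)..(π / 2), ∫ κ in (0:ℝ)..1,
        1 / √(cos θ ^ 2 + sin θ ^ 2 * κ ^ 2) / (1 - m * κ ^ 2) := by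
  have h_sq {κ : ℝ} (hκ : κ ∈ Set.Icc (0:ℝ) 1) : κ ^ 2 ≤ 1 := pow_le_one₀ hκ.1 hκ.2
  rw [← intervalIntegral_intervalIntegral_swap_of_nonneg zero_le_one pi_div_two_pos.le]
  · refine integral_congr_Ioo_of_le zero_le_one fun κ hκ ↦ ?_
    simp only [ellipticK_sqrt_one_sub_sq (h_sq (Set.Ioo_subset_Icc_self hκ)),
      intervalIntegral.integral_div]
  · simp only [Function.uncurry_def]
    fun_prop
  · intro κ hκ θ _
    have := one_sub_mul_sq_pos hm (h_sq (Set.Ioo_subset_Icc_self hκ))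
    positivity
  · intro κ hκ
    have h_pos (θ : ℝ) : 0 < cos θ ^ 2 + sin θ ^ 2 * κ ^ 2 := by
      linarith [mul_sin_sq_add_mul_cos_sq_pos (pow_pos hκ.1 2) one_pos θ]
    exact ((continuous_const.div (by fun_prop) fun θ ↦
      (sqrt_pos.2 (h_pos θ)).ne').div_const _).intervalIntegrable _ _
  · intro θ hθ
    have h_cos : 0 < cos θ := cos_pos_of_mem_Ioo_zero_pi_div_two hθ
    have h_pos (κ : ℝ) : 0 < cos θ ^ 2 + sin θ ^ 2 * κ ^ 2 := by positivity
    refine ContinuousOn.intervalIntegrable_of_Icc zero_le_one (ContinuousOn.div ?_ (by fun_prop)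
      fun κ hκ ↦ (one_sub_mul_sq_pos hm (h_sq hκ)).ne')
    exact (continuous_const.div (by fun_prop) fun κ ↦ (sqrt_pos.2 (h_pos κ)).ne').continuousOn

lemma integral_one_div_sqrt_cos_sq_add_sin_sq_mul_sq_div_one_sub_mul_sq {θ : ℝ} (hθ : cos θ ≠ 0) :
    ∫ κ in (0:ℝ)..1, 1 / √(cos θ ^ 2 + sin θ ^ 2 * κ ^ 2) / (1 - m * κ ^ 2) =
      ∫ u in (0:ℝ)..1, 1 / ((1 - u ^ 2) * sin θ ^ 2 + (1 - m * u ^ 2) * cos θ ^ 2) := by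
  rw [integral_one_div_sqrt_add_mul_sq_div_one_sub_mul_sq (by positivity) (sq_nonneg _),
    one_pow, mul_one, cos_sq_add_sin_sq, sqrt_one, zero_div, div_one]
  congr! 3 with u
  linear_combination -sin_sq_add_cos_sq θ

lemma integral_integral_one_div_mul_sin_sq_add_mul_cos_sq (hm : m < 1) :
    ∫ θ in (0:ℝ)..(π / 2), ∫ u in (0:ℝ)..1,
        1 / ((1 - u ^ 2) * sin θ ^ 2 + (1 - m * u ^ 2) * cos θ ^ 2) =
      π / 2 * ∫ φ in (0:ℝ)..(π / 2), 1 / √(1 - m * sin φ ^ 2) := by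
  have h_sq {u : ℝ} (hu : u ∈ Set.Icc (0:ℝ) 1) : u ^ 2 ≤ 1 := pow_le_one₀ hu.1 hu.2
  have h_left {u : ℝ} (hu : u ∈ Set.Ioo (0:ℝ) 1) : 0 < 1 - u ^ 2 :=
    sub_pos.2 (pow_lt_one₀ hu.1.le hu.2 two_ne_zero)
  have h_right {u : ℝ} (hu : u ∈ Set.Icc (0:ℝ) 1) : 0 < 1 - m * u ^ 2 :=
    one_sub_mul_sq_pos hm (h_sq hu)
  have h_pos (θ : ℝ) {u : ℝ} (hu : u ∈ Set.Ioo (0:ℝ) 1) :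
      0 < (1 - u ^ 2) * sin θ ^ 2 + (1 - m * u ^ 2) * cos θ ^ 2 :=
    mul_sin_sq_add_mul_cos_sq_pos (h_left hu) (h_right (Set.Ioo_subset_Icc_self hu)) θ
  rw [intervalIntegral_intervalIntegral_swap_of_nonneg pi_div_two_pos.le zero_le_one]
  · rw [← integral_one_div_sqrt_one_sub_sq_mul fun u ↦ √(1 - m * u ^ 2),
      ← intervalIntegral.integral_const_mul]
    exact integral_congr_Ioo_of_le zero_le_one fun u hu ↦
      integral_one_div_mul_sin_sq_add_mul_cos_sq (h_left hu) (h_right (Set.Ioo_subset_Icc_self hu))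
  · simp only [Function.uncurry_def]
    fun_prop
  · exact fun θ _ u hu ↦ (one_div_pos.2 (h_pos θ hu)).le
  · intro θ hθ
    have h_cos : 0 < cos θ := cos_pos_of_mem_Ioo_zero_pi_div_two hθ
    refine ContinuousOn.intervalIntegrable_of_Icc zero_le_one
      (continuousOn_const.div (by fun_prop) fun u hu ↦ ne_of_gt ?_)
    exact add_pos_of_nonneg_of_pos (mul_nonneg (sub_nonneg.2 (h_sq hu)) (sq_nonneg _))
      (mul_pos (h_right hu) (pow_pos h_cos 2))
  · exact fun u hu ↦ (continuous_const.div (by fun_prop) fun θ ↦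
      (h_pos θ hu).ne').intervalIntegrable _ _

theorem stmt_10_general (hm : m < 1) :
    ∫ φ in (0:ℝ)..(π / 2), 1 / √(1 - m * sin φ ^ 2) =
      2 / π * ∫ κ in (0:ℝ)..1, ellipticK √(1 - κ ^ 2) / (1 - m * κ ^ 2) := by
  have h_substitution : Set.EqOn
      (fun θ ↦ ∫ κ in (0:ℝ)..1, 1 / √(cos θ ^ 2 + sin θ ^ 2 * κ ^ 2) / (1 - m * κ ^ 2))
      (fun θ ↦ ∫ u in (0:ℝ)..1, 1 / ((1 - u ^ 2) * sin θ ^ 2 + (1 - m * u ^ 2) * cos θ ^ 2))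
      (Set.Ioo 0 (π / 2)) := fun θ hθ ↦
    integral_one_div_sqrt_cos_sq_add_sin_sq_mul_sq_div_one_sub_mul_sq
      (cos_pos_of_mem_Ioo_zero_pi_div_two hθ).ne'
  rw [integral_ellipticK_div_one_sub_mul_sq hm,
    integral_congr_Ioo_of_le pi_div_two_pos.le h_substitution,
    integral_integral_one_div_mul_sin_sq_add_mul_cos_sq hm]
  field_simp

end Beltrami

/-- Beltrami transformation. -/
theorem stmt_10 (k : ℝ) (hk : 0 < k) (hk1 : k < 1) :
    ellipticK k
      = (2/π) * ∫ κ in (0:ℝ)..1, ellipticK (Real.sqrt (1 - κ^2)) / (1 - k^2 * κ^2) :=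
  stmt_10_general (pow_lt_one₀ hk.le hk1 two_ne_zero)
end

section
/- For every x with −1 < x < 1, the Cauchy principal value P∫_{−1}^1 K(√((1−ξ)/2)) / (π (x−ξ) √(1+ξ)) dξ equals K(√((1+x)/2)) / √(1+x). -/
open Real MeasureTheory intervalIntegral Filter Topology

/-! Write `A_{p,q}(y) = 1 / √((y - p) (q - y))` for the arcsine weight of an interval. The
substitution `w = y + (q - y) sin² θ` turns `∫ A_{p,q}(w) A_{p,w}(y) dw` into a multiple of
`K(√((q - y) / (q - p))) / √(y - p)`, so the density in question is a superposition of the weights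
`A_{p,w}`. The finite Hilbert transform of `A_{p,w}` at `x > p` is `0` when `x` is inside the
support (`x < w`) and `π / √((x - p) (x - w))` when `x > w`. Integrating this against `A_{p,q}(w)`
leaves an integral over `p < w < x`, which the substitution `w = p + (x - p) sin² θ` turns into
the elliptic integral of modulus `√((x - p) / (q - p))`. The limit passes under the integral in
`w` by dominated convergence: the truncated transforms are bounded by `π / √((x - p) |x - w|)`,
uniformly in `ε`. -/

open Set Function

/-- The finite Hilbert transform `∫ f(y) / (x - y) dy` with the window `|y - x| ≤ ε` around the
singularity removed, without the customary factor `1 / π`. Its limit as `ε → 0⁺` is the Cauchy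
principal value. -/
noncomputable def truncatedHilbert (f : ℝ → ℝ) (ε x : ℝ) : ℝ :=
  ∫ y in {y | ε < |y - x|}, f y / (x - y)

lemma measurableSet_lt_abs_sub (ε x : ℝ) : MeasurableSet {y : ℝ | ε < |y - x|} :=
  measurableSet_lt measurable_const (by fun_prop)

lemma truncatedHilbert_const_mul (c : ℝ) (f : ℝ → ℝ) (ε x : ℝ) :
    truncatedHilbert (fun y => c * f y) ε x = c * truncatedHilbert f ε x := by
  simp only [truncatedHilbert, mul_div_assoc, MeasureTheory.integral_const_mul]

lemma truncatedHilbert_eq_setIntegral {f : ℝ → ℝ} {s : Set ℝ}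
    (hf : ∀ y ∉ s, f y = 0) (ε x : ℝ) :
    truncatedHilbert f ε x = ∫ y in {y | y ∈ s ∧ ε < |y - x|}, f y / (x - y) :=
  setIntegral_eq_of_subset_of_forall_sdiff_eq_zero (measurableSet_lt_abs_sub ε x)
    (fun _ hy => hy.2) fun y hy => by rw [hf y fun hys => hy.2 ⟨hys, hy.1⟩, zero_div]

section Superposition

variable {α : Type*} [MeasurableSpace α] {μ : Measure α} [SFinite μ] {g : ℝ → α → ℝ} {ε : ℝ}

lemma integrable_uncurry_div_sub (hg : Integrable (uncurry g) (volume.prod μ)) (hε : 0 < ε)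
    (x : ℝ) :
    Integrable (uncurry fun y w => g y w / (x - y))
      ((volume.restrict {y | ε < |y - x|}).prod μ) := by
  have hg' : Integrable (uncurry g) ((volume.restrict {y | ε < |y - x|}).prod μ) :=
    hg.mono_measure (Measure.prod_mono Measure.restrict_le_self le_rfl)
  have hbound : ∀ᵐ z ∂(volume.restrict {y | ε < |y - x|}).prod μ, ‖(x - z.1)⁻¹‖ ≤ ε⁻¹ := by
    filter_upwards [Measure.quasiMeasurePreserving_fst.ae
      (ae_restrict_mem (measurableSet_lt_abs_sub ε x))] with z hz
    rw [norm_inv, Real.norm_eq_abs, abs_sub_comm]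
    exact inv_anti₀ hε hz.le
  simpa only [uncurry_def, div_eq_mul_inv] using
    hg'.mul_bdd (by fun_prop : Measurable _).aestronglyMeasurable hbound

lemma truncatedHilbert_integral (hg : Integrable (uncurry g) (volume.prod μ)) (hε : 0 < ε)
    (x : ℝ) :
    truncatedHilbert (fun y => ∫ w, g y w ∂μ) ε x =
      ∫ w, truncatedHilbert (fun y => g y w) ε x ∂μ := by
  simp only [truncatedHilbert, ← MeasureTheory.integral_div]
  exact integral_integral_swap (integrable_uncurry_div_sub hg hε x)

theorem tendsto_truncatedHilbert_integral {x : ℝ} {bound limit : α → ℝ}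
    (hg : Integrable (uncurry g) (volume.prod μ)) (hbound : Integrable bound μ)
    (hle : ∀ᶠ ε in 𝓝[>] 0, ∀ᵐ w ∂μ, |truncatedHilbert (fun y => g y w) ε x| ≤ bound w)
    (hlim : ∀ᵐ w ∂μ,
      Tendsto (fun ε => truncatedHilbert (fun y => g y w) ε x) (𝓝[>] 0) (𝓝 (limit w))) :
    Tendsto (fun ε => truncatedHilbert (fun y => ∫ w, g y w ∂μ) ε x) (𝓝[>] 0)
      (𝓝 (∫ w, limit w ∂μ)) := by
  have hmeas : ∀ᶠ ε in 𝓝[>] 0,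
      AEStronglyMeasurable (fun w => truncatedHilbert (fun y => g y w) ε x) μ := by
    filter_upwards [self_mem_nhdsWithin] with ε hε
    exact (integrable_uncurry_div_sub hg hε x).integral_prod_right.aestronglyMeasurable
  refine (tendsto_integral_filter_of_dominated_convergence bound hmeas hle hbound hlim).congr' ?_
  filter_upwards [self_mem_nhdsWithin] with ε hε
  exact (truncatedHilbert_integral hg hε x).symm

end Superposition

/-- The density `1 / √((y - p) (q - y))` of the arcsine law on `(p, q)`, without the factor `1 / π`.
With the conventions for `√` of a negative number and for division by zero this formula is already
extended by zero off `(p, q)`. -/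
noncomputable def arcsineWeight (p q y : ℝ) : ℝ :=
  1 / (√(y - p) * √(q - y))

section ArcsineWeight

variable {p q : ℝ}

lemma arcsineWeight_nonneg (p q y : ℝ) : 0 ≤ arcsineWeight p q y := by
  unfold arcsineWeight
  positivity

lemma arcsineWeight_eq_zero {y : ℝ} (hy : y ∉ Ioo p q) : arcsineWeight p q y = 0 := by
  rcases not_and_or.1 hy with h | h
  · rw [arcsineWeight, Real.sqrt_eq_zero_of_nonpos (by linarith), zero_mul, div_zero]
  · rw [arcsineWeight, Real.sqrt_eq_zero_of_nonpos (x := q - y) (by linarith), mul_zero, div_zero]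

lemma arcsineWeight_mul_arcsineWeight (p q w y : ℝ) :
    arcsineWeight p q w * arcsineWeight p w y =
      1 / (√(w - p) * √(y - p)) * arcsineWeight y q w := by
  simp only [arcsineWeight, one_div, mul_inv]
  ring

lemma arcsineWeight_div_sqrt_sub_right (p q x w : ℝ) :
    arcsineWeight p q w / √(x - w) = arcsineWeight p x w / √(q - w) := by
  simp only [arcsineWeight, div_eq_mul_inv, mul_inv]
  ring

lemma arcsineWeight_div_sqrt_sub_left (p q x w : ℝ) :
    arcsineWeight p q w / √(w - x) = arcsineWeight x q w / √(w - p) := by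
  simp only [arcsineWeight, div_eq_mul_inv, mul_inv]
  ring

lemma mul_arcsineWeight_comp_sin_sq (hpq : p < q) {θ : ℝ} (hθ : θ ∈ Ioo 0 (π / 2)) :
    (q - p) * (2 * sin θ * cos θ) * arcsineWeight p q (p + (q - p) * sin θ ^ 2) = 2 := by
  have hsin : 0 < sin θ := sin_pos_of_mem_Ioo ⟨hθ.1, by linarith [hθ.2, pi_pos]⟩
  have hcos : 0 < cos θ := cos_pos_of_mem_Ioo ⟨by linarith [hθ.1, pi_pos], hθ.2⟩
  have hd : 0 < q - p := sub_pos.2 hpq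
  have hq : q - (p + (q - p) * sin θ ^ 2) = (q - p) * cos θ ^ 2 := by rw [cos_sq']; ring
  rw [arcsineWeight, hq, add_sub_cancel_left, sqrt_mul hd.le, sqrt_mul hd.le, sqrt_sq hsin.le,
    sqrt_sq hcos.le, mul_mul_mul_comm, mul_self_sqrt hd.le]
  field_simp

theorem integral_mul_arcsineWeight (hpq : p < q) (h : ℝ → ℝ) :
    ∫ w, h w * arcsineWeight p q w =
      ∫ θ in (0 : ℝ)..(π / 2), 2 * h (p + (q - p) * sin θ ^ 2) := by
  have hsupp : ∀ w ∉ Icc p q, h w * arcsineWeight p q w = 0 := fun w hw => by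
    rw [arcsineWeight_eq_zero fun hw' => hw (Ioo_subset_Icc_self hw'), mul_zero]
  have hderiv (θ : ℝ) : HasDerivAt (fun θ => p + (q - p) * sin θ ^ 2)
      ((q - p) * (2 * sin θ * cos θ)) θ := by
    simpa using (((hasDerivAt_sin θ).pow 2).const_mul (q - p)).const_add p
  have hnonneg : ∀ θ ∈ Ioo 0 (π / 2), 0 ≤ (q - p) * (2 * sin θ * cos θ) := fun θ hθ => by
    have := sin_nonneg_of_nonneg_of_le_pi hθ.1.le (by linarith [hθ.2, pi_pos])
    have := cos_nonneg_of_mem_Icc ⟨by linarith [hθ.1, pi_pos], hθ.2.le⟩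
    have := sub_pos.2 hpq
    positivity
  calc ∫ w, h w * arcsineWeight p q w
      = ∫ w in Icc p q, h w * arcsineWeight p q w :=
        (setIntegral_eq_integral_of_forall_compl_eq_zero hsupp).symm
    _ = ∫ θ in Icc 0 (π / 2), (q - p) * (2 * sin θ * cos θ) * (h (p + (q - p) * sin θ ^ 2) *
          arcsineWeight p q (p + (q - p) * sin θ ^ 2)) := by
        simpa using (integral_Icc_deriv_smul_of_deriv_nonneg (a := 0) (b := π / 2)
          (g := fun w => h w * arcsineWeight p q w)
          (fun θ _ => (hderiv θ).continuousAt.continuousWithinAt)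
          (fun θ _ => hderiv θ) hnonneg (by positivity)).symm
    _ = ∫ θ in Ioo 0 (π / 2), 2 * h (p + (q - p) * sin θ ^ 2) := by
        rw [integral_Icc_eq_integral_Ioo]
        refine setIntegral_congr_fun measurableSet_Ioo fun θ hθ => ?_
        rw [mul_left_comm, mul_arcsineWeight_comp_sin_sq hpq hθ, mul_comm]
    _ = ∫ θ in (0 : ℝ)..(π / 2), 2 * h (p + (q - p) * sin θ ^ 2) := by
        rw [intervalIntegral.integral_of_le (by positivity), integral_Ioc_eq_integral_Ioo]

lemma integral_arcsineWeight (hpq : p < q) : ∫ w, arcsineWeight p q w = π := by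
  simpa using integral_mul_arcsineWeight hpq fun _ => 1

lemma integrable_arcsineWeight (p q : ℝ) : Integrable (arcsineWeight p q) := by
  rcases lt_or_ge p q with hpq | hqp
  · exact .of_integral_ne_zero ((integral_arcsineWeight hpq).trans_ne pi_ne_zero)
  · refine (integrable_zero ℝ ℝ volume).congr (ae_of_all _ fun w => ?_)
    exact (arcsineWeight_eq_zero (by simp [Ioo_eq_empty hqp.not_gt])).symm

end ArcsineWeight

lemma mul_cos_sq_add_mul_sin_sq_pos {a b : ℝ} (ha : 0 < a) (hb : 0 < b) (θ : ℝ) :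
    0 < a * cos θ ^ 2 + b * sin θ ^ 2 := by
  rcases eq_or_ne (cos θ) 0 with hcos | hcos
  · simpa [sin_sq, hcos] using hb
  · positivity

/-- Writing `θ + arctan (…)` for `arctan ((B / A) tan θ)` removes the singularity at `π / 2`. -/
lemma hasDerivAt_add_arctan {A B : ℝ} (hA : 0 < A) (hB : 0 < B) (θ : ℝ) :
    HasDerivAt
      (fun θ => θ + arctan ((B - A) * (sin θ * cos θ) / (A * cos θ ^ 2 + B * sin θ ^ 2)))
      (A * B * (1 / (A ^ 2 * cos θ ^ 2 + B ^ 2 * sin θ ^ 2))) θ := by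
  have hD := mul_cos_sq_add_mul_sin_sq_pos hA hB θ
  have hE := mul_cos_sq_add_mul_sin_sq_pos (pow_pos hA 2) (pow_pos hB 2) θ
  have hnum := ((hasDerivAt_sin θ).mul (hasDerivAt_cos θ)).const_mul (B - A)
  have hden := (((hasDerivAt_cos θ).pow 2).const_mul A).add (((hasDerivAt_sin θ).pow 2).const_mul B)
  refine ((hasDerivAt_id θ).add (hnum.div hden hD.ne').arctan).congr_deriv ?_
  have hcos : cos θ ^ 2 = 1 - sin θ ^ 2 := cos_sq' θ
  have hfactor : (A * cos θ ^ 2 + B * sin θ ^ 2) ^ 2 + ((B - A) * (sin θ * cos θ)) ^ 2 =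
      A ^ 2 * cos θ ^ 2 + B ^ 2 * sin θ ^ 2 := by
    rw [mul_pow (B - A), mul_pow (sin θ), hcos]; ring
  have harctan : 1 + ((B - A) * (sin θ * cos θ) / (A * cos θ ^ 2 + B * sin θ ^ 2)) ^ 2 =
      (A ^ 2 * cos θ ^ 2 + B ^ 2 * sin θ ^ 2) / (A * cos θ ^ 2 + B * sin θ ^ 2) ^ 2 := by
    rw [← hfactor, div_pow, add_div, div_self (pow_pos hD 2).ne']
  simp only [Pi.mul_apply, Pi.add_apply, Pi.div_apply, Pi.pow_apply, harctan, Nat.cast_ofNat,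
    Nat.add_one_sub_one, pow_one]
  field_simp
  linear_combination
    ((B - A) * (A * cos θ ^ 2 - B * sin θ ^ 2) + A * B) * hcos

theorem integral_one_div_sq_mul_cos_sq_add_sq_mul_sin_sq {A B : ℝ} (hA : 0 < A) (hB : 0 < B) :
    ∫ θ in (0 : ℝ)..(π / 2), 1 / (A ^ 2 * cos θ ^ 2 + B ^ 2 * sin θ ^ 2) = π / (2 * (A * B)) := by
  have hpos := mul_cos_sq_add_mul_sin_sq_pos (pow_pos hA 2) (pow_pos hB 2)
  have hcont : Continuous fun θ => A * B * (1 / (A ^ 2 * cos θ ^ 2 + B ^ 2 * sin θ ^ 2)) :=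
    continuous_const.mul (continuous_const.div (by fun_prop) fun θ => (hpos θ).ne')
  have hint := intervalIntegral.integral_eq_sub_of_hasDerivAt
    (fun θ _ => hasDerivAt_add_arctan hA hB θ) (hcont.intervalIntegrable 0 (π / 2))
  simp only [intervalIntegral.integral_const_mul, sin_zero, cos_pi_div_two, zero_mul, mul_zero,
    zero_div, arctan_zero, add_zero, sub_zero] at hint
  rw [eq_div_iff (by positivity)]
  linarith

section RightOfSupport

variable {p q x : ℝ}

lemma integral_arcsineWeight_div_sub (hpq : p < q) (hqx : q < x) :
    ∫ y, arcsineWeight p q y / (x - y) = π / (√(x - p) * √(x - q)) := by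
  have hxp : 0 < x - p := by linarith
  have hxq : 0 < x - q := sub_pos.2 hqx
  have hden (θ : ℝ) : x - (p + (q - p) * sin θ ^ 2) =
      √(x - p) ^ 2 * cos θ ^ 2 + √(x - q) ^ 2 * sin θ ^ 2 := by
    rw [sq_sqrt hxp.le, sq_sqrt hxq.le, cos_sq']
    ring
  calc ∫ y, arcsineWeight p q y / (x - y)
      = ∫ y, 1 / (x - y) * arcsineWeight p q y := by simp only [div_eq_inv_mul, mul_one]
    _ = ∫ θ in (0 : ℝ)..(π / 2),
          2 * (1 / (√(x - p) ^ 2 * cos θ ^ 2 + √(x - q) ^ 2 * sin θ ^ 2)) := by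
        simp only [integral_mul_arcsineWeight hpq, hden]
    _ = π / (√(x - p) * √(x - q)) := by
        rw [intervalIntegral.integral_const_mul,
          integral_one_div_sq_mul_cos_sq_add_sq_mul_sin_sq (sqrt_pos.2 hxp) (sqrt_pos.2 hxq)]
        ring

lemma abs_truncatedHilbert_arcsineWeight_le_of_lt (hpq : p < q) (hqx : q < x) (ε : ℝ) :
    |truncatedHilbert (arcsineWeight p q) ε x| ≤ π / (√(x - p) * √(x - q)) := by
  have hnonneg (y : ℝ) : 0 ≤ arcsineWeight p q y / (x - y) := by
    by_cases hy : y ∈ Ioo p q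
    · exact div_nonneg (arcsineWeight_nonneg p q y) (by linarith [hy.2])
    · rw [arcsineWeight_eq_zero hy, zero_div]
  have hint : Integrable fun y => arcsineWeight p q y / (x - y) := by
    refine .of_integral_ne_zero ?_
    have := sqrt_pos.2 (sub_pos.2 hqx)
    have := sqrt_pos.2 (sub_pos.2 (hpq.trans hqx))
    rw [integral_arcsineWeight_div_sub hpq hqx]
    positivity
  rw [truncatedHilbert, abs_of_nonneg (integral_nonneg hnonneg),
    ← integral_arcsineWeight_div_sub hpq hqx]
  exact setIntegral_le_integral hint (ae_of_all _ hnonneg)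

lemma tendsto_truncatedHilbert_arcsineWeight_of_lt (hpq : p < q) (hqx : q < x) :
    Tendsto (fun ε => truncatedHilbert (arcsineWeight p q) ε x) (𝓝[>] 0)
      (𝓝 (π / (√(x - p) * √(x - q)))) := by
  refine tendsto_const_nhds.congr' ?_
  filter_upwards [nhdsWithin_le_nhds (eventually_lt_nhds (sub_pos.2 hqx))] with ε hε
  rw [truncatedHilbert, ← integral_arcsineWeight_div_sub hpq hqx]
  refine (setIntegral_eq_integral_of_forall_compl_eq_zero fun y hy => ?_).symm
  have hy' : y ∉ Ioo p q := fun hy' => hy (lt_abs.2 (.inr (show ε < -(y - x) by linarith [hy'.2])))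
  rw [arcsineWeight_eq_zero hy', zero_div]

end RightOfSupport

section InsideSupport

variable {p q x : ℝ}

/-- The quantity `(q - p) sin (α + θ)`, where `x = p + (q - p) sin² α` and
`y = p + (q - p) sin² θ` with `α, θ ∈ [0, π / 2]`. Its square is the factor without a singularity
at `y = x` inside the logarithm of `arcsineHilbertPrimitive`. -/
noncomputable def scaledSinAdd (p q x y : ℝ) : ℝ :=
  √(x - p) * √(q - y) + √(q - x) * √(y - p)

lemma continuous_scaledSinAdd (p q x : ℝ) : Continuous (scaledSinAdd p q x) := by
  unfold scaledSinAdd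
  fun_prop

section Bounds

variable {y : ℝ}

lemma le_scaledSinAdd_sq (hpx : p ≤ x) (hxq : x ≤ q) (hpy : p ≤ y) (hyq : y ≤ q) :
    (x - p) * (q - y) + (q - x) * (y - p) ≤ scaledSinAdd p q x y ^ 2 := by
  have hcross : 0 ≤ 2 * (√(x - p) * √(q - y)) * (√(q - x) * √(y - p)) := by positivity
  rw [scaledSinAdd, add_sq, mul_pow, mul_pow, sq_sqrt (sub_nonneg.2 hpx),
    sq_sqrt (sub_nonneg.2 hxq), sq_sqrt (sub_nonneg.2 hpy), sq_sqrt (sub_nonneg.2 hyq)]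
  linarith

lemma scaledSinAdd_sq_le (hpx : p ≤ x) (hxq : x ≤ q) (hpy : p ≤ y) (hyq : y ≤ q) :
    scaledSinAdd p q x y ^ 2 ≤ 2 * ((x - p) * (q - y) + (q - x) * (y - p)) := by
  refine add_sq_le.trans_eq ?_
  rw [mul_pow, mul_pow, sq_sqrt (sub_nonneg.2 hpx), sq_sqrt (sub_nonneg.2 hxq),
    sq_sqrt (sub_nonneg.2 hpy), sq_sqrt (sub_nonneg.2 hyq)]

lemma scaledSinAdd_pos (hpx : p < x) (hxq : x < q) (hy : y ∈ Icc p q) :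
    0 < scaledSinAdd p q x y := by
  have := sqrt_pos.2 (sub_pos.2 hpx)
  have := sqrt_pos.2 (sub_pos.2 hxq)
  rcases hy.1.eq_or_lt with rfl | hpy
  · have := sqrt_pos.2 (sub_pos.2 (hpx.trans hxq))
    unfold scaledSinAdd
    positivity
  · have := sqrt_pos.2 (sub_pos.2 hpy)
    unfold scaledSinAdd
    positivity

end Bounds

/-- An antiderivative of `y ↦ arcsineWeight p q y / (x - y)` for `x ∈ (p, q)`. It serves on both
sides of `x` because `Real.log` is `log |·|`. -/
noncomputable def arcsineHilbertPrimitive (p q x y : ℝ) : ℝ :=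
  (log (scaledSinAdd p q x y ^ 2) - log (x - y)) / (√(x - p) * √(q - x))

lemma hasDerivAt_scaledSinAdd {y : ℝ} (hy : y ∈ Ioo p q) :
    HasDerivAt (scaledSinAdd p q x)
      (√(x - p) * (-1 / (2 * √(q - y))) + √(q - x) * (1 / (2 * √(y - p)))) y :=
  ((((hasDerivAt_id y).const_sub q).sqrt (sub_pos.2 hy.2).ne').const_mul _).add
    ((((hasDerivAt_id y).sub_const p).sqrt (sub_pos.2 hy.1).ne').const_mul _)

lemma hasDerivAt_arcsineHilbertPrimitive (hpx : p < x) (hxq : x < q) {y : ℝ} (hy : y ∈ Ioo p q)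
    (hyx : y ≠ x) :
    HasDerivAt (arcsineHilbertPrimitive p q x) (arcsineWeight p q y / (x - y)) y := by
  have hN := scaledSinAdd_pos hpx hxq (Ioo_subset_Icc_self hy)
  have hxy : x - y ≠ 0 := sub_ne_zero.2 hyx.symm
  refine (((((hasDerivAt_scaledSinAdd hy).pow 2).log (pow_pos hN 2).ne').sub
    (((hasDerivAt_id y).const_sub x).log hxy)).div_const _).congr_deriv ?_
  simp only [scaledSinAdd, arcsineWeight, Pi.pow_apply, id, Nat.cast_ofNat, Nat.add_one_sub_one,
    pow_one] at hN ⊢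
  have hA := sqrt_pos.2 (sub_pos.2 hpx)
  have hB := sqrt_pos.2 (sub_pos.2 hxq)
  have hP := sqrt_pos.2 (sub_pos.2 hy.1)
  have hQ := sqrt_pos.2 (sub_pos.2 hy.2)
  have hA2 := sq_sqrt (sub_pos.2 hpx).le
  have hB2 := sq_sqrt (sub_pos.2 hxq).le
  have hP2 := sq_sqrt (sub_pos.2 hy.1).le
  have hQ2 := sq_sqrt (sub_pos.2 hy.2).le
  generalize √(x - p) = A at *
  generalize √(q - x) = B at *
  generalize √(y - p) = P at *
  generalize √(q - y) = Q at *
  have hxy' : x - y = A ^ 2 - P ^ 2 := by linarith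
  have hsum : A ^ 2 + B ^ 2 = P ^ 2 + Q ^ 2 := by linarith
  rw [hxy'] at hxy
  rw [hxy']
  field_simp
  linear_combination (-A * P) * hsum

lemma continuousOn_arcsineHilbertPrimitive (hpx : p < x) (hxq : x < q) :
    ContinuousOn (arcsineHilbertPrimitive p q x) (Icc p q \ {x}) := by
  refine .div_const (.sub (.log ?_ fun y hy => ?_) (.log (by fun_prop) fun y hy => ?_)) _
  · exact ((continuous_scaledSinAdd p q x).pow 2).continuousOn
  · exact (pow_pos (scaledSinAdd_pos hpx hxq hy.1) 2).ne'
  · exact sub_ne_zero.2 (Ne.symm hy.2)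

lemma arcsineHilbertPrimitive_left (hpx : p < x) (hxq : x < q) :
    arcsineHilbertPrimitive p q x p = log (q - p) / (√(x - p) * √(q - x)) := by
  have hp := sub_pos.2 hpx
  have hd := sub_pos.2 (hpx.trans hxq)
  rw [arcsineHilbertPrimitive, scaledSinAdd, sub_self, sqrt_zero, mul_zero, add_zero, mul_pow,
    sq_sqrt hp.le, sq_sqrt hd.le, log_mul hp.ne' hd.ne', add_sub_cancel_left]

lemma arcsineHilbertPrimitive_right (hpx : p < x) (hxq : x < q) :
    arcsineHilbertPrimitive p q x q = log (q - p) / (√(x - p) * √(q - x)) := by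
  have hq := sub_pos.2 hxq
  have hd := sub_pos.2 (hpx.trans hxq)
  rw [arcsineHilbertPrimitive, scaledSinAdd, sub_self, sqrt_zero, mul_zero, zero_add, mul_pow,
    sq_sqrt hq.le, sq_sqrt hd.le, log_mul hq.ne' hd.ne', ← neg_sub q x, log_neg_eq_log,
    add_sub_cancel_left]

lemma integrableOn_Icc_arcsineWeight_div_sub (p q : ℝ) {u v : ℝ} (hx : x ∉ Icc u v) :
    IntegrableOn (fun y => arcsineWeight p q y / (x - y)) (Icc u v) := by
  have hinv : ContinuousOn (fun y => (x - y)⁻¹) (Icc u v) :=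
    .inv₀ (by fun_prop) fun y hy => sub_ne_zero.2 (ne_of_mem_of_not_mem hy hx).symm
  exact (integrable_arcsineWeight p q).integrableOn.mul_continuousOn hinv isCompact_Icc

lemma setIntegral_Ioo_arcsineWeight_div_sub (hpx : p < x) (hxq : x < q) {u v : ℝ} (huv : u ≤ v)
    (hpu : p ≤ u) (hvq : v ≤ q) (hx : x ∉ Icc u v) :
    ∫ y in Ioo u v, arcsineWeight p q y / (x - y) =
      arcsineHilbertPrimitive p q x v - arcsineHilbertPrimitive p q x u := by
  have hsub : Icc u v ⊆ Icc p q \ {x} :=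
    subset_sdiff_singleton (Icc_subset_Icc hpu hvq) hx
  rw [← integral_Ioc_eq_integral_Ioo, ← intervalIntegral.integral_of_le huv]
  refine intervalIntegral.integral_eq_sub_of_hasDerivAt_of_le huv
    ((continuousOn_arcsineHilbertPrimitive hpx hxq).mono hsub) (fun y hy => ?_) ?_
  · exact hasDerivAt_arcsineHilbertPrimitive hpx hxq (Ioo_subset_Ioo hpu hvq hy)
      (hsub (Ioo_subset_Icc_self hy)).2
  · exact (intervalIntegrable_iff_integrableOn_Icc_of_le huv).2
      (integrableOn_Icc_arcsineWeight_div_sub p q hx)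

section Truncation

variable {ε : ℝ}

lemma truncatedHilbert_arcsineWeight_eq_sub (hpx : p < x) (hxq : x < q) (hε : 0 < ε)
    (hεp : ε < x - p) :
    truncatedHilbert (arcsineWeight p q) ε x =
      arcsineHilbertPrimitive p q x (x - ε) - arcsineHilbertPrimitive p q x (min (x + ε) q) := by
  have hxz : x < min (x + ε) q := lt_min (by linarith) hxq
  have hleft : x ∉ Icc p (x - ε) := fun h => by linarith [h.2]
  have hright : x ∉ Icc (min (x + ε) q) q := fun h => hxz.not_ge h.1
  have hsplit : {y | y ∈ Ioo p q ∧ ε < |y - x|} = Ioo p (x - ε) ∪ Ioo (min (x + ε) q) q := by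
    ext y
    simp only [mem_ofPred_eq, mem_union, mem_Ioo, lt_abs, min_lt_iff]
    grind
  have hdisj : Disjoint (Ioo p (x - ε)) (Ioo (min (x + ε) q) q) :=
    disjoint_left.2 fun y hy hy' => by linarith [hy.2, hy'.1]
  rw [truncatedHilbert_eq_setIntegral (fun _ => arcsineWeight_eq_zero), hsplit,
    setIntegral_union hdisj measurableSet_Ioo
      ((integrableOn_Icc_arcsineWeight_div_sub p q hleft).mono_set Ioo_subset_Icc_self)
      ((integrableOn_Icc_arcsineWeight_div_sub p q hright).mono_set Ioo_subset_Icc_self),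
    setIntegral_Ioo_arcsineWeight_div_sub hpx hxq (by linarith) le_rfl (by linarith) hleft,
    setIntegral_Ioo_arcsineWeight_div_sub hpx hxq (min_le_right _ _) (hpx.trans hxz).le le_rfl
      hright,
    arcsineHilbertPrimitive_left hpx hxq, arcsineHilbertPrimitive_right hpx hxq]
  ring

lemma truncatedHilbert_arcsineWeight_of_le (hpx : p < x) (hxq : x < q) (hε : 0 < ε)
    (hεp : ε < x - p) (hεq : ε ≤ q - x) :
    truncatedHilbert (arcsineWeight p q) ε x =
      (log (scaledSinAdd p q x (x - ε) ^ 2) - log (scaledSinAdd p q x (x + ε) ^ 2)) /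
        (√(x - p) * √(q - x)) := by
  rw [truncatedHilbert_arcsineWeight_eq_sub hpx hxq hε hεp, min_eq_left (by linarith),
    arcsineHilbertPrimitive, arcsineHilbertPrimitive, sub_sub_cancel, sub_add_cancel_left,
    log_neg_eq_log, ← sub_div, sub_sub_sub_cancel_right]

lemma truncatedHilbert_arcsineWeight_of_ge (hpx : p < x) (hxq : x < q) (hεp : ε < x - p)
    (hεq : q - x ≤ ε) :
    truncatedHilbert (arcsineWeight p q) ε x =
      (log (scaledSinAdd p q x (x - ε) ^ 2) - log (ε * (q - p))) / (√(x - p) * √(q - x)) := by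
  have hε : 0 < ε := by linarith
  rw [truncatedHilbert_arcsineWeight_eq_sub hpx hxq hε hεp, min_eq_right (by linarith),
    arcsineHilbertPrimitive_right hpx hxq, arcsineHilbertPrimitive, sub_sub_cancel, ← sub_div,
    sub_sub, log_mul hε.ne' (by linarith)]

lemma abs_log_sub_log_le_pi {r a b : ℝ} (hr : 0 < r) (ha : a ∈ Icc r (6 * r))
    (hb : b ∈ Icc r (6 * r)) : |log a - log b| ≤ π := by
  have hlog_six : log 6 ≤ 3 := by
    rw [log_le_iff_le_exp (by norm_num)]
    linarith [quadratic_le_exp_of_nonneg (x := 3) (by norm_num)]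
  have hlog {c : ℝ} (hc : c ∈ Icc r (6 * r)) : log r ≤ log c ∧ log c ≤ log 6 + log r := by
    rw [← log_mul (by norm_num) hr.ne']
    exact ⟨log_le_log hr hc.1, log_le_log (hr.trans_le hc.1) hc.2⟩
  rw [abs_le]
  constructor <;> linarith [hlog ha, hlog hb, pi_gt_three]

/-- The arguments of the two logarithms agree up to a factor of at most `6 < exp π`: a factor `2`
from `scaledSinAdd` and a factor `3` from the position of `x ± ε`. -/
lemma abs_truncatedHilbert_arcsineWeight_le_of_mem (hpx : p < x) (hxq : x < q) (hε : 0 < ε)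
    (hεp : ε < x - p) :
    |truncatedHilbert (arcsineWeight p q) ε x| ≤ π / (√(x - p) * √(q - x)) := by
  have hmem {r y : ℝ} (hpy : p ≤ y) (hyq : y ≤ q)
      (hr : r ≤ (x - p) * (q - y) + (q - x) * (y - p))
      (hr' : (x - p) * (q - y) + (q - x) * (y - p) ≤ 3 * r) :
      scaledSinAdd p q x y ^ 2 ∈ Icc r (6 * r) :=
    ⟨hr.trans (le_scaledSinAdd_sq hpx.le hxq.le hpy hyq),
      (scaledSinAdd_sq_le hpx.le hxq.le hpy hyq).trans (by linarith)⟩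
  rcases le_total ε (q - x) with hεq | hεq
  · rw [truncatedHilbert_arcsineWeight_of_le hpx hxq hε hεp hεq, abs_div,
      abs_of_nonneg (by positivity : 0 ≤ √(x - p) * √(q - x))]
    gcongr
    refine abs_log_sub_log_le_pi (r := (x - p) * (q - x)) (mul_pos (by linarith) (by linarith))
      (hmem ?_ ?_ ?_ ?_) (hmem ?_ ?_ ?_ ?_) <;> nlinarith
  · rw [truncatedHilbert_arcsineWeight_of_ge hpx hxq hεp hεq, abs_div,
      abs_of_nonneg (by positivity : 0 ≤ √(x - p) * √(q - x))]
    have hr : 0 < ε * (q - p) := mul_pos hε (by linarith)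
    gcongr
    refine abs_log_sub_log_le_pi hr (hmem ?_ ?_ ?_ ?_) ⟨le_rfl, by linarith⟩ <;> nlinarith

end Truncation

lemma tendsto_truncatedHilbert_arcsineWeight_of_mem (hpx : p < x) (hxq : x < q) :
    Tendsto (fun ε => truncatedHilbert (arcsineWeight p q) ε x) (𝓝[>] 0) (𝓝 0) := by
  have hx : scaledSinAdd p q x x ^ 2 ≠ 0 :=
    (pow_pos (scaledSinAdd_pos hpx hxq ⟨hpx.le, hxq.le⟩) 2).ne'
  have hlog {u : ℝ → ℝ} (hu : Continuous u) (hu0 : u 0 = x) :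
      Tendsto (fun ε => log (scaledSinAdd p q x (u ε) ^ 2)) (𝓝 0)
        (𝓝 (log (scaledSinAdd p q x x ^ 2))) := by
    have := ((continuous_scaledSinAdd p q x).comp hu).tendsto' 0 _
      (congrArg (scaledSinAdd p q x) hu0)
    exact (this.pow 2).log hx
  have hlim := ((hlog (continuous_const.sub continuous_id) (sub_zero x)).sub
    (hlog (continuous_const.add continuous_id) (add_zero x))).div_const (√(x - p) * √(q - x))
  rw [sub_self, zero_div] at hlim
  refine (hlim.mono_left nhdsWithin_le_nhds).congr' ?_
  filter_upwards [self_mem_nhdsWithin, nhdsWithin_le_nhds (eventually_lt_nhds (sub_pos.2 hpx)),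
    nhdsWithin_le_nhds (eventually_lt_nhds (sub_pos.2 hxq))] with ε hε hεp hεq
  exact (truncatedHilbert_arcsineWeight_of_le hpx hxq hε hεp hεq.le).symm

end InsideSupport

section Pointwise

variable {p q x : ℝ}

/-- Both cases at once: for `x < q` the factor `√(x - q)` is the square root of a negative number,
so the limit is `π / 0 = 0`. -/
theorem tendsto_truncatedHilbert_arcsineWeight (hpq : p < q) (hpx : p < x) (hxq : x ≠ q) :
    Tendsto (fun ε => truncatedHilbert (arcsineWeight p q) ε x) (𝓝[>] 0)
      (𝓝 (π / (√(x - p) * √(x - q)))) := by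
  rcases hxq.lt_or_gt with hxq | hqx
  · simpa only [sqrt_eq_zero_of_nonpos (sub_neg.2 hxq).le, mul_zero, div_zero] using
      tendsto_truncatedHilbert_arcsineWeight_of_mem hpx hxq
  · exact tendsto_truncatedHilbert_arcsineWeight_of_lt hpq hqx

theorem abs_truncatedHilbert_arcsineWeight_le (hpq : p < q) (hxq : x ≠ q) {ε : ℝ} (hε : 0 < ε)
    (hεp : ε < x - p) :
    |truncatedHilbert (arcsineWeight p q) ε x| ≤ π / (√(x - p) * √|x - q|) := by
  rcases hxq.lt_or_gt with hxq | hqx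
  · rw [abs_sub_comm x q, abs_of_pos (sub_pos.2 hxq)]
    exact abs_truncatedHilbert_arcsineWeight_le_of_mem (by linarith) hxq hε hεp
  · rw [abs_of_pos (sub_pos.2 hqx)]
    exact abs_truncatedHilbert_arcsineWeight_le_of_lt hpq hqx ε

end Pointwise

section EllipticIntegral

variable {p q x y : ℝ}

lemma ellipticK_sqrt_div {u v : ℝ} (hu : 0 ≤ u) (hv : 0 < v) :
    ellipticK √(u / v) = √v * ∫ θ in (0 : ℝ)..(π / 2), 1 / √(v - u * sin θ ^ 2) := by
  rw [ellipticK, ← intervalIntegral.integral_const_mul]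
  refine intervalIntegral.integral_congr fun θ _ => ?_
  have hradicand : 1 - √(u / v) ^ 2 * sin θ ^ 2 = (v - u * sin θ ^ 2) / v := by
    rw [sq_sqrt (div_nonneg hu hv.le)]
    field_simp
  rw [hradicand, sqrt_div' _ hv.le, one_div_div, ← mul_one_div]

lemma integral_comp_cos_eq_integral_comp_sin (f : ℝ → ℝ) :
    ∫ θ in (0 : ℝ)..(π / 2), f (cos θ) = ∫ θ in (0 : ℝ)..(π / 2), f (sin θ) := by
  simpa only [cos_pi_div_two_sub, sub_self, sub_zero] using
    (intervalIntegral.integral_comp_sub_left (a := 0) (b := π / 2)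
      (fun θ => f (cos θ)) (π / 2)).symm

theorem integral_arcsineWeight_mul_arcsineWeight (hy : y ∈ Ioo p q) :
    ∫ w, arcsineWeight p q w * arcsineWeight p w y =
      2 / √(q - p) * (ellipticK √((q - y) / (q - p)) / √(y - p)) := by
  have hd : 0 < q - p := by linarith [hy.1, hy.2]
  have hradicand (θ : ℝ) : y + (q - y) * sin θ ^ 2 - p = q - p - (q - y) * cos θ ^ 2 := by
    rw [cos_sq']
    ring
  calc ∫ w, arcsineWeight p q w * arcsineWeight p w y
      = ∫ θ in (0 : ℝ)..(π / 2), 2 * (1 / (√(q - p - (q - y) * cos θ ^ 2) * √(y - p))) := by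
        simp only [arcsineWeight_mul_arcsineWeight, integral_mul_arcsineWeight hy.2, hradicand]
    _ = 2 / √(y - p) * ∫ θ in (0 : ℝ)..(π / 2), 1 / √(q - p - (q - y) * cos θ ^ 2) := by
        rw [← intervalIntegral.integral_const_mul]
        exact intervalIntegral.integral_congr fun θ _ => by
          simp only [div_eq_mul_inv, mul_inv]
          ring
    _ = 2 / √(q - p) * (ellipticK √((q - y) / (q - p)) / √(y - p)) := by
        have := sqrt_pos.2 hd
        rw [ellipticK_sqrt_div (sub_pos.2 hy.2).le hd,
          integral_comp_cos_eq_integral_comp_sin fun t => 1 / √(q - p - (q - y) * t ^ 2)]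
        field_simp

lemma integral_arcsineWeight_mul_arcsineWeight_eq_zero (hy : y ∉ Ioo p q) :
    ∫ w, arcsineWeight p q w * arcsineWeight p w y = 0 := by
  have hzero (w : ℝ) : arcsineWeight p q w * arcsineWeight p w y = 0 := by
    by_cases hw : w ∈ Ioo p q
    · rw [arcsineWeight_eq_zero fun hy' => hy ⟨hy'.1, hy'.2.trans hw.2⟩, mul_zero]
    · rw [arcsineWeight_eq_zero hw, zero_mul]
  simp only [hzero, integral_zero]

theorem integral_arcsineWeight_mul_pi_div_sqrt (hx : x ∈ Ioo p q) :
    ∫ w, arcsineWeight p q w * (π / (√(x - p) * √(x - w))) =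
      2 * π / √(q - p) * (ellipticK √((x - p) / (q - p)) / √(x - p)) := by
  have hd : 0 < q - p := by linarith [hx.1, hx.2]
  have hintegrand (w : ℝ) : arcsineWeight p q w * (π / (√(x - p) * √(x - w))) =
      π / √(x - p) * (1 / √(q - w) * arcsineWeight p x w) := by
    rw [one_div_mul_eq_div, ← arcsineWeight_div_sqrt_sub_right, ← div_div]
    ring
  have hradicand (θ : ℝ) : q - (p + (x - p) * sin θ ^ 2) = q - p - (x - p) * sin θ ^ 2 := by
    ring
  have := sqrt_pos.2 hd
  simp only [hintegrand, MeasureTheory.integral_const_mul, integral_mul_arcsineWeight hx.1,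
    hradicand, intervalIntegral.integral_const_mul]
  rw [ellipticK_sqrt_div (sub_pos.2 hx.1).le hd]
  field_simp

end EllipticIntegral

section PrincipalValue

variable {p q x : ℝ}

lemma integrable_uncurry_arcsineWeight_mul_arcsineWeight (p q : ℝ) :
    Integrable (uncurry fun y w => arcsineWeight p q w * arcsineWeight p w y)
      (volume.prod volume) := by
  have hmeas : Measurable (uncurry fun y w => arcsineWeight p q w * arcsineWeight p w y) := by
    unfold arcsineWeight uncurry
    fun_prop
  have hinner (w : ℝ) : ∫ y, ‖arcsineWeight p q w * arcsineWeight p w y‖ =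
      arcsineWeight p q w * π := by
    by_cases hw : w ∈ Ioo p q
    · simp only [norm_mul, norm_of_nonneg (arcsineWeight_nonneg _ _ _),
        MeasureTheory.integral_const_mul, integral_arcsineWeight hw.1]
    · simp only [arcsineWeight_eq_zero hw, zero_mul, norm_zero, integral_zero]
  refine (integrable_prod_iff' hmeas.aestronglyMeasurable).2 ⟨ae_of_all _ fun w => ?_, ?_⟩
  · exact (integrable_arcsineWeight p w).const_mul (arcsineWeight p q w)
  · simpa only [uncurry_apply_pair, hinner] using (integrable_arcsineWeight p q).mul_const π

lemma arcsineWeight_div_sqrt_abs_sub_le (hx : x ∈ Ioo p q) (w : ℝ) :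
    arcsineWeight p q w / √|x - w| ≤
      arcsineWeight p x w / √(q - x) + arcsineWeight x q w / √(x - p) := by
  have hleft : 0 ≤ arcsineWeight p x w / √(q - x) :=
    div_nonneg (arcsineWeight_nonneg p x w) (sqrt_nonneg _)
  have hright : 0 ≤ arcsineWeight x q w / √(x - p) :=
    div_nonneg (arcsineWeight_nonneg x q w) (sqrt_nonneg _)
  have hp := sqrt_pos.2 (sub_pos.2 hx.1)
  have hq := sqrt_pos.2 (sub_pos.2 hx.2)
  rcases lt_trichotomy w x with hw | rfl | hw
  · rw [abs_of_pos (sub_pos.2 hw), arcsineWeight_div_sqrt_sub_right]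
    refine le_add_of_le_of_nonneg ?_ hright
    gcongr
    exact arcsineWeight_nonneg p x w
  · rw [sub_self, abs_zero, sqrt_zero, div_zero]
    exact add_nonneg hleft hright
  · rw [abs_sub_comm, abs_of_pos (sub_pos.2 hw), arcsineWeight_div_sqrt_sub_left]
    refine le_add_of_nonneg_of_le hleft ?_
    gcongr
    exact arcsineWeight_nonneg x q w

lemma integrable_arcsineWeight_mul_pi_div_sqrt_abs_sub (hx : x ∈ Ioo p q) :
    Integrable fun w => arcsineWeight p q w * (π / (√(x - p) * √|x - w|)) := by
  have hmeas : Measurable fun w => arcsineWeight p q w / √|x - w| := by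
    unfold arcsineWeight
    fun_prop
  have hint : Integrable fun w => arcsineWeight p q w / √|x - w| := by
    refine (((integrable_arcsineWeight p x).div_const √(q - x)).add
      ((integrable_arcsineWeight x q).div_const √(x - p))).mono' hmeas.aestronglyMeasurable ?_
    refine ae_of_all _ fun w => ?_
    rw [norm_of_nonneg (div_nonneg (arcsineWeight_nonneg p q w) (sqrt_nonneg _))]
    exact arcsineWeight_div_sqrt_abs_sub_le hx w
  refine (hint.const_mul (π / √(x - p))).congr (ae_of_all _ fun w => ?_)
  simp only [div_eq_mul_inv, mul_inv]
  ring

theorem tendsto_truncatedHilbert_integral_arcsineWeight (hx : x ∈ Ioo p q) :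
    Tendsto
      (fun ε => truncatedHilbert (fun y => ∫ w, arcsineWeight p q w * arcsineWeight p w y) ε x)
      (𝓝[>] 0) (𝓝 (∫ w, arcsineWeight p q w * (π / (√(x - p) * √(x - w))))) := by
  refine tendsto_truncatedHilbert_integral
    (integrable_uncurry_arcsineWeight_mul_arcsineWeight p q)
    (integrable_arcsineWeight_mul_pi_div_sqrt_abs_sub hx) ?_ ?_
  · filter_upwards [self_mem_nhdsWithin,
      nhdsWithin_le_nhds (eventually_lt_nhds (sub_pos.2 hx.1))] with ε hε hεp
    filter_upwards [Measure.ae_ne volume x] with w hwx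
    rw [truncatedHilbert_const_mul, abs_mul, abs_of_nonneg (arcsineWeight_nonneg p q w)]
    by_cases hw : w ∈ Ioo p q
    · gcongr
      · exact arcsineWeight_nonneg p q w
      · exact abs_truncatedHilbert_arcsineWeight_le hw.1 hwx.symm hε hεp
    · simp only [arcsineWeight_eq_zero hw, zero_mul, le_refl]
  · filter_upwards [Measure.ae_ne volume x] with w hwx
    simp only [truncatedHilbert_const_mul]
    by_cases hw : w ∈ Ioo p q
    · exact (tendsto_truncatedHilbert_arcsineWeight hw.1 hx.1 hwx.symm).const_mul _
    · simp only [arcsineWeight_eq_zero hw, zero_mul, tendsto_const_nhds]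

end PrincipalValue

theorem stmt_11_general {p q x : ℝ} (hx : x ∈ Ioo p q) :
    Tendsto (fun ε => ∫ y in {y | y ∈ Ioo p q ∧ ε < |y - x|},
        ellipticK √((q - y) / (q - p)) / (π * (x - y) * √(y - p)))
      (𝓝[>] 0) (𝓝 (ellipticK √((x - p) / (q - p)) / √(x - p))) := by
  have hd : √(q - p) ≠ 0 := (sqrt_pos.2 (by linarith [hx.1, hx.2])).ne'
  have hlim := (tendsto_truncatedHilbert_integral_arcsineWeight hx).const_mul (√(q - p) / (2 * π))
  rw [integral_arcsineWeight_mul_pi_div_sqrt hx, ← mul_assoc,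
    show √(q - p) / (2 * π) * (2 * π / √(q - p)) = 1 by field_simp, one_mul] at hlim
  refine hlim.congr fun ε => ?_
  rw [truncatedHilbert_eq_setIntegral fun _ => integral_arcsineWeight_mul_arcsineWeight_eq_zero,
    ← MeasureTheory.integral_const_mul]
  refine setIntegral_congr_fun (measurableSet_Ioo.inter (measurableSet_lt_abs_sub ε x))
    fun y hy => ?_
  simp only [integral_arcsineWeight_mul_arcsineWeight hy.1]
  field_simp

theorem stmt_11 (x : ℝ) (hx : x ∈ Set.Ioo (-1:ℝ) 1) :
    Tendsto (fun ε : ℝ =>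
        ∫ ξ in {ξ : ℝ | ξ ∈ Set.Ioo (-1:ℝ) 1 ∧ ε < |ξ - x|},
          ellipticK (Real.sqrt ((1-ξ)/2)) / (π * (x - ξ) * Real.sqrt (1+ξ)))
      (𝓝[>] 0)
      (𝓝 (ellipticK (Real.sqrt ((1+x)/2)) / Real.sqrt (1+x))) := by
  simpa only [sub_neg_eq_add, one_add_one_eq_two, add_comm] using stmt_11_general hx
end
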